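/- For all μ, ν ∈ M¹₊(Ω), the reduced measures satisfy |μ* − ν*| ≤ |μ − ν|; equivalently, since |μ − ν| = sup{μ,ν} − inf{μ,ν} for positive measures, (sup{μ*, ν*})(A) + (inf{μ, ν})(A) ≤ (sup{μ, ν})(A) + (inf{μ*, ν*})(A) for every Borel set A ⊂ Ω. -/

import Mathlib

open MeasureTheory Set Filter Topology
open scoped ENNReal NNReal

noncomputable section

/-- Euclidean space `ℝ^N`. -/
abbrev Euc (N : ℕ) : Type := EuclideanSpace ℝ (Fin N)

/-- `ρ(x) = dist(x, ∂Ω)`, realized as the distance from `x` to the complement of `Ω`. -/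
def rho {N : ℕ} (Ω : Set (Euc N)) (x : Euc N) : ℝ := Metric.infDist x Ωᶜ

/-- The Laplacian (in the space variable) of `f : ℝ^N → ℝ`. -/
def lap {N : ℕ} (f : Euc N → ℝ) (x : Euc N) : ℝ :=
  ∑ i : Fin N, fderiv ℝ (fun y => fderiv ℝ f y (EuclideanSpace.single i 1)) x
    (EuclideanSpace.single i 1)

/-- The parabolic cylinder `Q_T = Ω × (0,T)`. -/
def QT {N : ℕ} (Ω : Set (Euc N)) (T : ℝ) : Set (Euc N × ℝ) := Ω ×ˢ Ioo 0 T

/-- `∂_t ζ + Δ ζ` for a function `ζ(x,t)` (curried). -/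
def heatAdj {N : ℕ} (ζ : Euc N → ℝ → ℝ) (p : Euc N × ℝ) : ℝ :=
  deriv (ζ p.1) p.2 + lap (fun y => ζ y p.2) p.1

/-- `C^{2,1}` regularity: `ζ`, `∂_t ζ`, `∇_x ζ` and `D²_x ζ` exist and are continuous. -/
def C21 {N : ℕ} (ζ : Euc N → ℝ → ℝ) : Prop :=
  Continuous (fun p : Euc N × ℝ => ζ p.1 p.2) ∧
  (∀ (x : Euc N) (t : ℝ), DifferentiableAt ℝ (ζ x) t) ∧
  Continuous (fun p : Euc N × ℝ => deriv (ζ p.1) p.2) ∧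
  (∀ (t : ℝ) (x : Euc N), DifferentiableAt ℝ (fun y => ζ y t) x) ∧
  Continuous (fun p : Euc N × ℝ => fderiv ℝ (fun y => ζ y p.2) p.1) ∧
  (∀ (t : ℝ) (x : Euc N), DifferentiableAt ℝ (fun y => fderiv ℝ (fun z => ζ z t) y) x) ∧
  Continuous (fun p : Euc N × ℝ => fderiv ℝ (fun y => fderiv ℝ (fun z => ζ z p.2) y) p.1)

/-- Membership in `C^{2,1}_{ℓ,0}(Q̄_T)` : `C^{2,1}` regularity together with
vanishing on `∂Ω × [0,T] ∪ Ω̄ × {T}`. -/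
def TestZero {N : ℕ} (Ω : Set (Euc N)) (T : ℝ) (ζ : Euc N → ℝ → ℝ) : Prop :=
  C21 ζ ∧ (∀ x ∈ frontier Ω, ∀ t ∈ Icc (0:ℝ) T, ζ x t = 0) ∧
  (∀ x ∈ closure Ω, ζ x T = 0)

/-- `g : ℝ → ℝ` continuous, nondecreasing and vanishing on `(-∞,0]`. -/
def GoodG (g : ℝ → ℝ) : Prop := Continuous g ∧ Monotone g ∧ ∀ r : ℝ, r ≤ 0 → g r = 0

/-- `μ ∈ M¹₊(Ω)` : a positive Radon measure on `Ω` with `∫_Ω ρ dμ < ∞`. -/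
def MemM1 {N : ℕ} (Ω : Set (Euc N)) (μ : Measure (Euc N)) : Prop :=
  μ Ωᶜ = 0 ∧ (∀ K : Set (Euc N), K ⊆ Ω → IsCompact K → μ K < ⊤) ∧
  (∫⁻ x, ENNReal.ofReal (rho Ω x) ∂μ) < ⊤

/-- A positive Radon measure on the (open) set `U`. -/
def RadonOn {N : ℕ} (U : Set (Euc N)) (ν : Measure (Euc N)) : Prop :=
  ν Uᶜ = 0 ∧ ∀ K : Set (Euc N), K ⊆ U → IsCompact K → ν K < ⊤

/-- Weak solution of `(P_μ)` : `∂_t u - Δu + g(u) = 0` in `Q_T`, `u = 0` on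
`∂Ω × (0,T)`, `u(·,0) = μ`. -/
def WeakSol {N : ℕ} (Ω : Set (Euc N)) (T : ℝ) (g : ℝ → ℝ) (μ : Measure (Euc N))
    (u : Euc N × ℝ → ℝ) : Prop :=
  IntegrableOn u (QT Ω T) ∧
  IntegrableOn (fun p => g (u p) * rho Ω p.1) (QT Ω T) ∧
  ∀ ζ : Euc N → ℝ → ℝ, TestZero Ω T ζ →
    (∫ p in QT Ω T,
      (-(u p) * deriv (ζ p.1) p.2 - u p * lap (fun y => ζ y p.2) p.1 + ζ p.1 p.2 * g (u p)))
      = ∫ x, ζ x 0 ∂μ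

/-- Weak subsolution of `(P_μ)`. -/
def WeakSubSol {N : ℕ} (Ω : Set (Euc N)) (T : ℝ) (g : ℝ → ℝ) (μ : Measure (Euc N))
    (u : Euc N × ℝ → ℝ) : Prop :=
  IntegrableOn u (QT Ω T) ∧
  IntegrableOn (fun p => g (u p) * rho Ω p.1) (QT Ω T) ∧
  ∀ ζ : Euc N → ℝ → ℝ, TestZero Ω T ζ → (∀ x t, 0 ≤ ζ x t) →
    (∫ p in QT Ω T,
      (-(u p) * deriv (ζ p.1) p.2 - u p * lap (fun y => ζ y p.2) p.1 + ζ p.1 p.2 * g (u p)))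
      ≤ ∫ x, ζ x 0 ∂μ

/-- `μ` is a good measure relative to `g` : `(P_μ)` admits a weak solution. -/
def GoodMeasure {N : ℕ} (Ω : Set (Euc N)) (T : ℝ) (g : ℝ → ℝ) (μ : Measure (Euc N)) : Prop :=
  ∃ u, WeakSol Ω T g μ u

/-- Essential limit of `F(t)` as `t → 0⁺` equals `L`. -/
def EssLimInit (F : ℝ → ℝ) (L : ℝ) : Prop :=
  Tendsto F ((𝓝[>] (0:ℝ)) ⊓ (ae (volume : Measure ℝ))) (𝓝 L)

/-- Essential limit of `F(t)` as `t → 0⁺` is `+∞`. -/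
def EssLimInitTop (F : ℝ → ℝ) : Prop :=
  Tendsto F ((𝓝[>] (0:ℝ)) ⊓ (ae (volume : Measure ℝ))) atTop

/-- `ν` is the initial trace of `u` on `U ⊆ Ω` : for every `φ ∈ C_c(U)`,
`ess lim_{t→0} ∫_Ω u(·,t) φ dx = ∫ φ dν`. -/
def InitTraceOn {N : ℕ} (Ω U : Set (Euc N)) (u : Euc N × ℝ → ℝ) (ν : Measure (Euc N)) : Prop :=
  ∀ φ : Euc N → ℝ, Continuous φ → HasCompactSupport φ → tsupport φ ⊆ U →
    EssLimInit (fun t => ∫ x in Ω, u (x, t) * φ x) (∫ x, φ x ∂ν)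

/-- `μstar` is the reduced measure of `μ` : the largest good measure `≤ μ`. -/
def IsReducedMeasure {N : ℕ} (Ω : Set (Euc N)) (T : ℝ) (g : ℝ → ℝ)
    (μ μstar : Measure (Euc N)) : Prop :=
  MemM1 Ω μstar ∧ μstar ≤ μ ∧ GoodMeasure Ω T g μstar ∧
  ∀ ν : Measure (Euc N), MemM1 Ω ν → GoodMeasure Ω T g ν → ν ≤ μ → ν ≤ μstar

/-- The `N`-dimensional Hausdorff measure on `ℝ^N`. -/
def hausN {N : ℕ} : Measure (Euc N) := MeasureTheory.Measure.hausdorffMeasure (N : ℝ)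

section
open MeasureTheory Set Filter Topology
open scoped ENNReal NNReal
set_option maxSynthPendingDepth 3

/-- unit vectors -/
abbrev ee {N : ℕ} (i : Fin N) : Euc N := EuclideanSpace.single i (1:ℝ)

/-- explicit `C^{2,1}` derivatives -/
structure HasC21 {N : ℕ} (f τ : Euc N × ℝ → ℝ) (D : Euc N × ℝ → Euc N →L[ℝ] ℝ)
    (D2 : Euc N × ℝ → Euc N →L[ℝ] Euc N →L[ℝ] ℝ) : Prop where
  cf : Continuous f
  ct : Continuous τ
  cD : Continuous D
  cD2 : Continuous D2
  ht : ∀ p : Euc N × ℝ, HasDerivAt (fun s => f (p.1, s)) (τ p) p.2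
  hD : ∀ p : Euc N × ℝ, HasFDerivAt (fun y => f (y, p.2)) (D p) p.1
  hD2 : ∀ p : Euc N × ℝ, HasFDerivAt (fun y => D (y, p.2)) (D2 p) p.1

def C2 {N : ℕ} (f : Euc N × ℝ → ℝ) : Prop := C21 (fun x t => f (x, t))
def Hh {N : ℕ} (f : Euc N × ℝ → ℝ) (p : Euc N × ℝ) : ℝ := heatAdj (fun x t => f (x, t)) p
def Dx {N : ℕ} (f : Euc N × ℝ → ℝ) (p : Euc N × ℝ) : Euc N →L[ℝ] ℝ :=
  fderiv ℝ (fun y => f (y, p.2)) p.1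

variable {N : ℕ} {f f₁ f₂ τ τ₁ τ₂ : Euc N × ℝ → ℝ} {D D₁ D₂ : Euc N × ℝ → Euc N →L[ℝ] ℝ}
  {D2 E₁ E₂ : Euc N × ℝ → Euc N →L[ℝ] Euc N →L[ℝ] ℝ}

lemma HasC21.tau_eq (h : HasC21 f τ D D2) (p) : deriv (fun s => f (p.1, s)) p.2 = τ p :=
  (h.ht p).deriv
lemma HasC21.D_eq (h : HasC21 f τ D D2) : Dx f = D := by
  funext p; exact (h.hD p).fderiv
lemma HasC21.c2 (h : HasC21 f τ D D2) : C2 f := by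
  have hfd : ∀ t : ℝ, (fun y => fderiv ℝ (fun z => f (z, t)) y) = fun y => D (y, t) := by
    intro t; funext y; exact (h.hD (y, t)).fderiv
  refine ⟨h.cf, fun x t => (h.ht (x, t)).differentiableAt, ?_,
    fun t x => (h.hD (x, t)).differentiableAt, ?_, ?_, ?_⟩
  · exact h.ct.congr fun p => ((h.ht p).deriv).symm
  · exact h.cD.congr fun p => ((h.hD p).fderiv).symm
  · intro t x
    rw [hfd]; exact (h.hD2 (x, t)).differentiableAt
  · refine h.cD2.congr fun p => ?_
    rw [hfd]; exact ((h.hD2 p).fderiv).symm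

lemma HasC21.heat (h : HasC21 f τ D D2) (p) :
    Hh f p = τ p + ∑ i, D2 p (ee i) (ee i) := by
  unfold Hh heatAdj lap
  congr 1
  · exact (h.ht p).deriv
  · refine Finset.sum_congr rfl fun i _ => ?_
    have h1 : (fun y => fderiv ℝ (fun z => f (z, p.2)) y (ee i)) = fun y => D (y, p.2) (ee i) := by
      funext y; rw [(h.hD (y, p.2)).fderiv]
    rw [h1]
    have := (h.hD2 p).clm_apply (hasFDerivAt_const (ee i) p.1)
    rw [this.fderiv]; simp

lemma C2.has (h : C2 f) : ∃ τ D2, HasC21 f τ (Dx f) D2 := by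
  obtain ⟨h1, h2, h3, h4, h5, h6, h7⟩ := h
  refine ⟨fun p => deriv (fun s => f (p.1, s)) p.2,
    fun p => fderiv ℝ (fun y => fderiv ℝ (fun z => f (z, p.2)) y) p.1, h1, h3, h5, h7, ?_, ?_, ?_⟩
  · intro p; exact (h2 p.1 p.2).hasDerivAt
  · intro p; exact (h4 p.2 p.1).hasFDerivAt
  · intro p; exact (h6 p.2 p.1).hasFDerivAt

lemma C2.continuous (h : C2 f) : Continuous f := h.1
lemma C2.continuous_Dx (h : C2 f) : Continuous (Dx f) := by
  obtain ⟨_, _, h⟩ := h.has; exact h.cD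
lemma C2.continuous_Hh (h : C2 f) : Continuous (Hh f) := by
  obtain ⟨τ, D2, h⟩ := h.has
  have : Hh f = fun p => τ p + ∑ i, D2 p (ee i) (ee i) := funext h.heat
  rw [this]
  have := h.ct; have := h.cD2; fun_prop

lemma HasC21.add (h₁ : HasC21 f₁ τ₁ D₁ E₁) (h₂ : HasC21 f₂ τ₂ D₂ E₂) :
    HasC21 (f₁ + f₂) (τ₁ + τ₂) (D₁ + D₂) (E₁ + E₂) :=
  ⟨h₁.cf.add h₂.cf, h₁.ct.add h₂.ct, h₁.cD.add h₂.cD, h₁.cD2.add h₂.cD2,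
    fun p => (h₁.ht p).add (h₂.ht p), fun p => (h₁.hD p).add (h₂.hD p),
    fun p => (h₁.hD2 p).add (h₂.hD2 p)⟩

lemma HasC21.smul (c : ℝ) (h₁ : HasC21 f₁ τ₁ D₁ E₁) :
    HasC21 (c • f₁) (c • τ₁) (c • D₁) (c • E₁) :=
  ⟨h₁.cf.const_smul c, h₁.ct.const_smul c, h₁.cD.const_smul c, h₁.cD2.const_smul c,
    fun p => (h₁.ht p).const_smul c, fun p => (h₁.hD p).const_smul c,
    fun p => (h₁.hD2 p).const_smul c⟩

lemma HasC21.mul (h₁ : HasC21 f₁ τ₁ D₁ E₁) (h₂ : HasC21 f₂ τ₂ D₂ E₂) :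
    HasC21 (f₁ * f₂) (fun p => τ₁ p * f₂ p + f₁ p * τ₂ p)
      (fun p => f₁ p • D₂ p + f₂ p • D₁ p)
      (fun p => (f₁ p • E₂ p + (D₁ p).smulRight (D₂ p)) + (f₂ p • E₁ p + (D₂ p).smulRight (D₁ p))) := by
  have c1 := h₁.cf; have c2 := h₂.cf; have c3 := h₁.ct; have c4 := h₂.ct
  have c5 := h₁.cD; have c6 := h₂.cD; have c7 := h₁.cD2; have c8 := h₂.cD2
  refine ⟨c1.mul c2, by fun_prop, by fun_prop, ?_, fun p => (h₁.ht p).mul (h₂.ht p),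
    fun p => (h₁.hD p).mul (h₂.hD p), fun p => ?_⟩
  · have a1 : Continuous fun p => (D₁ p).smulRight (D₂ p) :=
      ((ContinuousLinearMap.smulRightL ℝ (Euc N) (Euc N →L[ℝ] ℝ)).continuous.comp c5).clm_apply c6
    have a2 : Continuous fun p => (D₂ p).smulRight (D₁ p) :=
      ((ContinuousLinearMap.smulRightL ℝ (Euc N) (Euc N →L[ℝ] ℝ)).continuous.comp c6).clm_apply c5
    fun_prop
  · exact ((h₁.hD p).smul (h₂.hD2 p)).add ((h₂.hD p).smul (h₁.hD2 p))

lemma HasC21.comp {J J' J'' : ℝ → ℝ} (hJ : ∀ s, HasDerivAt J (J' s) s)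
    (hJ' : ∀ s, HasDerivAt J' (J'' s) s) (hc : Continuous J'') (h : HasC21 f τ D D2) :
    HasC21 (fun p => J (f p)) (fun p => J' (f p) * τ p) (fun p => J' (f p) • D p)
      (fun p => J' (f p) • D2 p + (J'' (f p) • D p).smulRight (D p)) := by
  have c1 := h.cf; have c2 := h.ct; have c3 := h.cD; have c4 := h.cD2
  have cJ : Continuous J := continuous_iff_continuousAt.2 fun s => (hJ s).continuousAt
  have cJ' : Continuous J' := continuous_iff_continuousAt.2 fun s => (hJ' s).continuousAt
  have cD' : Continuous fun p => J'' (f p) • D p := by fun_prop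
  refine ⟨by fun_prop, by fun_prop, by fun_prop, ?_, fun p => ?_, fun p => ?_, fun p => ?_⟩
  · have a1 : Continuous fun p => (J'' (f p) • D p).smulRight (D p) :=
      ((ContinuousLinearMap.smulRightL ℝ (Euc N) (Euc N →L[ℝ] ℝ)).continuous.comp cD').clm_apply c3
    fun_prop
  · exact (hJ (f p)).comp p.2 (h.ht p)
  · exact (hJ (f p)).comp_hasFDerivAt p.1 (h.hD p)
  · exact ((hJ' (f p)).comp_hasFDerivAt p.1 (h.hD p)).smul (h.hD2 p)

lemma C2.add (h₁ : C2 f₁) (h₂ : C2 f₂) : C2 (f₁ + f₂) := by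
  obtain ⟨_, _, h₁⟩ := h₁.has; obtain ⟨_, _, h₂⟩ := h₂.has; exact (h₁.add h₂).c2
lemma C2.smul (c : ℝ) (h₁ : C2 f₁) : C2 (c • f₁) := by
  obtain ⟨_, _, h₁⟩ := h₁.has; exact (h₁.smul c).c2
lemma C2.mul (h₁ : C2 f₁) (h₂ : C2 f₂) : C2 (f₁ * f₂) := by
  obtain ⟨_, _, h₁⟩ := h₁.has; obtain ⟨_, _, h₂⟩ := h₂.has; exact (h₁.mul h₂).c2
lemma Hh_add (h₁ : C2 f₁) (h₂ : C2 f₂) : Hh (f₁ + f₂) = Hh f₁ + Hh f₂ := by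
  obtain ⟨_, _, h₁⟩ := h₁.has; obtain ⟨_, _, h₂⟩ := h₂.has
  funext p
  rw [Pi.add_apply, (h₁.add h₂).heat, h₁.heat, h₂.heat]
  simp [Finset.sum_add_distrib]; ring
lemma Hh_smul (c : ℝ) (h₁ : C2 f₁) : Hh (c • f₁) = c • Hh f₁ := by
  obtain ⟨_, _, h₁⟩ := h₁.has
  funext p
  rw [Pi.smul_apply, (h₁.smul c).heat, h₁.heat]
  simp [Finset.mul_sum, mul_add]
lemma Hh_mul (h₁ : C2 f₁) (h₂ : C2 f₂) (p) : Hh (f₁ * f₂) p =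
    f₁ p * Hh f₂ p + f₂ p * Hh f₁ p + 2 * ∑ i, Dx f₁ p (ee i) * Dx f₂ p (ee i) := by
  obtain ⟨_, _, h₁⟩ := h₁.has; obtain ⟨_, _, h₂⟩ := h₂.has
  rw [(h₁.mul h₂).heat, h₁.heat, h₂.heat]
  simp only [_root_.add_apply, _root_.smul_apply, smul_eq_mul,
    ContinuousLinearMap.smulRight_apply, Finset.sum_add_distrib, ← Finset.mul_sum]
  have : ∑ i, Dx f₂ p (ee i) * Dx f₁ p (ee i) = ∑ i, Dx f₁ p (ee i) * Dx f₂ p (ee i) :=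
    Finset.sum_congr rfl fun i _ => mul_comm _ _
  rw [this]; ring

lemma C2.comp {J J' J'' : ℝ → ℝ} (hJ : ∀ s, HasDerivAt J (J' s) s)
    (hJ' : ∀ s, HasDerivAt J' (J'' s) s) (hc : Continuous J'') (h : C2 f) :
    C2 (fun p => J (f p)) := by
  obtain ⟨_, _, h⟩ := h.has; exact (h.comp hJ hJ' hc).c2
lemma Hh_comp {J J' J'' : ℝ → ℝ} (hJ : ∀ s, HasDerivAt J (J' s) s)
    (hJ' : ∀ s, HasDerivAt J' (J'' s) s) (hc : Continuous J'') (h : C2 f) (p) :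
    Hh (fun p => J (f p)) p = J' (f p) * Hh f p + J'' (f p) * ∑ i, (Dx f p (ee i)) ^ 2 := by
  obtain ⟨_, _, h⟩ := h.has
  rw [(h.comp hJ hJ' hc).heat, h.heat]
  simp only [_root_.add_apply, _root_.smul_apply, smul_eq_mul,
    ContinuousLinearMap.smulRight_apply, Finset.sum_add_distrib, ← Finset.mul_sum]
  have : ∑ i, J'' (f p) * Dx f p (ee i) * Dx f p (ee i) =  J'' (f p) * ∑ i, (Dx f p (ee i)) ^ 2 := by
    rw [Finset.mul_sum]; exact Finset.sum_congr rfl fun i _ => by ring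
  rw [this]; ring

lemma hasC21_space {φ : Euc N → ℝ} (hφ : ContDiff ℝ 2 φ) :
    HasC21 (fun p : Euc N × ℝ => φ p.1) (fun _ => 0) (fun p => fderiv ℝ φ p.1)
      (fun p => fderiv ℝ (fderiv ℝ φ) p.1) := by
  have h1 : ContDiff ℝ 1 (fderiv ℝ φ) := hφ.fderiv_right (m := 1) (by norm_num)
  have h2 : ContDiff ℝ 0 (fderiv ℝ (fderiv ℝ φ)) := h1.fderiv_right (m := 0) (by norm_num)
  refine ⟨hφ.continuous.comp continuous_fst, continuous_const,
    h1.continuous.comp continuous_fst, h2.continuous.comp continuous_fst, fun p => ?_, fun p => ?_,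
    fun p => ?_⟩
  · exact hasDerivAt_const p.2 (φ p.1)
  · exact ((hφ.differentiable (by norm_num)) p.1).hasFDerivAt
  · exact ((h1.differentiable (by norm_num)) p.1).hasFDerivAt

lemma hasC21_time {χ χ' : ℝ → ℝ} (hχ : ∀ t, HasDerivAt χ (χ' t) t) (hc : Continuous χ') :
    HasC21 (fun p : Euc N × ℝ => χ p.2) (fun p => χ' p.2) (fun _ => 0) (fun _ => 0) := by
  have cJ : Continuous χ := continuous_iff_continuousAt.2 fun s => (hχ s).continuousAt
  exact ⟨by fun_prop, by fun_prop, continuous_const, continuous_const, fun p => hχ p.2,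
    fun p => hasFDerivAt_const (χ p.2) p.1, fun p => hasFDerivAt_const _ p.1⟩

lemma hasC21_contDiff (hf : ContDiff ℝ 2 f) :
    HasC21 f (fun p => fderiv ℝ f p (0, 1))
      (fun p => (fderiv ℝ f p).comp (ContinuousLinearMap.inl ℝ (Euc N) ℝ))
      (fun p => ((ContinuousLinearMap.compL ℝ (Euc N) (Euc N × ℝ) ℝ).flip
        (ContinuousLinearMap.inl ℝ (Euc N) ℝ)).comp
          ((fderiv ℝ (fderiv ℝ f) p).comp (ContinuousLinearMap.inl ℝ (Euc N) ℝ))) := by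
  have h1 : ContDiff ℝ 1 (fderiv ℝ f) := hf.fderiv_right (m := 1) (by norm_num)
  have h2 : ContDiff ℝ 0 (fderiv ℝ (fderiv ℝ f)) := h1.fderiv_right (m := 0) (by norm_num)
  have c1 := h1.continuous
  have c2 := h2.continuous
  have hl : ∀ p : Euc N × ℝ, HasFDerivAt (fun y : Euc N => (y, p.2))
      (ContinuousLinearMap.inl ℝ (Euc N) ℝ) p.1 := fun p => hasFDerivAt_prodMk_left p.1 p.2
  refine ⟨hf.continuous, by fun_prop, by fun_prop, ?_, fun p => ?_, fun p => ?_, fun p => ?_⟩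
  · exact continuous_const.clm_comp (c2.clm_comp continuous_const)
  · have h3 := ((hf.differentiable (by norm_num)) p).hasFDerivAt
    exact (h3.comp_hasDerivAt p.2 ((hasDerivAt_const p.2 p.1).prodMk (hasDerivAt_id p.2)))
  · exact (((hf.differentiable (by norm_num)) p).hasFDerivAt).comp p.1 (hl p)
  · have h3 := (((h1.differentiable (by norm_num)) p).hasFDerivAt).comp p.1 (hl p)
    exact (((ContinuousLinearMap.compL ℝ (Euc N) (Euc N × ℝ) ℝ).flip
        (ContinuousLinearMap.inl ℝ (Euc N) ℝ)).hasFDerivAt).comp p.1 h3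

lemma c2_contDiff (hf : ContDiff ℝ 2 f) : C2 f := (hasC21_contDiff hf).c2

lemma Hh_space {φ : Euc N → ℝ} (hφ : ContDiff ℝ 2 φ) (p : Euc N × ℝ) :
    Hh (fun p : Euc N × ℝ => φ p.1) p = ∑ i, fderiv ℝ (fderiv ℝ φ) p.1 (ee i) (ee i) := by
  rw [(hasC21_space hφ).heat]; simp
lemma Hh_time {χ χ' : ℝ → ℝ} (hχ : ∀ t, HasDerivAt χ (χ' t) t) (hc : Continuous χ')
    (p : Euc N × ℝ) : Hh (fun p : Euc N × ℝ => χ p.2) p = χ' p.2 := by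
  rw [(hasC21_time hχ hc).heat]; simp
lemma Dx_time {χ χ' : ℝ → ℝ} (hχ : ∀ t, HasDerivAt χ (χ' t) t) (hc : Continuous χ')
    (p : Euc N × ℝ) : Dx (fun p : Euc N × ℝ => χ p.2) p = 0 := by
  rw [(hasC21_time hχ hc).D_eq]

/-- locality -/
lemma Hh_congr {p : Euc N × ℝ} (h : f₁ =ᶠ[𝓝 p] f₂) : Hh f₁ p = Hh f₂ p := by
  have hp : p = (p.1, p.2) := rfl
  have hx : ∀ᶠ y in 𝓝 p.1, (fun z => f₁ (z, p.2)) =ᶠ[𝓝 y] fun z => f₂ (z, p.2) := by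
    have : Tendsto (fun y : Euc N => (y, p.2)) (𝓝 p.1) (𝓝 p) := by
      have : Continuous fun y : Euc N => (y, p.2) := by fun_prop
      exact this.tendsto p.1
    exact (this.eventually h).eventually_nhds
  have ht : (fun s => f₁ (p.1, s)) =ᶠ[𝓝 p.2] fun s => f₂ (p.1, s) := by
    have : Tendsto (fun y : ℝ => (p.1, y)) (𝓝 p.2) (𝓝 p) := by
      have : Continuous fun y : ℝ => (p.1, y) := by fun_prop
      exact this.tendsto p.2
    exact this.eventually h
  unfold Hh heatAdj lap
  congr 1
  · exact ht.deriv_eq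
  · refine Finset.sum_congr rfl fun i _ => ?_
    have : (fun y => fderiv ℝ (fun z => f₁ (z, p.2)) y (ee i)) =ᶠ[𝓝 p.1]
      fun y => fderiv ℝ (fun z => f₂ (z, p.2)) y (ee i) := by
      filter_upwards [hx] with y hy
      rw [hy.fderiv_eq]
    rw [this.fderiv_eq]

lemma Hh_zero_of_notMem_tsupport {p : Euc N × ℝ} (h : p ∉ tsupport f) : Hh f p = 0 := by
  rw [Hh_congr (f₂ := fun _ => (0:ℝ)) (notMem_tsupport_iff_eventuallyEq.1 h)]
  simp [Hh, heatAdj, lap]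
lemma support_Hh : Function.support (Hh f) ⊆ tsupport f := by
  intro p hp; by_contra h; exact hp (Hh_zero_of_notMem_tsupport h)
lemma hasCompactSupport_Hh (h : HasCompactSupport f) : HasCompactSupport (Hh f) :=
  h.mono' support_Hh

/-- translation -/
lemma C2.translate (h : C2 f) (q : Euc N × ℝ) : C2 (fun p => f (q + p)) := by
  obtain ⟨τ, D2, h⟩ := h.has
  have hc : Continuous fun p : Euc N × ℝ => q + p := by fun_prop
  refine HasC21.c2 (τ := fun p => τ (q + p)) (D := fun p => Dx f (q + p)) (D2 := fun p => D2 (q + p))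
    ⟨h.cf.comp hc, h.ct.comp hc, h.cD.comp hc, h.cD2.comp hc, fun p => ?_, fun p => ?_, fun p => ?_⟩
  · exact HasDerivAt.comp_const_add (f := fun s => f (q.1 + p.1, s)) q.2 p.2 (h.ht (q + p))
  · exact (hasFDerivAt_comp_add_left (f := fun s => f (s, q.2 + p.2)) q.1).2 (h.hD (q + p))
  · exact (hasFDerivAt_comp_add_left (f := fun s => Dx f (s, q.2 + p.2)) q.1).2 (h.hD2 (q + p))
end

section
open MeasureTheory Set Filter Topology
open scoped ENNReal NNReal
set_option maxSynthPendingDepth 3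

variable {N : ℕ} {f f₁ f₂ τ τ₁ τ₂ : Euc N × ℝ → ℝ} {D D₁ D₂ : Euc N × ℝ → Euc N →L[ℝ] ℝ}
  {D2 E₁ E₂ : Euc N × ℝ → Euc N →L[ℝ] Euc N →L[ℝ] ℝ}

lemma Hh_translate (h : C2 f) (q p : Euc N × ℝ) : Hh (fun p => f (q + p)) p = Hh f (q + p) := by
  obtain ⟨τ, D2, h⟩ := h.has
  have hc : Continuous fun p : Euc N × ℝ => q + p := by fun_prop
  have h2 : HasC21 (fun p => f (q + p)) (fun p => τ (q + p)) (fun p => Dx f (q + p)) (fun p => D2 (q + p)) :=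
    ⟨h.cf.comp hc, h.ct.comp hc, h.cD.comp hc, h.cD2.comp hc,
    fun p => HasDerivAt.comp_const_add (f := fun s => f (q.1 + p.1, s)) q.2 p.2 (h.ht (q + p)),
    fun p => (hasFDerivAt_comp_add_left (f := fun s => f (s, q.2 + p.2)) q.1).2 (h.hD (q + p)),
    fun p => (hasFDerivAt_comp_add_left (f := fun s => Dx f (s, q.2 + p.2)) q.1).2 (h.hD2 (q + p))⟩
  rw [h2.heat, h.heat]

instance : (volume : Measure (Euc N × ℝ)).IsAddHaarMeasure :=
  Measure.prod.instIsAddHaarMeasure volume volume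

lemma integral_lineDeriv (F F' η η' : Euc N × ℝ → ℝ) (v : Euc N × ℝ) (cF : Continuous F)
    (cF' : Continuous F') (cη : Continuous η) (cη' : Continuous η') (hη : HasCompactSupport η)
    (hη' : HasCompactSupport η')
    (h1 : ∀ p, HasLineDerivAt ℝ F (F' p) p v) (h2 : ∀ p, HasLineDerivAt ℝ η (η' p) p v) :
    ∫ p, F p * η' p = - ∫ p, F' p * η p := by
  have := integral_bilinear_hasLineDerivAt_right_eq_neg_left_of_integrable (μ := volume)
    (f := F) (f' := F') (g := η) (g' := η') (v := v) (B := ContinuousLinearMap.mul ℝ ℝ)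
    ?_ ?_ ?_ (fun p _ => h1 p) (fun p _ => h2 p)
  · simpa using this
  · exact (cF'.mul cη).integrable_of_hasCompactSupport hη.mul_left
  · exact (cF.mul cη').integrable_of_hasCompactSupport hη'.mul_left
  · exact (cF.mul cη).integrable_of_hasCompactSupport hη.mul_left

lemma HasC21.line_t (h : HasC21 f τ D D2) (p) : HasLineDerivAt ℝ f (τ p) p (0, 1) := by
  have : HasDerivAt (fun t : ℝ => f (p.1, p.2 + t)) (τ p) 0 := by
    have := h.ht p
    exact HasDerivAt.comp_const_add (f := fun s => f (p.1, s)) p.2 0 (by simpa using this)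
  unfold HasLineDerivAt
  have e : (fun t : ℝ => f (p + t • ((0:Euc N), (1:ℝ)))) = fun t => f (p.1, p.2 + t) := by
    funext t; exact congrArg f (Prod.ext (by simp) (by simp))
  exact e ▸ this
lemma HasC21.line_x (h : HasC21 f τ D D2) (v : Euc N) (p) : HasLineDerivAt ℝ f (D p v) p (v, 0) := by
  have := (h.hD p).hasLineDerivAt v
  unfold HasLineDerivAt at this ⊢
  have e : (fun t : ℝ => f (p + t • (v, (0:ℝ)))) = fun t => f (p.1 + t • v, p.2) := by
    funext t; exact congrArg f (Prod.ext (by simp) (by simp))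
  exact e ▸ this
lemma HasC21.line_xx (h : HasC21 f τ D D2) (v : Euc N) (p) :
    HasLineDerivAt ℝ (fun q => D q v) (D2 p v v) p (v, 0) := by
  have := ((h.hD2 p).clm_apply (hasFDerivAt_const v p.1)).hasLineDerivAt v
  unfold HasLineDerivAt at this ⊢
  have e : (fun t : ℝ => D (p + t • (v, (0:ℝ))) v) = fun t => D (p.1 + t • v, p.2) v := by
    funext t; exact congrArg (fun z => D z v) (Prod.ext (by simp) (by simp))
  rw [e]
  refine HasDerivAt.congr_deriv this ?_
  simp

lemma HasC21.support_tau (h : HasC21 f τ D D2) : Function.support τ ⊆ tsupport f := by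
  intro p hp; by_contra hn
  have h1 := notMem_tsupport_iff_eventuallyEq.1 hn
  have : Tendsto (fun y : ℝ => (p.1, y)) (𝓝 p.2) (𝓝 p) := by
    have : Continuous fun y : ℝ => (p.1, y) := by fun_prop
    exact this.tendsto p.2
  have h2 : (fun s => f (p.1, s)) =ᶠ[𝓝 p.2] fun _ => 0 := this.eventually h1
  apply hp
  rw [← h.tau_eq, h2.deriv_eq]; simp
lemma HasC21.support_D (h : HasC21 f τ D D2) : Function.support D ⊆ tsupport f := by
  intro p hp; by_contra hn
  have h1 := notMem_tsupport_iff_eventuallyEq.1 hn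
  have : Tendsto (fun y : Euc N => (y, p.2)) (𝓝 p.1) (𝓝 p) := by
    have : Continuous fun y : Euc N => (y, p.2) := by fun_prop
    exact this.tendsto p.1
  have h2 : (fun s => f (s, p.2)) =ᶠ[𝓝 p.1] fun _ => 0 := this.eventually h1
  apply hp
  rw [← (h.hD p).fderiv, h2.fderiv_eq]; simp
lemma HasC21.support_D2 (h : HasC21 f τ D D2) : Function.support D2 ⊆ tsupport f := by
  intro p hp; by_contra hn
  have h1 : ∀ᶠ q in 𝓝 p, D q = 0 := by
    have : (tsupport f)ᶜ ∈ 𝓝 p := (isClosed_tsupport f).isOpen_compl.mem_nhds hn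
    filter_upwards [this] with q hq
    by_contra h3; exact hq (h.support_D h3)
  have : Tendsto (fun y : Euc N => (y, p.2)) (𝓝 p.1) (𝓝 p) := by
    have : Continuous fun y : Euc N => (y, p.2) := by fun_prop
    exact this.tendsto p.1
  have h2 : (fun s => D (s, p.2)) =ᶠ[𝓝 p.1] fun _ => 0 := this.eventually h1
  apply hp
  rw [← (h.hD2 p).fderiv, h2.fderiv_eq]; simp

lemma ibp {η : Euc N × ℝ → ℝ} (h : HasC21 f τ D D2) (hη : C2 η) (hc : HasCompactSupport η) :
    ∫ p, f p * Hh η p = ∫ p, (-τ p + ∑ i, D2 p (ee i) (ee i)) * η p := by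
  obtain ⟨τ', E, k⟩ := hη.has
  have cE : ∀ i, Continuous fun p => E p (ee i) (ee i) := fun i => by have := k.cD2; fun_prop
  have cD2' : ∀ i, Continuous fun p => D2 p (ee i) (ee i) := fun i => by have := h.cD2; fun_prop
  have cD' : ∀ i, Continuous fun p => D p (ee i) := fun i => by have := h.cD; fun_prop
  have cDx' : ∀ i, Continuous fun p => Dx η p (ee i) := fun i => by have := k.cD; fun_prop
  have hE : ∀ i, HasCompactSupport fun p => E p (ee i) (ee i) := fun i =>
    (hc.mono' k.support_D2).mono (by intro p hp h0; apply hp; simp [h0])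
  have hDx : ∀ i, HasCompactSupport fun p => Dx η p (ee i) := fun i =>
    (hc.mono' k.support_D).mono (by intro p hp h0; apply hp; simp [h0])
  have ht := integral_lineDeriv f τ η τ' (0, 1) h.cf h.ct k.cf k.ct hc (hc.mono' k.support_tau)
    h.line_t k.line_t
  have hx : ∀ i, ∫ p, f p * E p (ee i) (ee i) = ∫ p, D2 p (ee i) (ee i) * η p := by
    intro i
    rw [integral_lineDeriv f (fun p => D p (ee i)) (fun p => Dx η p (ee i)) _ (ee i, 0) h.cf
      (cD' i) (cDx' i) (cE i) (hDx i) (hE i) (h.line_x _) (k.line_xx _),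
      integral_lineDeriv (fun p => D p (ee i)) (fun p => D2 p (ee i) (ee i)) η _ (ee i, 0) (cD' i)
      (cD2' i) k.cf (cDx' i) hc (hDx i) (h.line_xx _) (k.line_x _), neg_neg]
  have i1 : Integrable fun p => f p * τ' p :=
    (h.cf.mul k.ct).integrable_of_hasCompactSupport (hc.mono' k.support_tau).mul_left
  have i2 : ∀ i, Integrable fun p => f p * E p (ee i) (ee i) := fun i =>
    (h.cf.mul (cE i)).integrable_of_hasCompactSupport (hE i).mul_left
  have i3 : Integrable fun p => τ p * η p :=
    (h.ct.mul k.cf).integrable_of_hasCompactSupport hc.mul_left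
  have i4 : ∀ i, Integrable fun p => D2 p (ee i) (ee i) * η p := fun i =>
    ((cD2' i).mul k.cf).integrable_of_hasCompactSupport hc.mul_left
  calc ∫ p, f p * Hh η p = ∫ p, (f p * τ' p + ∑ i, f p * E p (ee i) (ee i)) := by
        congr 1; funext p; rw [k.heat, mul_add, Finset.mul_sum]
    _ = (-∫ p, τ p * η p) + ∑ i, ∫ p, D2 p (ee i) (ee i) * η p := by
        rw [integral_add i1 (integrable_finsetSum _ fun i _ => i2 i),
          integral_finsetSum _ fun i _ => i2 i, ht]
        simp_rw [hx]
    _ = ∫ p, (-(τ p * η p) + ∑ i, D2 p (ee i) (ee i) * η p) := by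
        have i5 : Integrable fun p => -(τ p * η p) := i3.neg
        have i6 : Integrable fun p => ∑ i, D2 p (ee i) (ee i) * η p :=
          integrable_finsetSum Finset.univ fun i _ => i4 i
        rw [integral_add i5 i6, integral_neg, integral_finsetSum _ fun i _ => i4 i]
    _ = _ := by
        congr 1; funext p; rw [add_mul, Finset.sum_mul]; ring

/-! ### Gaussian -/
def gam (p : Euc N × ℝ) : ℝ := (4 * Real.pi * p.2) ^ (-(N:ℝ) / 2) * Real.exp (-‖p.1‖ ^ 2 / (4 * p.2))
def Gam (p : Euc N × ℝ) : ℝ := if 0 < p.2 then gam p else 0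

lemma gam_hasDerivAt (x : Euc N) {t : ℝ} (ht : 0 < t) :
    HasDerivAt (fun s => gam (x, s)) ((-(N:ℝ) / (2 * t) + ‖x‖ ^ 2 / (4 * t ^ 2)) * gam (x, t)) t := by
  have hpos : 0 < 4 * Real.pi * t := by positivity
  have h1 : HasDerivAt (fun s : ℝ => 4 * Real.pi * s) (4 * Real.pi) t := by
    simpa using (hasDerivAt_id t).const_mul (4 * Real.pi)
  have h2 := h1.rpow_const (p := -(N:ℝ) / 2) (Or.inl hpos.ne')
  have h3 : HasDerivAt (fun s : ℝ => -‖x‖ ^ 2 / (4 * s)) (‖x‖ ^ 2 / (4 * t ^ 2)) t := by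
    have := (hasDerivAt_const t (-‖x‖ ^ 2)).div ((hasDerivAt_id t).const_mul 4) (by simp [ht.ne'])
    refine HasDerivAt.congr_deriv this ?_
    simp only [id, mul_one, zero_mul, zero_sub, neg_mul, neg_neg]
    field_simp
  have := h2.mul h3.exp
  refine this.congr_deriv ?_
  unfold gam
  simp only
  rw [Real.rpow_sub_one hpos.ne']
  field_simp

lemma gam_hasFDerivAt (x : Euc N) {t : ℝ} (ht : 0 < t) :
    HasFDerivAt (fun y => gam (y, t)) ((-gam (x, t) / (2 * t)) • innerSL ℝ x) x := by
  have h1 : HasFDerivAt (fun y : Euc N => -‖y‖ ^ 2 / (4 * t)) ((-1 / (2 * t)) • innerSL ℝ x) x := by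
    have := (hasStrictFDerivAt_norm_sq x).hasFDerivAt.const_mul (-1 / (4 * t))
    refine (this.congr_fderiv ?_).congr_of_eventuallyEq (Eventually.of_forall fun y => ?_)
    · ext v; simp; field_simp; ring
    · simp; ring
  have := h1.exp.const_mul ((4 * Real.pi * t) ^ (-(N:ℝ) / 2))
  refine this.congr_fderiv ?_
  ext v; simp [gam]; ring

lemma contDiffAt_gam {p : Euc N × ℝ} (hp : 0 < p.2) : ContDiffAt ℝ 2 (gam (N := N)) p := by
  unfold gam
  have h1 : ContDiffAt ℝ 2 (fun p : Euc N × ℝ => 4 * Real.pi * p.2) p := by fun_prop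
  refine (h1.rpow_const_of_ne (by positivity)).mul (ContDiffAt.exp ?_)
  refine ContDiffAt.div ?_ (by fun_prop) (by positivity)
  exact (contDiffAt_fst.norm_sq ℝ).neg

lemma gam_pos {p : Euc N × ℝ} (hp : 0 < p.2) : 0 < gam p := by
  unfold gam; have := Real.pi_pos; positivity
lemma Gam_nonneg (p : Euc N × ℝ) : 0 ≤ Gam p := by
  unfold Gam; split_ifs with h
  · exact (gam_pos h).le
  · rfl
lemma Gam_of_nonpos {p : Euc N × ℝ} (hp : p.2 ≤ 0) : Gam p = 0 := by simp [Gam, hp.not_gt]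
lemma Gam_of_pos {p : Euc N × ℝ} (hp : 0 < p.2) : Gam p = gam p := by simp [Gam, hp]
lemma measurable_Gam : Measurable (Gam (N := N)) := by
  unfold Gam gam
  refine Measurable.ite (measurableSet_lt measurable_const measurable_snd) ?_ measurable_const
  fun_prop

lemma cut_hasC21 {c c' : ℝ → ℝ} {ε : ℝ} (hε : 0 < ε) (hc : ContDiff ℝ 2 c) (hc' : ∀ t, HasDerivAt c (c' t) t)
    (h0 : ∀ t ≤ ε, c t = 0) : ∃ τ D D2, HasC21 (fun p : Euc N × ℝ => c p.2 * Gam p) τ D D2 ∧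
      ∀ p, -τ p + ∑ i, D2 p (ee i) (ee i) = -(c' p.2 * Gam p) := by
  have hz : ∀ p : Euc N × ℝ, p.2 < ε → (fun p : Euc N × ℝ => c p.2 * Gam p) =ᶠ[𝓝 p] fun _ => 0 := by
    intro p hp
    have : ∀ᶠ q : Euc N × ℝ in 𝓝 p, q.2 < ε := (isOpen_lt continuous_snd continuous_const).mem_nhds hp
    filter_upwards [this] with q hq
    simp [h0 q.2 hq.le]
  have hpn : ∀ p : Euc N × ℝ, 0 < p.2 → (fun p : Euc N × ℝ => c p.2 * Gam p) =ᶠ[𝓝 p]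
      fun p => c p.2 * gam p := by
    intro p hp
    have : ∀ᶠ q : Euc N × ℝ in 𝓝 p, 0 < q.2 := (isOpen_lt continuous_const continuous_snd).mem_nhds hp
    filter_upwards [this] with q hq
    simp [Gam, hq]
  have hcd : ContDiff ℝ 2 (fun p : Euc N × ℝ => c p.2 * Gam p) := by
    rw [contDiff_iff_contDiffAt]
    intro p
    rcases lt_or_ge 0 p.2 with hp | hp
    · refine ContDiffAt.congr_of_eventuallyEq ?_ (hpn p hp)
      exact (hc.contDiffAt.comp p contDiffAt_snd).mul (contDiffAt_gam hp)
    · exact contDiffAt_const.congr_of_eventuallyEq (hz p (hp.trans_lt hε))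
  have H := hasC21_contDiff hcd
  refine ⟨_, _, _, H, ?_⟩
  generalize hτ : (fun p => fderiv ℝ (fun p : Euc N × ℝ => c p.2 * Gam p) p (0, 1)) = τ at H
  intro p
  rw [show fderiv ℝ (fun p : Euc N × ℝ => c p.2 * Gam p) p (0, 1) = τ p from by rw [← hτ]]
  generalize (fun p => (fderiv ℝ (fun p : Euc N × ℝ => c p.2 * Gam p) p).comp
    (ContinuousLinearMap.inl ℝ (Euc N) ℝ)) = D at H
  generalize hD2 : (fun p => ((ContinuousLinearMap.compL ℝ (Euc N) (Euc N × ℝ) ℝ).flip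
        (ContinuousLinearMap.inl ℝ (Euc N) ℝ)).comp
          ((fderiv ℝ (fderiv ℝ (fun p : Euc N × ℝ => c p.2 * Gam p)) p).comp
            (ContinuousLinearMap.inl ℝ (Euc N) ℝ))) = D2 at H
  rw [show ((ContinuousLinearMap.compL ℝ (Euc N) (Euc N × ℝ) ℝ).flip
        (ContinuousLinearMap.inl ℝ (Euc N) ℝ)).comp
          ((fderiv ℝ (fderiv ℝ (fun p : Euc N × ℝ => c p.2 * Gam p)) p).comp
            (ContinuousLinearMap.inl ℝ (Euc N) ℝ)) = D2 p from by rw [← hD2]]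
  rcases lt_or_ge 0 p.2 with hp | hp
  · obtain ⟨x, t⟩ := p
    simp only at hp
    have e1 : τ (x, t) = c' t * gam (x, t) +
        c t * ((-(N:ℝ) / (2 * t) + ‖x‖ ^ 2 / (4 * t ^ 2)) * gam (x, t)) := by
      refine (H.ht (x, t)).unique (((hc' t).mul (gam_hasDerivAt x hp)).congr_of_eventuallyEq ?_)
      filter_upwards [lt_mem_nhds hp] with s hs
      simp [Gam, hs]
    have e2 : ∀ y, D (y, t) = (-(c t * gam (y, t)) / (2 * t)) • innerSL ℝ y := by
      intro y
      refine (H.hD (y, t)).unique ((((gam_hasFDerivAt y hp).const_mul (c t)).congr_fderiv ?_).congr_of_eventuallyEq ?_)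
      · ext v; simp; ring
      · exact Eventually.of_forall fun z => by simp [Gam, hp]
    have e3 : ∀ i, D2 (x, t) (ee i) (ee i) = (-(c t * gam (x, t)) / (2 * t)) +
        (x i) ^ 2 / (4 * t ^ 2) * (c t * gam (x, t)) := by
      intro i
      have h1 := H.hD2 (x, t)
      simp only [e2] at h1
      have h2 : HasFDerivAt (fun y => -(c t * gam (y, t)) / (2 * t))
          ((c t * gam (x, t) / (4 * t ^ 2)) • innerSL ℝ x) x := by
        refine ((gam_hasFDerivAt x hp).const_mul (-(c t) / (2 * t))).congr_fderiv ?_ |>.congr_of_eventuallyEq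
          (Eventually.of_forall fun z => by ring)
        ext v; simp; field_simp; ring
      have h3 := h2.smul ((innerSL ℝ (E := Euc N)).hasFDerivAt (x := x))
      rw [h1.unique h3]
      have a1 : (innerSL ℝ (ee i)) (ee i) = (1:ℝ) := by
        have := innerSL_apply_apply ℝ (ee i) (ee i)
        rw [EuclideanSpace.inner_single_right] at this
        exact this.trans (by simp)
      have a2 : (innerSL ℝ x) (ee i) = x i := by
        have := innerSL_apply_apply ℝ x (ee i)
        rw [EuclideanSpace.inner_single_right] at this
        exact this.trans (by simp)
      change (-(c t * gam (x, t)) / (2 * t)) * (innerSL ℝ (ee i)) (ee i) +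
        ((c t * gam (x, t) / (4 * t ^ 2)) * (innerSL ℝ x) (ee i)) * (innerSL ℝ x) (ee i) = _
      rw [a1, a2]
      ring
    rw [e1]; simp only [e3, Gam_of_pos (p := (x, t)) hp]
    rw [Finset.sum_add_distrib, ← Finset.sum_mul, Finset.sum_const, ← Finset.sum_div Finset.univ (fun i => (x i) ^ 2), ← EuclideanSpace.real_norm_sq_eq]
    simp; field_simp; ring
  · have hz' := hz p (hp.trans_lt hε)
    have hh := H.heat p
    have e1 : τ p = 0 := by
      by_contra h; exact notMem_tsupport_iff_eventuallyEq.2 hz' (H.support_tau h)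
    have e2 : D2 p = 0 := by
      by_contra h; exact notMem_tsupport_iff_eventuallyEq.2 hz' (H.support_D2 h)
    simp [e1, e2, Gam_of_nonpos hp]
end

section
open MeasureTheory Set Filter Topology
open scoped ENNReal NNReal
set_option maxSynthPendingDepth 3

def q2 (t : ℝ) : ℝ := (max t 0) ^ 2
lemma q2_nonneg (t : ℝ) : 0 ≤ q2 t := sq_nonneg _
lemma q2_mono {s t : ℝ} (h : s ≤ t) : q2 s ≤ q2 t := by
  unfold q2; gcongr
lemma q2_of_nonneg {t : ℝ} (h : 0 ≤ t) : q2 t = t ^ 2 := by simp [q2, h]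
lemma q2_of_nonpos {t : ℝ} (h : t ≤ 0) : q2 t = 0 := by simp [q2, h]
lemma q2_deriv (t : ℝ) : HasDerivAt q2 (2 * max t 0) t := by
  rcases lt_trichotomy t 0 with h | h | h
  · have : q2 =ᶠ[𝓝 t] fun _ => 0 := by
      filter_upwards [gt_mem_nhds h] with s hs using q2_of_nonpos (le_of_lt hs)
    rw [max_eq_right h.le, mul_zero]
    exact (hasDerivAt_const t (0:ℝ)).congr_of_eventuallyEq this
  · subst h
    have : q2 =O[𝓝 0] fun x : ℝ => ‖x - 0‖ ^ 2 := by
      refine Asymptotics.IsBigO.of_bound 1 (Eventually.of_forall fun x => ?_)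
      simp only [sub_zero, one_mul, norm_pow, norm_norm, q2]
      gcongr
      rw [Real.norm_eq_abs, Real.norm_eq_abs, abs_of_nonneg (le_max_right _ _)]
      exact max_le (le_abs_self x) (abs_nonneg x)
    have := this.hasFDerivAt (𝕜 := ℝ) (by norm_num)
    have h2 := this.hasDerivAt
    simpa using h2
  · have : q2 =ᶠ[𝓝 t] fun s => s ^ 2 := by
      filter_upwards [lt_mem_nhds h] with s hs using q2_of_nonneg (le_of_lt hs)
    rw [max_eq_left h.le]
    have h2 : HasDerivAt (fun s : ℝ => s ^ 2) (2 * t) t := by simpa using hasDerivAt_pow 2 t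
    exact h2.congr_of_eventuallyEq this
lemma q2_cont : Continuous q2 := by unfold q2; fun_prop

variable {N : ℕ}

lemma integral_gam {t : ℝ} (ht : 0 < t) : ∫ x : Euc N, gam (x, t) = 1 := by
  have hb : (0:ℝ) < 1 / (4 * t) := by positivity
  have h := GaussianFourier.integral_rexp_neg_mul_sq_norm (V := Euc N) hb
  unfold gam
  simp only
  rw [integral_const_mul]
  have e : ∀ x : Euc N, Real.exp (-‖x‖ ^ 2 / (4 * t)) = Real.exp (-(1 / (4 * t)) * ‖x‖ ^ 2) := by
    intro x; congr 1; ring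
  simp only [e]
  rw [h, finrank_euclideanSpace, Fintype.card_fin]
  rw [show Real.pi / (1 / (4 * t)) = 4 * Real.pi * t by field_simp]
  rw [← Real.rpow_add (by have := Real.pi_pos; positivity)]
  simp [neg_div]

lemma lintegral_Gam (t : ℝ) : ∫⁻ x : Euc N, ENNReal.ofReal (Gam (x, t)) = if 0 < t then 1 else 0 := by
  split_ifs with ht
  · have h1 := integral_gam (N := N) ht
    have hi : Integrable fun x : Euc N => gam (x, t) := by
      by_contra h; rw [integral_undef h] at h1; norm_num at h1
    have : ∀ x : Euc N, Gam (x, t) = gam (x, t) := fun x => Gam_of_pos ht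
    simp only [this]
    rw [← ofReal_integral_eq_lintegral_ofReal hi (Eventually.of_forall fun x => (gam_pos ht).le), h1]
    simp
  · have : ∀ x : Euc N, Gam (x, t) = 0 := fun x => Gam_of_nonpos (not_lt.1 ht)
    simp [this]

lemma Gam_le {ε : ℝ} (hε : 0 < ε) (p : Euc N × ℝ) (hp : ε ≤ p.2) :
    Gam p ≤ (4 * Real.pi * ε) ^ (-(N:ℝ) / 2) := by
  have h0 : 0 < p.2 := hε.trans_le hp
  have := Real.pi_pos
  rw [Gam_of_pos h0]
  unfold gam
  calc _ ≤ (4 * Real.pi * ε) ^ (-(N:ℝ) / 2) * 1 := by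
        gcongr ?_ * ?_
        · exact Real.rpow_le_rpow_of_nonpos (by positivity) (by gcongr)
            (div_nonpos_of_nonpos_of_nonneg (by simp) (by norm_num))
        · rw [Real.exp_le_one_iff]
          exact div_nonpos_of_nonpos_of_nonneg (by simp) (by positivity)
    _ = _ := mul_one _

lemma Gam_far (δ T : ℝ) (hδ : 0 < δ) (hT : 0 < T) : ∃ C, 0 ≤ C ∧ ∀ p : Euc N × ℝ, δ ≤ ‖p.1‖ → p.2 ≤ T →
    Gam p ≤ C * q2 p.2 ∧ (0 < p.2 → ‖p.1‖ / (2 * p.2) * gam p ≤ C * q2 p.2) := by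
  have hpi := Real.pi_pos
  set m := N + 3 with hm
  set A := (4 * Real.pi * T) ^ ((N:ℝ) / 2) with hA
  set B := (m.factorial : ℝ) * 4 ^ m with hB
  have hA0 : 0 ≤ A := by positivity
  have hB0 : 0 ≤ B := by positivity
  -- main estimate
  have key : ∀ p : Euc N × ℝ, δ ≤ ‖p.1‖ → 0 < p.2 → p.2 ≤ T →
      gam p ≤ A * B * p.2 ^ 3 / ‖p.1‖ ^ (2 * m) := by
    intro p hx ht hT'
    have hx0 : 0 < ‖p.1‖ := hδ.trans_le hx
    unfold gam
    set s := 4 * Real.pi * p.2 with hs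
    have hs0 : 0 < s := by positivity
    have hts : p.2 ≤ s := by
      have : 1 ≤ 4 * Real.pi := by nlinarith [Real.pi_gt_three]
      nlinarith
    have e1 : Real.exp (-‖p.1‖ ^ 2 / (4 * p.2)) ≤ B * p.2 ^ m / ‖p.1‖ ^ (2 * m) := by
      have h := Real.pow_div_factorial_le_exp (‖p.1‖ ^ 2 / (4 * p.2)) (by positivity) m
      rw [neg_div, Real.exp_neg]
      calc _ ≤ ((‖p.1‖ ^ 2 / (4 * p.2)) ^ m / m.factorial)⁻¹ := by
            apply inv_anti₀ _ h; positivity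
        _ = _ := by rw [hB, div_pow, mul_pow, ← pow_mul]; field_simp
    have e2 : s ^ (-(N:ℝ) / 2) * p.2 ^ N ≤ A := by
      calc s ^ (-(N:ℝ) / 2) * p.2 ^ N ≤ s ^ (-(N:ℝ) / 2) * s ^ N := by gcongr
        _ = s ^ ((N:ℝ) / 2) := by
          rw [← Real.rpow_natCast s N, ← Real.rpow_add hs0]; congr 1; ring
        _ ≤ A := by rw [hA]; gcongr; rw [hs]; gcongr
    calc s ^ (-(N:ℝ) / 2) * Real.exp (-‖p.1‖ ^ 2 / (4 * p.2))
        ≤ s ^ (-(N:ℝ) / 2) * (B * p.2 ^ m / ‖p.1‖ ^ (2 * m)) := by gcongr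
      _ = (s ^ (-(N:ℝ) / 2) * p.2 ^ N) * (B * p.2 ^ 3 / ‖p.1‖ ^ (2 * m)) := by rw [hm]; ring
      _ ≤ A * (B * p.2 ^ 3 / ‖p.1‖ ^ (2 * m)) := by gcongr
      _ = _ := by ring
  refine ⟨A * B * T / δ ^ (2 * m) + A * B / δ ^ (2 * m - 1), by positivity, fun p hx hT' => ?_⟩
  rcases lt_or_ge 0 p.2 with ht | ht
  swap
  · rw [Gam_of_nonpos ht, q2_of_nonpos ht]; simp
    intro h; exact absurd h ht.not_gt
  have hx0 : 0 < ‖p.1‖ := hδ.trans_le hx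
  have hk := key p hx ht hT'
  rw [Gam_of_pos ht, q2_of_nonneg ht.le]
  refine ⟨?_, fun _ => ?_⟩
  · calc gam p ≤ A * B * p.2 ^ 3 / ‖p.1‖ ^ (2 * m) := hk
      _ ≤ A * B * (T * p.2 ^ 2) / δ ^ (2 * m) := by
        gcongr
        calc p.2 ^ 3 = p.2 * p.2 ^ 2 := by ring
          _ ≤ _ := by gcongr
      _ = A * B * T / δ ^ (2 * m) * p.2 ^ 2 := by ring
      _ ≤ _ := by
        gcongr
        have : 0 ≤ A * B / δ ^ (2 * m - 1) := by positivity
        linarith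
  · calc ‖p.1‖ / (2 * p.2) * gam p ≤ ‖p.1‖ / (2 * p.2) * (A * B * p.2 ^ 3 / ‖p.1‖ ^ (2 * m)) := by gcongr
      _ = A * B * p.2 ^ 2 / ‖p.1‖ ^ (2 * m - 1) / 2 := by
        have : ‖p.1‖ ^ (2 * m) = ‖p.1‖ ^ (2 * m - 1) * ‖p.1‖ := by
          rw [← pow_succ]; congr 1
        rw [this]; field_simp
      _ ≤ A * B * p.2 ^ 2 / ‖p.1‖ ^ (2 * m - 1) := half_le_self (by positivity)
      _ ≤ A * B * p.2 ^ 2 / δ ^ (2 * m - 1) := by gcongr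
      _ = A * B / δ ^ (2 * m - 1) * p.2 ^ 2 := by ring
      _ ≤ _ := by
        gcongr
        have : 0 ≤ A * B * T / δ ^ (2 * m) := by positivity
        linarith

/-- mass of the kernel on time slabs -/
lemma lintegral_Gam_slab (b : ℝ) (r : Euc N × ℝ) :
    ∫⁻ p in {p : Euc N × ℝ | p.2 < b}, ENNReal.ofReal (Gam (p - r)) = ENNReal.ofReal (b - r.2) := by
  have hs : MeasurableSet {p : Euc N × ℝ | p.2 < b} := measurableSet_lt measurable_snd measurable_const
  have hm : Measurable fun p : Euc N × ℝ => ENNReal.ofReal (Gam (p - r)) :=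
    (measurable_Gam.comp (measurable_id.sub_const r)).ennreal_ofReal
  rw [← lintegral_indicator hs, Measure.volume_eq_prod, lintegral_prod_symm _ ((hm.indicator hs).aemeasurable)]
  have : ∀ t : ℝ, ∫⁻ x : Euc N, ({p : Euc N × ℝ | p.2 < b}.indicator (fun p => ENNReal.ofReal (Gam (p - r)))) (x, t)
      = (Ioo r.2 b).indicator 1 t := by
    intro t
    by_cases htb : t < b
    · have : ∀ x : Euc N, ({p : Euc N × ℝ | p.2 < b}.indicator (fun p => ENNReal.ofReal (Gam (p - r)))) (x, t)
        = ENNReal.ofReal (Gam (x - r.1, t - r.2)) := fun x => by simp [indicator, htb]; rfl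
      simp only [this]
      rw [lintegral_sub_right_eq_self (fun x => ENNReal.ofReal (Gam (x, t - r.2))) r.1, lintegral_Gam]
      simp [indicator, htb]
    · simp [indicator, htb]
  simp only [this]
  rw [lintegral_indicator_one measurableSet_Ioo, Real.volume_Ioo]
end

section
open MeasureTheory Set Filter Topology
open scoped ENNReal NNReal
set_option maxSynthPendingDepth 3
variable {N : ℕ}

lemma integrableOn_Gam (b : ℝ) (r : Euc N × ℝ) :
    IntegrableOn (fun p => Gam (p - r)) {p : Euc N × ℝ | p.2 < b} := by
  refine ⟨(measurable_Gam.comp (measurable_id.sub_const r)).aestronglyMeasurable, ?_⟩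
  rw [hasFiniteIntegral_iff_ofReal (Eventually.of_forall fun p => Gam_nonneg _), lintegral_Gam_slab]
  exact ENNReal.ofReal_lt_top

lemma integrable_Gam_mul {h : Euc N × ℝ → ℝ} (hm : AEStronglyMeasurable h) {C b : ℝ}
    (hC : ∀ p, |h p| ≤ C) (hb : ∀ p : Euc N × ℝ, b ≤ p.2 → h p = 0) (r : Euc N × ℝ) :
    Integrable fun p => Gam (p - r) * h p := by
  have hs : MeasurableSet {p : Euc N × ℝ | p.2 < b} := measurableSet_lt measurable_snd measurable_const
  have h1 := ((integrableOn_Gam b r).integrable_indicator hs)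
  have h2 := h1.mul_bdd (c := C) hm (Eventually.of_forall hC)
  refine h2.congr (Eventually.of_forall fun p => ?_)
  by_cases hp : p.2 < b
  · simp [indicator, hp]
  · simp [indicator, hp, hb p (not_lt.1 hp)]

lemma cs_bound {h : Euc N × ℝ → ℝ} (hc : Continuous h) (hs : HasCompactSupport h) :
    ∃ C b, 0 ≤ C ∧ (∀ p, |h p| ≤ C) ∧ (∀ p : Euc N × ℝ, b ≤ p.2 → h p = 0) := by
  obtain ⟨C, hC⟩ := hc.bounded_above_of_compact_support hs
  obtain ⟨R, hR⟩ := hs.isCompact.isBounded.subset_closedBall (0 : Euc N × ℝ)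
  refine ⟨C, R + 1, (norm_nonneg _).trans (hC 0), hC, fun p hp => ?_⟩
  by_contra h0
  have := hR (subset_tsupport h h0)
  rw [mem_closedBall_zero_iff] at this
  have h2 : |p.2| ≤ ‖p‖ := norm_snd_le p
  have := le_abs_self p.2
  linarith

lemma integrable_Gam_mul_cs {h : Euc N × ℝ → ℝ} (hc : Continuous h) (hs : HasCompactSupport h)
    (r : Euc N × ℝ) : Integrable fun p => Gam (p - r) * h p := by
  obtain ⟨C, b, _, h1, h2⟩ := cs_bound hc hs
  exact integrable_Gam_mul hc.aestronglyMeasurable h1 h2 r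

lemma Gam_scale (z : Euc N) {t : ℝ} (ht : 0 < t) :
    (Real.sqrt t) ^ N * Gam (Real.sqrt t • z, t) = Gam (z, 1) := by
  have hpi := Real.pi_pos
  rw [Gam_of_pos (p := (Real.sqrt t • z, t)) ht, Gam_of_pos (p := (z, 1)) one_pos]
  unfold gam
  simp only
  have e1 : -‖Real.sqrt t • z‖ ^ 2 / (4 * t) = -‖z‖ ^ 2 / (4 * 1) := by
    rw [norm_smul, mul_pow, Real.norm_of_nonneg (Real.sqrt_nonneg t), Real.sq_sqrt ht.le]
    field_simp
  rw [e1, ← mul_assoc]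
  congr 1
  rw [mul_one, Real.mul_rpow (by positivity) ht.le, Real.sqrt_eq_rpow, ← Real.rpow_natCast (t ^ (1/2:ℝ)),
    ← Real.rpow_mul ht.le, mul_comm (_ ^ _) (t ^ (-(N:ℝ)/2)), ← mul_assoc, ← Real.rpow_add ht]
  rw [show (1:ℝ) / 2 * N + -(N:ℝ) / 2 = 0 by ring]
  simp

lemma integrable_Gam_one : Integrable fun z : Euc N => Gam (z, 1) := by
  refine ⟨(measurable_Gam.comp (by fun_prop)).aestronglyMeasurable, ?_⟩
  rw [hasFiniteIntegral_iff_ofReal (Eventually.of_forall fun p => Gam_nonneg _), lintegral_Gam]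
  simp

lemma integral_Gam_one : ∫ z : Euc N, Gam (z, 1) = 1 := by
  have : ∀ z : Euc N, Gam (z, 1) = gam (z, 1) := fun z => Gam_of_pos (p := (z, 1)) one_pos
  simp only [this]
  exact integral_gam one_pos

lemma Phi_scale (η : Euc N × ℝ → ℝ) {t : ℝ} (ht : 0 < t) :
    ∫ x : Euc N, Gam (x, t) * η (x, t) = ∫ z : Euc N, Gam (z, 1) * η (Real.sqrt t • z, t) := by
  have h := Measure.integral_comp_smul (volume : Measure (Euc N)) (fun x => Gam (x, t) * η (x, t)) (Real.sqrt t)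
  have hs : 0 < Real.sqrt t := Real.sqrt_pos.2 ht
  rw [finrank_euclideanSpace, Fintype.card_fin, abs_of_pos (by positivity), smul_eq_mul] at h
  have : ∀ z : Euc N, Gam (z, 1) * η (Real.sqrt t • z, t) =
      (Real.sqrt t) ^ N * (Gam (Real.sqrt t • z, t) * η (Real.sqrt t • z, t)) := by
    intro z; rw [← Gam_scale z ht]; ring
  simp only [this]
  rw [integral_const_mul, h, ← mul_assoc, mul_inv_cancel₀ (by positivity), one_mul]

lemma Phi_tendsto {η : Euc N × ℝ → ℝ} (hc : Continuous η) {C : ℝ} (hC : ∀ p, |η p| ≤ C)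
    {u : ℕ → ℝ} (hu : ∀ n, 0 < u n) (hl : Tendsto u atTop (𝓝 0)) :
    Tendsto (fun n => ∫ x : Euc N, Gam (x, u n) * η (x, u n)) atTop (𝓝 (η 0)) := by
  have : ∀ n, ∫ x : Euc N, Gam (x, u n) * η (x, u n) =
      ∫ z : Euc N, Gam (z, 1) * η (Real.sqrt (u n) • z, u n) := fun n => Phi_scale η (hu n)
  simp only [this]
  have e : η 0 = ∫ z : Euc N, Gam (z, 1) * η 0 := by rw [integral_mul_const, integral_Gam_one, one_mul]
  rw [e]
  refine tendsto_integral_of_dominated_convergence (fun z : Euc N => Gam (z, 1) * C) ?_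
    (integrable_Gam_one.mul_const C) ?_ ?_
  · intro n
    exact (integrable_Gam_one.aestronglyMeasurable).mul
      (Continuous.aestronglyMeasurable (by fun_prop))
  · intro n
    refine Eventually.of_forall fun z => ?_
    rw [norm_mul, Real.norm_of_nonneg (Gam_nonneg _)]
    exact mul_le_mul_of_nonneg_left (hC _) (Gam_nonneg _)
  · refine Eventually.of_forall fun z => ?_
    refine Tendsto.const_mul _ ?_
    have h1 : Tendsto (fun n => (Real.sqrt (u n) • z, u n)) atTop (𝓝 (Real.sqrt 0 • z, 0)) := by
      refine Tendsto.prodMk_nhds ?_ hl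
      exact ((Real.continuous_sqrt.tendsto 0).comp hl).smul_const z
    have h2 := (hc.tendsto _).comp h1
    rw [Real.sqrt_zero, zero_smul] at h2
    exact h2

lemma Phi_bound {η : Euc N × ℝ → ℝ} {C : ℝ} (hC0 : 0 ≤ C) (hC : ∀ p, |η p| ≤ C) (t : ℝ) :
    |∫ x : Euc N, Gam (x, t) * η (x, t)| ≤ C := by
  rcases lt_or_ge 0 t with ht | ht
  · rw [Phi_scale η ht, ← Real.norm_eq_abs]
    calc _ ≤ ∫ z : Euc N, Gam (z, 1) * C := by
          refine norm_integral_le_of_norm_le (integrable_Gam_one.mul_const C) (Eventually.of_forall fun z => ?_)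
          rw [norm_mul, Real.norm_of_nonneg (Gam_nonneg _)]
          exact mul_le_mul_of_nonneg_left (hC _) (Gam_nonneg _)
      _ = C := by rw [integral_mul_const, integral_Gam_one, one_mul]
  · have : ∀ x : Euc N, Gam (x, t) = 0 := fun x => Gam_of_nonpos ht
    simpa [this] using hC0

lemma Gam_repr0 {η : Euc N × ℝ → ℝ} (hη : C2 η) (hs : HasCompactSupport η) :
    ∫ r, Gam r * Hh η r = - η 0 := by
  set c : ℝ → ℝ := fun s => Real.smoothTransition (s - 1) with hcdef
  have hcd : ContDiff ℝ 2 c := Real.smoothTransition.contDiff.comp (contDiff_id.sub contDiff_const)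
  have hcd1 : Continuous (deriv c) := hcd.continuous_deriv (by norm_num)
  have hcD : ∀ t, HasDerivAt c (deriv c t) t := fun t => (hcd.differentiable (by norm_num) t).hasDerivAt
  have hc0 : ∀ s ≤ 1, c s = 0 := fun s hs => Real.smoothTransition.zero_of_nonpos (by linarith)
  have hc1 : ∀ s, 2 ≤ s → c s = 1 := fun s hs => Real.smoothTransition.one_of_one_le (by linarith)
  have hcn : ∀ s, 0 ≤ c s := fun s => Real.smoothTransition.nonneg _
  have hcl : ∀ s, c s ≤ 1 := fun s => Real.smoothTransition.le_one _
  have hd0 : ∀ s < 1, deriv c s = 0 := fun s hs => by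
    have : c =ᶠ[𝓝 s] fun _ => 0 := by
      filter_upwards [gt_mem_nhds hs] with r hr using hc0 r (le_of_lt hr)
    rw [this.deriv_eq]; simp
  have hd1 : ∀ s, 2 < s → deriv c s = 0 := fun s hs => by
    have : c =ᶠ[𝓝 s] fun _ => 1 := by
      filter_upwards [lt_mem_nhds hs] with r hr using hc1 r (le_of_lt hr)
    rw [this.deriv_eq]; simp
  have hcs : HasCompactSupport (deriv c) := HasCompactSupport.intro (isCompact_Icc (a := 1) (b := 2)) (by
    intro s hs
    rw [mem_Icc, not_and_or, not_le, not_le] at hs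
    exact hs.elim (hd0 s) (hd1 s))
  have hci : Integrable (deriv c) := hcd1.integrable_of_hasCompactSupport hcs
  have hI : ∫ s, deriv c s = 1 := by
    have := integral_of_hasDerivAt_of_tendsto (f := c) (m := 0) (n := 1) hcD hci ?_ ?_
    · simpa using this
    · exact tendsto_const_nhds.congr' (by
        filter_upwards [eventually_le_atBot 1] with s hs using (hc0 s hs).symm)
    · exact tendsto_const_nhds.congr' (by
        filter_upwards [eventually_ge_atTop 2] with s hs using (hc1 s hs).symm)
  obtain ⟨C, b, hC0, hC, hb⟩ := cs_bound hη.continuous hs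
  set Φ : ℝ → ℝ := fun t => ∫ x : Euc N, Gam (x, t) * η (x, t) with hΦ
  have hΦm : StronglyMeasurable Φ := by
    refine StronglyMeasurable.integral_prod_left' (f := fun p : Euc N × ℝ => Gam p * η p) ?_
    exact (measurable_Gam.mul hη.continuous.measurable).stronglyMeasurable
  -- for each epsilon
  have main : ∀ ε : ℝ, 0 < ε → ∫ p : Euc N × ℝ, c (p.2 / ε) * (Gam p * Hh η p) = - ∫ s, deriv c s * Φ (ε * s) := by
    intro ε hε
    have hcd' : ContDiff ℝ 2 (fun t => c (t / ε)) := hcd.comp (contDiff_id.div_const ε)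
    have hder : ∀ t, HasDerivAt (fun t => c (t / ε)) (deriv c (t / ε) / ε) t := by
      intro t
      have := (hcD (t / ε)).comp t ((hasDerivAt_id t).div_const ε)
      refine HasDerivAt.congr_deriv this ?_; ring
    obtain ⟨τ, D, D2, h, he⟩ := cut_hasC21 (N := N) hε hcd' hder (fun t ht => hc0 _ (by rw [div_le_one hε]; exact ht))
    have h1 := ibp h hη hs
    simp only [he] at h1
    have e1 : ∫ p : Euc N × ℝ, c (p.2 / ε) * (Gam p * Hh η p) = ∫ p : Euc N × ℝ, c (p.2 / ε) * Gam p * Hh η p := by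
      congr 1; funext p; ring
    rw [e1, h1]
    have e2 : ∀ p : Euc N × ℝ, -(deriv c (p.2 / ε) / ε * Gam p) * η p = -(deriv c (p.2 / ε) / ε * (Gam p * η p)) := by
      intro p; ring
    simp only [e2]
    rw [integral_neg]
    congr 1
    have hint : Integrable fun p : Euc N × ℝ => deriv c (p.2 / ε) / ε * (Gam p * η p) := by
      have := integrable_Gam_mul_cs (h := fun p : Euc N × ℝ => deriv c (p.2 / ε) / ε * η p)
        (by have := hη.continuous; fun_prop) hs.mul_left 0
      refine this.congr (Eventually.of_forall fun p => ?_)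
      simp only [sub_zero]; ring
    rw [Measure.volume_eq_prod, integral_prod_symm _ hint]
    have e3 : ∀ t : ℝ, ∫ x : Euc N, deriv c ((x, t).2 / ε) / ε * (Gam (x, t) * η (x, t)) =
        deriv c (t / ε) / ε * Φ t := fun t => by simp only; rw [integral_const_mul]
    simp only [e3]
    have h4 := Measure.integral_comp_mul_left (fun y => deriv c (y / ε) / ε * Φ y) ε
    rw [abs_of_pos (by positivity), smul_eq_mul] at h4
    have h5 : ∫ t, deriv c (t / ε) / ε * Φ t = ε * ∫ s, deriv c (ε * s / ε) / ε * Φ (ε * s) := by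
      rw [h4, ← mul_assoc, mul_inv_cancel₀ hε.ne', one_mul]
    rw [h5, ← integral_const_mul]
    congr 1; funext s
    rw [mul_div_cancel_left₀ _ hε.ne']; field_simp
  -- limits
  set u : ℕ → ℝ := fun n => 1 / ((n:ℝ) + 1) with hu
  have hup : ∀ n, 0 < u n := fun n => by rw [hu]; positivity
  have hul : Tendsto u atTop (𝓝 0) := tendsto_one_div_add_atTop_nhds_zero_nat
  have L1 : Tendsto (fun n => ∫ p : Euc N × ℝ, c (p.2 / u n) * (Gam p * Hh η p)) atTop
      (𝓝 (∫ p, Gam p * Hh η p)) := by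
    have hGH : Integrable fun p : Euc N × ℝ => Gam p * Hh η p := by
      simpa using integrable_Gam_mul_cs hη.continuous_Hh (hasCompactSupport_Hh hs) 0
    refine tendsto_integral_of_dominated_convergence (fun p => ‖Gam p * Hh η p‖) ?_ hGH.norm ?_ ?_
    · intro n
      exact (Continuous.aestronglyMeasurable (by have := hcd.continuous; fun_prop)).mul hGH.aestronglyMeasurable
    · intro n
      refine Eventually.of_forall fun p => ?_
      rw [norm_mul, Real.norm_of_nonneg (hcn _)]
      exact mul_le_of_le_one_left (norm_nonneg _) (hcl _)
    · refine Eventually.of_forall fun p => ?_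
      rcases lt_or_ge 0 p.2 with hp | hp
      · refine tendsto_const_nhds.congr' ?_
        have : ∀ᶠ n in atTop, u n < p.2 / 2 := hul.eventually (gt_mem_nhds (by positivity))
        filter_upwards [this] with n hn
        rw [hc1, one_mul]
        rw [le_div_iff₀ (hup n)]; linarith
      · simp [Gam_of_nonpos hp]
  have L2 : Tendsto (fun n => ∫ s, deriv c s * Φ (u n * s)) atTop (𝓝 (∫ s, deriv c s * η 0)) := by
    refine tendsto_integral_of_dominated_convergence (fun s => ‖deriv c s‖ * C) ?_ (hci.norm.mul_const C) ?_ ?_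
    · intro n
      exact hcd1.aestronglyMeasurable.mul
        (hΦm.comp_measurable (measurable_const_mul (u n))).aestronglyMeasurable
    · intro n
      refine Eventually.of_forall fun s => ?_
      rw [norm_mul]
      exact mul_le_mul_of_nonneg_left (Phi_bound hC0 hC _) (norm_nonneg _)
    · refine Eventually.of_forall fun s => ?_
      rcases lt_or_ge s 1 with hs1 | hs1
      · simp [hd0 s hs1]
      · refine Tendsto.const_mul _ ?_
        refine Phi_tendsto hη.continuous hC (fun n => mul_pos (hup n) (by linarith)) ?_
        simpa using hul.mul_const s
  rw [integral_mul_const, hI, one_mul] at L2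
  have L3 := L2.neg
  simp only [← main _ (hup _)] at L3
  exact tendsto_nhds_unique L1 L3

lemma Gam_repr {η : Euc N × ℝ → ℝ} (hη : C2 η) (hs : HasCompactSupport η) (q : Euc N × ℝ) :
    ∫ p, Gam (p - q) * Hh η p = - η q := by
  have h := Gam_repr0 (hη.translate q) (hs.comp_homeomorph (Homeomorph.addLeft q))
  simp only [Hh_translate hη, add_zero] at h
  rw [← h, ← integral_add_left_eq_self (μ := (volume : Measure (Euc N × ℝ))) (fun p => Gam (p - q) * Hh η p) q]
  simp
end

section
open MeasureTheory Set Filter Topology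
open scoped ENNReal NNReal
set_option maxSynthPendingDepth 3
variable {N : ℕ}

abbrev slab (N : ℕ) (b : ℝ) : Set (Euc N × ℝ) := {p | p.2 < b}
lemma measurableSet_slab (b : ℝ) : MeasurableSet (slab N b) := measurableSet_lt measurable_snd measurable_const

def Pot (κ : Measure (Euc N × ℝ)) (p : Euc N × ℝ) : ℝ := ∫ r, Gam (p - r) ∂κ
def wpot (h : Euc N × ℝ → ℝ) (p : Euc N × ℝ) : ℝ := ∫ r, Gam (r - p) * h r

lemma pot_nonneg (κ : Measure (Euc N × ℝ)) (p) : 0 ≤ Pot κ p := integral_nonneg fun _ => Gam_nonneg _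

lemma pot_zero {κ : Measure (Euc N × ℝ)} (h0 : ∀ᵐ r ∂κ, 0 ≤ r.2) {p : Euc N × ℝ} (hp : p.2 ≤ 0) :
    Pot κ p = 0 := by
  unfold Pot
  refine integral_eq_zero_of_ae ?_
  filter_upwards [h0] with r hr
  exact Gam_of_nonpos (by simp; linarith)

lemma pot_prod {κ : Measure (Euc N × ℝ)} [IsFiniteMeasure κ] (h0 : ∀ᵐ r ∂κ, 0 ≤ r.2) (b : ℝ) :
    Integrable (fun z : (Euc N × ℝ) × (Euc N × ℝ) => Gam (z.1 - z.2)) ((volume.restrict (slab N b)).prod κ) := by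
  have hm : Measurable (fun z : (Euc N × ℝ) × (Euc N × ℝ) => Gam (z.1 - z.2)) :=
    measurable_Gam.comp (measurable_fst.sub measurable_snd)
  refine ⟨hm.aestronglyMeasurable, ?_⟩
  rw [hasFiniteIntegral_iff_ofReal (Eventually.of_forall fun p => Gam_nonneg _),
    lintegral_prod_symm _ hm.ennreal_ofReal.aemeasurable]
  simp only
  simp only [lintegral_Gam_slab]
  calc ∫⁻ r, ENNReal.ofReal (b - r.2) ∂κ ≤ ∫⁻ r, ENNReal.ofReal b ∂κ := by
        refine lintegral_mono_ae ?_
        filter_upwards [h0] with r hr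
        exact ENNReal.ofReal_le_ofReal (by linarith)
    _ < ⊤ := by
        rw [lintegral_const]; exact ENNReal.mul_lt_top ENNReal.ofReal_lt_top (measure_lt_top κ _)

lemma pot_integrableOn {κ : Measure (Euc N × ℝ)} [IsFiniteMeasure κ] (h0 : ∀ᵐ r ∂κ, 0 ≤ r.2) (b : ℝ) :
    IntegrableOn (Pot κ) (slab N b) := (pot_prod h0 b).integral_prod_left

lemma pot_swap {κ : Measure (Euc N × ℝ)} [IsFiniteMeasure κ] (h0 : ∀ᵐ r ∂κ, 0 ≤ r.2)
    {h : Euc N × ℝ → ℝ} (hm : AEStronglyMeasurable h) {C b : ℝ}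
    (hC : ∀ p, |h p| ≤ C) (hb : ∀ p : Euc N × ℝ, b ≤ p.2 → h p = 0) :
    Integrable (fun p => Pot κ p * h p) ∧ Integrable (wpot h) κ ∧
    ∫ p, Pot κ p * h p = ∫ r, wpot h r ∂κ := by
  have hi : Integrable (fun z : (Euc N × ℝ) × (Euc N × ℝ) => Gam (z.1 - z.2) * h z.1)
      ((volume.restrict (slab N b)).prod κ) :=
    (pot_prod h0 b).mul_bdd (c := C) (hm.restrict.comp_fst) (Eventually.of_forall fun z => hC _)
  have e1 : ∀ r, ∫ p in slab N b, Gam (p - r) * h p = wpot h r := by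
    intro r
    refine setIntegral_eq_integral_of_forall_compl_eq_zero fun p hp => ?_
    rw [hb p (not_lt.1 hp), mul_zero]
  have e2 : ∀ p, ∫ r, Gam (p - r) * h p ∂κ = Pot κ p * h p := fun p => integral_mul_const _ _
  have i1 := hi.integral_prod_left
  have i2 := hi.integral_prod_right
  simp only [e1, e2] at i1 i2
  refine ⟨?_, i2, ?_⟩
  · refine (integrableOn_iff_integrable_of_support_subset ?_).1 i1
    intro p hp
    by_contra hn
    exact hp (by simp only; rw [hb p (not_lt.1 hn), mul_zero])
  · have := integral_integral_swap (f := fun p r => Gam (p - r) * h p) hi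
    simp only [e1, e2] at this
    rw [← this]
    symm
    refine setIntegral_eq_integral_of_forall_compl_eq_zero fun p hp => ?_
    rw [hb p (not_lt.1 hp), mul_zero]

lemma pot_heat {κ : Measure (Euc N × ℝ)} [IsFiniteMeasure κ] (h0 : ∀ᵐ r ∂κ, 0 ≤ r.2)
    {η : Euc N × ℝ → ℝ} (hη : C2 η) (hs : HasCompactSupport η) :
    Integrable (fun p => Pot κ p * Hh η p) ∧ ∫ p, Pot κ p * Hh η p = - ∫ r, η r ∂κ := by
  obtain ⟨C, b, _, h1, h2⟩ := cs_bound hη.continuous_Hh (hasCompactSupport_Hh hs)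
  obtain ⟨i1, _, e⟩ := pot_swap h0 hη.continuous_Hh.aestronglyMeasurable h1 h2
  refine ⟨i1, ?_⟩
  rw [e, ← integral_neg]
  congr 1; funext r
  exact Gam_repr hη hs r

lemma pot_slab {κ : Measure (Euc N × ℝ)} [IsFiniteMeasure κ] (h0 : ∀ᵐ r ∂κ, 0 ≤ r.2) {ε : ℝ} :
    ∫ p in slab N ε, Pot κ p ≤ ε * κ.real (slab N ε) := by
  have := integral_integral_swap (f := fun p r => Gam (p - r)) (pot_prod h0 ε)
  unfold Pot
  rw [this]
  have e : ∀ r : Euc N × ℝ, ∫ p in slab N ε, Gam (p - r) = (ENNReal.ofReal (ε - r.2)).toReal := by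
    intro r
    rw [integral_eq_lintegral_of_nonneg_ae (Eventually.of_forall fun p => Gam_nonneg _)
      (integrableOn_Gam ε r).aestronglyMeasurable, lintegral_Gam_slab]
  simp only [e]
  calc ∫ r, (ENNReal.ofReal (ε - r.2)).toReal ∂κ ≤ ∫ r, (slab N ε).indicator (fun _ => ε) r ∂κ := by
        refine integral_mono_of_nonneg (Eventually.of_forall fun r => ENNReal.toReal_nonneg)
          ((integrable_const ε).indicator (measurableSet_slab ε)) ?_
        filter_upwards [h0] with r hr
        by_cases hr2 : r.2 < ε
        · rw [indicator_of_mem (by exact hr2), ENNReal.toReal_ofReal (by linarith)]; linarith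
        · rw [indicator_of_notMem (by exact hr2), ENNReal.ofReal_of_nonpos (by linarith)]; simp
    _ = ε * κ.real (slab N ε) := by
        rw [integral_indicator_const _ (measurableSet_slab ε), smul_eq_mul, mul_comm]

/-! ### backward potentials -/
lemma wpot_eq_conv (h : Euc N × ℝ → ℝ) :
    wpot h = convolution (fun r => Gam (-r)) h (ContinuousLinearMap.mul ℝ ℝ) volume := by
  funext p
  rw [convolution_def, ← integral_sub_left_eq_self _ _ p]
  simp [wpot]

lemma locInt_Gam_neg : LocallyIntegrable (fun r : Euc N × ℝ => Gam (-r)) := by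
  rw [locallyIntegrable_iff]
  intro K hK
  have h1 : LocallyIntegrable (Gam (N := N)) := by
    intro x
    refine ⟨slab N (x.2 + 1), (isOpen_lt continuous_snd continuous_const).mem_nhds (by simp), ?_⟩
    simpa using integrableOn_Gam (N := N) (x.2 + 1) 0
  have h2 : IntegrableOn (Gam (N := N)) (-K) := h1.integrableOn_isCompact hK.neg
  have := ((Measure.measurePreserving_neg (volume : Measure (Euc N × ℝ))).integrableOn_comp_preimage
    (MeasurableEquiv.neg (Euc N × ℝ)).measurableEmbedding).2 h2
  simpa [Function.comp_def] using this

lemma wpot_nonneg {h : Euc N × ℝ → ℝ} (hh : ∀ p, 0 ≤ h p) (p) : 0 ≤ wpot h p :=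
  integral_nonneg fun _ => mul_nonneg (Gam_nonneg _) (hh _)

lemma wpot_zero {h : Euc N × ℝ → ℝ} {b : ℝ} (hb : ∀ p : Euc N × ℝ, b ≤ p.2 → h p = 0) {p : Euc N × ℝ}
    (hp : b ≤ p.2) : wpot h p = 0 := by
  unfold wpot
  refine integral_eq_zero_of_ae (Eventually.of_forall fun r => ?_)
  rcases lt_or_ge r.2 b with hr | hr
  · simp [Gam_of_nonpos (p := r - p) (by simp; linarith)]
  · simp [hb r hr]

lemma wpot_contDiff {h : Euc N × ℝ → ℝ} {n : ℕ∞} (hh : ContDiff ℝ n h) (hs : HasCompactSupport h) :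
    ContDiff ℝ n (wpot h) := by
  rw [wpot_eq_conv]
  exact hs.contDiff_convolution_right _ locInt_Gam_neg hh

lemma wpot_fderiv {h : Euc N × ℝ → ℝ} (hh : ContDiff ℝ 1 h) (hs : HasCompactSupport h) (p v : Euc N × ℝ) :
    fderiv ℝ (wpot h) p v = wpot (fun r => fderiv ℝ h r v) p := by
  rw [wpot_eq_conv, (hs.hasFDerivAt_convolution_right _ locInt_Gam_neg hh p).fderiv,
    convolution_precompR_apply _ locInt_Gam_neg (hs.fderiv ℝ) (hh.continuous_fderiv (by norm_num)), wpot_eq_conv]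

lemma wpot_heat {h : Euc N × ℝ → ℝ} (hh : ContDiff ℝ 3 h) (hs : HasCompactSupport h) (p : Euc N × ℝ) :
    Hh (wpot h) p = - h p := by
  have hd : ∀ v, ContDiff ℝ 2 (fun r => fderiv ℝ h r v) := fun v =>
    (hh.fderiv_right (m := 2) (by norm_num)).clm_apply contDiff_const
  have hds : ∀ v, HasCompactSupport (fun r => fderiv ℝ h r v) := fun v => hs.fderiv_apply ℝ v
  have hx : ∀ {f : Euc N × ℝ → ℝ}, ContDiff ℝ 1 f → ∀ (y : Euc N) (t : ℝ) (v : Euc N),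
      fderiv ℝ (fun z => f (z, t)) y v = fderiv ℝ f (y, t) (v, 0) := by
    intro f hf y t v
    have h1 : HasFDerivAt (fun z : Euc N => (z, t)) (ContinuousLinearMap.inl ℝ (Euc N) ℝ) y :=
      hasFDerivAt_prodMk_left y t
    have h2 := ((hf.differentiable (by norm_num) (y, t)).hasFDerivAt).comp y h1
    have h3 : HasFDerivAt (fun z => f (z, t)) ((fderiv ℝ f (y, t)).comp (ContinuousLinearMap.inl ℝ (Euc N) ℝ)) y := h2
    rw [h3.fderiv]; simp
  have ht : ∀ {f : Euc N × ℝ → ℝ}, ContDiff ℝ 1 f → ∀ (y : Euc N) (t : ℝ),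
      deriv (fun s => f (y, s)) t = fderiv ℝ f (y, t) (0, 1) := by
    intro f hf y t
    have h1 : HasFDerivAt (fun s : ℝ => (y, s)) (ContinuousLinearMap.inr ℝ (Euc N) ℝ) t :=
      hasFDerivAt_prodMk_right y t
    have h2 := ((hf.differentiable (by norm_num) (y, t)).hasFDerivAt).comp t h1
    have h3 : HasFDerivAt (fun s => f (y, s)) ((fderiv ℝ f (y, t)).comp (ContinuousLinearMap.inr ℝ (Euc N) ℝ)) t := h2
    rw [h3.hasDerivAt.deriv]; simp
  have h1 : ContDiff ℝ 1 h := hh.of_le (by norm_num)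
  have hd1 : ∀ v, ContDiff ℝ 1 (fun r => fderiv ℝ h r v) := fun v => (hd v).of_le (by norm_num)
  have key : Hh (wpot h) p = wpot (Hh h) p := by
    have a1 : Hh (wpot h) p = wpot (fun r => fderiv ℝ h r (0, 1)) p +
        ∑ i, wpot (fun r => fderiv ℝ (fun r' => fderiv ℝ h r' (ee i, 0)) r (ee i, 0)) p := by
      unfold Hh heatAdj lap
      congr 1
      · rw [ht (wpot_contDiff (n := 1) h1 hs), wpot_fderiv h1 hs]
      · refine Finset.sum_congr rfl fun i _ => ?_
        have : (fun y => fderiv ℝ (fun z => wpot h (z, p.2)) y (EuclideanSpace.single i 1)) =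
            fun y => wpot (fun r => fderiv ℝ h r (ee i, 0)) (y, p.2) := by
          funext y
          rw [hx (wpot_contDiff (n := 1) h1 hs), wpot_fderiv h1 hs]
        rw [this, hx (wpot_contDiff (n := 1) (hd1 _) (hds _)), wpot_fderiv (hd1 _) (hds _)]
    have a2 : Hh h = fun r => fderiv ℝ h r (0, 1) +
        ∑ i, fderiv ℝ (fun r' => fderiv ℝ h r' (ee i, 0)) r (ee i, 0) := by
      funext p
      unfold Hh heatAdj lap
      congr 1
      · rw [ht h1]
      · refine Finset.sum_congr rfl fun i _ => ?_
        have : (fun y => fderiv ℝ (fun z => h (z, p.2)) y (EuclideanSpace.single i 1)) =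
            fun y => (fun r => fderiv ℝ h r (ee i, 0)) (y, p.2) := by
          funext y
          rw [hx h1]
        rw [this, hx (hd1 _)]
    rw [a1, a2]
    unfold wpot
    have i0 := integrable_Gam_mul_cs (hd (0, 1)).continuous (hds (0, 1)) p
    have i1 : ∀ i : Fin N, Integrable fun r => Gam (r - p) *
        fderiv ℝ (fun r' => fderiv ℝ h r' (ee i, 0)) r (ee i, 0) := fun i =>
      integrable_Gam_mul_cs (((hd (ee i, 0)).continuous_fderiv (by norm_num)).clm_apply continuous_const)
        ((hds _).fderiv_apply ℝ _) p
    simp only [mul_add, Finset.mul_sum]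
    rw [integral_add i0 (integrable_finsetSum Finset.univ fun i _ => i1 i), integral_finsetSum _ fun i _ => i1 i]
  rw [key]
  exact Gam_repr (c2_contDiff (hh.of_le (by norm_num))) hs p

lemma q2_mul_integrable {h : Euc N × ℝ → ℝ} (hc : Continuous h) (hs : HasCompactSupport h) :
    Integrable fun r : Euc N × ℝ => q2 r.2 * h r :=
  ((q2_cont.comp continuous_snd).mul hc).integrable_of_hasCompactSupport hs.mul_left

/-- away from the support, `W` and its gradient are small -/
lemma wpot_far (δ T : ℝ) (hδ : 0 < δ) (hT : 0 < T) : ∃ C, 0 ≤ C ∧ ∀ (h : Euc N × ℝ → ℝ) (U : Set (Euc N)),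
    ContDiff ℝ 1 h → HasCompactSupport h → (∀ r, 0 ≤ h r) → (∀ r, h r ≠ 0 → r.1 ∈ U ∧ r.2 < T) →
    ∀ p : Euc N × ℝ, 0 ≤ p.2 → (∀ y ∈ U, δ ≤ ‖y - p.1‖) →
    wpot h p ≤ C * ∫ r, q2 r.2 * h r ∧ ‖Dx (wpot h) p‖ ≤ C * ∫ r, q2 r.2 * h r := by
  obtain ⟨C, hC0, hC⟩ := Gam_far (N := N) (δ / 2) T (by positivity) hT
  refine ⟨C, hC0, fun h U hh hs hn hU p hp hd => ⟨?_, ?_⟩⟩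
  · rw [← integral_const_mul]
    refine integral_mono (integrable_Gam_mul_cs hh.continuous hs p)
      ((q2_mul_integrable hh.continuous hs).const_mul C) fun r => ?_
    by_cases h0 : h r = 0
    · simp [h0]
    · obtain ⟨h1, h2⟩ := hU r h0
      have h3 := (hC (r - p) (by have := hd r.1 h1; simp only [Prod.fst_sub]; linarith)
        (by simp only [Prod.snd_sub]; linarith)).1
      simp only
      rw [← mul_assoc]
      refine mul_le_mul_of_nonneg_right (h3.trans ?_) (hn r)
      exact mul_le_mul_of_nonneg_left (q2_mono (by simp only [Prod.snd_sub]; linarith)) hC0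
  · have hI : 0 ≤ ∫ r, q2 r.2 * h r := integral_nonneg fun r => mul_nonneg (q2_nonneg _) (hn r)
    have hcd := wpot_contDiff (n := 1) hh hs
    have hdf : HasFDerivAt (fun y => wpot h (y, p.2)) (Dx (wpot h) p) p.1 := by
      refine DifferentiableAt.hasFDerivAt ?_
      have := hcd.differentiable (by norm_num)
      fun_prop
    refine hdf.le_of_lip' (by positivity) ?_
    filter_upwards [Metric.ball_mem_nhds p.1 (half_pos hδ)] with x hx
    unfold wpot
    rw [← integral_sub (integrable_Gam_mul_cs hh.continuous hs _) (integrable_Gam_mul_cs hh.continuous hs _),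
      mul_assoc, mul_comm (∫ r, q2 r.2 * h r), ← mul_assoc, ← integral_const_mul]
    refine norm_integral_le_of_norm_le ((q2_mul_integrable hh.continuous hs).const_mul _)
      (Eventually.of_forall fun r => ?_)
    by_cases h0 : h r = 0
    · simp [h0]
    obtain ⟨h1, h2⟩ := hU r h0
    rw [← sub_mul, norm_mul, Real.norm_of_nonneg (hn r), ← mul_assoc]
    refine mul_le_mul_of_nonneg_right ?_ (hn r)
    rcases lt_or_ge p.2 r.2 with hrp | hrp
    swap
    · rw [Gam_of_nonpos (p := r - (x, p.2)) (by simpa using hrp), Gam_of_nonpos (p := r - (p.1, p.2)) (by simpa using hrp)]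
      simp only [sub_zero, norm_zero]
      exact mul_nonneg (by positivity) (q2_nonneg _)
    have ht : 0 < r.2 - p.2 := by linarith
    have hder : ∀ y ∈ Metric.ball p.1 (δ / 2), HasFDerivWithinAt (fun y => gam (r.1 - y, r.2 - p.2))
        (-((-gam (r.1 - y, r.2 - p.2) / (2 * (r.2 - p.2))) • innerSL ℝ (r.1 - y))) (Metric.ball p.1 (δ / 2)) y := by
      intro y _
      have := (gam_hasFDerivAt (r.1 - y) ht).comp y ((hasFDerivAt_id y).const_sub r.1)
      refine (this.congr_fderiv ?_).hasFDerivWithinAt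
      ext v; simp
    have hb : ∀ y ∈ Metric.ball p.1 (δ / 2),
        ‖-((-gam (r.1 - y, r.2 - p.2) / (2 * (r.2 - p.2))) • innerSL ℝ (r.1 - y))‖ ≤ C * q2 (r.2 - p.2) := by
      intro y hy
      rw [norm_neg, norm_smul, innerSL_apply_norm]
      have hy2 : δ / 2 ≤ ‖r.1 - y‖ := by
        have a1 := hd r.1 h1
        have a2 : ‖y - p.1‖ < δ / 2 := by rwa [Metric.mem_ball, dist_eq_norm] at hy
        have a3 : ‖r.1 - p.1‖ ≤ ‖r.1 - y‖ + ‖y - p.1‖ := by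
          simpa using norm_add_le (r.1 - y) (y - p.1)
        linarith
      have := (hC (r.1 - y, r.2 - p.2) hy2 (by simp only; linarith)).2 ht
      refine le_trans (le_of_eq ?_) this
      have hg := gam_pos (p := (r.1 - y, r.2 - p.2)) ht
      rw [norm_div, norm_neg, Real.norm_of_nonneg hg.le, Real.norm_of_nonneg (by positivity)]
      ring
    have hmv := (convex_ball p.1 (δ / 2)).norm_image_sub_le_of_norm_hasFDerivWithin_le hder hb
      (Metric.mem_ball_self (half_pos hδ)) hx
    have e : ∀ y : Euc N, Gam (r - (y, p.2)) = gam (r.1 - y, r.2 - p.2) := fun y => Gam_of_pos (p := r - (y, p.2)) ht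
    rw [e, e]
    refine hmv.trans ?_
    have hq : q2 (r.2 - p.2) ≤ q2 r.2 := q2_mono (by linarith)
    have := mul_le_mul_of_nonneg_right (mul_le_mul_of_nonneg_left hq hC0) (norm_nonneg (x - p.1))
    calc _ ≤ _ := this
      _ = _ := by ring
end

section
open MeasureTheory Set Filter Topology
open scoped ENNReal NNReal
set_option maxSynthPendingDepth 3
variable {N : ℕ}

lemma exists_cut {E : Type*} [NormedAddCommGroup E] [NormedSpace ℝ E] [FiniteDimensional ℝ E] {K : Set E}
    (hK : IsCompact K) {δ : ℝ} (hδ : 0 < δ) : ∃ c : E → ℝ, ContDiff ℝ (⊤ : ℕ∞) c ∧ (∀ x, 0 ≤ c x) ∧ (∀ x, c x ≤ 1) ∧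
    (∀ x ∈ K, c x = 1) ∧ Function.support c = Metric.thickening δ K ∧ HasCompactSupport c ∧
    tsupport c ⊆ Metric.cthickening δ K := by
  obtain ⟨c, h1, h2, h3, h4⟩ := exists_contMDiff_support_eq_eq_one_iff (modelWithCornersSelf ℝ E)
    (n := (⊤ : ℕ∞)) (Metric.isOpen_thickening (δ := δ) (E := K)) hK.isClosed (Metric.self_subset_thickening hδ K)
  have hr : ∀ x, c x ∈ Icc (0:ℝ) 1 := fun x => h2 (mem_range_self x)
  have hts : tsupport c ⊆ Metric.cthickening δ K := by
    rw [tsupport, h3]; exact Metric.closure_thickening_subset_cthickening δ K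
  refine ⟨c, contMDiff_iff_contDiff.1 h1, fun x => (hr x).1, fun x => (hr x).2, fun x hx => (h4 x).1 hx, h3, ?_, hts⟩
  exact (hK.cthickening).of_isClosed_subset (isClosed_tsupport c) hts

lemma exists_cut_open {E : Type*} [NormedAddCommGroup E] [NormedSpace ℝ E] [FiniteDimensional ℝ E] {K O : Set E}
    (hK : IsCompact K) (hO : IsOpen O) (hKO : K ⊆ O) : ∃ c : E → ℝ, ContDiff ℝ (⊤ : ℕ∞) c ∧ (∀ x, 0 ≤ c x) ∧ (∀ x, c x ≤ 1) ∧
    (∃ V, IsOpen V ∧ K ⊆ V ∧ ∀ x ∈ V, c x = 1) ∧ HasCompactSupport c ∧ tsupport c ⊆ O := by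
  obtain ⟨δ, hδ, h⟩ := hK.exists_cthickening_subset_open hO hKO
  obtain ⟨c, h1, h2, h3, h4, -, h6, h7⟩ := exists_cut (hK.cthickening (r := δ / 2)) (half_pos hδ)
  refine ⟨c, h1, h2, h3, ⟨Metric.thickening (δ / 2) K, Metric.isOpen_thickening, Metric.self_subset_thickening (half_pos hδ) K,
    fun x hx => h4 x (Metric.thickening_subset_cthickening _ _ hx)⟩, h6, h7.trans ?_⟩
  refine (Metric.cthickening_cthickening_subset (half_pos hδ).le (half_pos hδ).le K).trans ?_
  rwa [add_halves]

lemma ae_nonneg_of_test {f : Euc N × ℝ → ℝ} {O : Set (Euc N × ℝ)} (hO : IsOpen O) (hf : IntegrableOn f O)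
    (h : ∀ c : Euc N × ℝ → ℝ, ContDiff ℝ (⊤ : ℕ∞) c → HasCompactSupport c → tsupport c ⊆ O → (∀ p, 0 ≤ c p) →
      0 ≤ ∫ p in O, f p * c p) : ∀ᵐ p ∂volume.restrict O, 0 ≤ f p := by
  have hK : ∀ K ⊆ O, IsCompact K → 0 ≤ ∫ p in K, f p := by
    intro K hKO hKc
    obtain ⟨δ, hδ, hδO⟩ := hKc.exists_cthickening_subset_open hO hKO
    obtain ⟨u, -, u_pos, u_lim⟩ : ∃ u : ℕ → ℝ, StrictAnti u ∧ (∀ (n : ℕ), u n ∈ Ioo 0 δ)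
      ∧ Tendsto u atTop (𝓝 0) := exists_seq_strictAnti_tendsto' hδ
    choose c h1 h2 h3 h4 h5 h6 h7 using fun n => exists_cut hKc (u_pos n).1
    have L : Tendsto (fun n ↦ ∫ x in O, f x * c n x) atTop (𝓝 (∫ x in O, K.indicator f x)) := by
      refine tendsto_integral_of_dominated_convergence (fun x => |f x|)
        (fun n => hf.aestronglyMeasurable.mul (h1 n).continuous.aestronglyMeasurable) hf.abs ?_ ?_
      · intro n
        refine Eventually.of_forall fun x => ?_
        rw [norm_mul, Real.norm_eq_abs, Real.norm_of_nonneg (h2 n x)]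
        exact mul_le_of_le_one_right (abs_nonneg _) (h3 n x)
      · refine Eventually.of_forall fun x => ?_
        by_cases hx : x ∈ K
        · simp [h4 _ x hx, hx]
        · rw [indicator_of_notMem hx]
          refine tendsto_const_nhds.congr' ?_
          obtain ⟨ε, εpos, hε⟩ : ∃ ε, 0 < ε ∧ x ∉ Metric.thickening ε K := by
            rw [← hKc.isClosed.closure_eq, Metric.closure_eq_iInter_thickening K] at hx
            simpa using hx
          filter_upwards [(tendsto_order.1 u_lim).2 _ εpos] with n hn
          have : x ∉ Function.support (c n) := by
            rw [h5]; exact fun hh => hε (Metric.thickening_mono hn.le _ hh)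
          simp [Function.notMem_support.1 this]
    rw [setIntegral_indicator hKc.measurableSet, inter_eq_right.2 hKO] at L
    refine ge_of_tendsto' L fun n => h _ (h1 n) (h6 n) ((h7 n).trans ?_) (h2 n)
    exact (Metric.cthickening_mono (u_pos n).2.le K).trans hδO
  obtain ⟨f', hf', e⟩ := hf.aestronglyMeasurable
  suffices volume (O ∩ {p | f' p < 0}) = 0 by
    have h2 : ∀ᵐ p ∂volume.restrict O, 0 ≤ f' p := by
      rw [ae_restrict_iff' hO.measurableSet, ae_iff]
      convert this using 2
      ext p; simp
    filter_upwards [h2, e] with p hp he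
    rwa [he]
  by_contra hne
  have hms : MeasurableSet (O ∩ {p | f' p < 0}) :=
    hO.measurableSet.inter (measurableSet_lt hf'.measurable measurable_const)
  obtain ⟨K, hKs, hKc, hpos⟩ := hms.exists_lt_isCompact (pos_iff_ne_zero.2 hne)
  have hKO : K ⊆ O := fun x hx => (hKs hx).1
  have e2 : f =ᵐ[volume.restrict K] f' := ae_restrict_of_ae_restrict_of_subset hKO e
  have h0 := hK K hKO hKc
  rw [integral_congr_ae e2] at h0
  have hi : IntegrableOn f' K := (hf.mono_set hKO).congr e2
  have hnn : 0 ≤ᵐ[volume.restrict K] fun p => - f' p := by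
    filter_upwards [ae_restrict_mem hKc.measurableSet] with p hp
    have := (hKs hp).2
    simp at this; simp; linarith
  have h1 : ∫ p in K, - f' p = 0 := by
    refine le_antisymm ?_ (integral_nonneg_of_ae hnn)
    rw [integral_neg]; linarith
  have h2 := (integral_eq_zero_iff_of_nonneg_ae hnn hi.neg).1 h1
  have : ∀ᵐ p ∂volume.restrict K, False := by
    filter_upwards [h2, ae_restrict_mem hKc.measurableSet] with p hp hp2
    have := (hKs hp2).2
    simp at this hp; linarith
  rw [ae_restrict_iff' hKc.measurableSet, ae_iff] at this
  simp at this
  simp [this] at hpos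
end

section
open MeasureTheory Set Filter Topology
open scoped ENNReal NNReal
set_option maxSynthPendingDepth 3
variable {N : ℕ}

lemma cdt {E : Type*} [NormedAddCommGroup E] [NormedSpace ℝ E] {f : E → ℝ} (h : ContDiff ℝ (⊤ : ℕ∞) f) :
    ContDiff ℝ 1 f ∧ ContDiff ℝ 2 f ∧ ContDiff ℝ 3 f :=
  ⟨contDiff_infty.1 h 1, contDiff_infty.1 h 2, contDiff_infty.1 h 3⟩

/-- local test functions -/
structure LocT (Ω : Set (Euc N)) (T : ℝ) (η : Euc N × ℝ → ℝ) : Prop where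
  c2 : C2 η
  cs : HasCompactSupport η
  ts : tsupport η ⊆ Ω ×ˢ Iio T

structure Geo (Ω E U : Set (Euc N)) (φ : Euc N → ℝ) (δ : ℝ) : Prop where
  Uo : IsOpen U
  Ub : Bornology.IsBounded U
  EU : E ⊆ U
  dpos : 0 < δ
  cd : ContDiff ℝ (⊤ : ℕ∞) φ
  cs : HasCompactSupport φ
  ts : tsupport φ ⊆ Ω
  nn : ∀ x, 0 ≤ φ x
  le1 : ∀ x, φ x ≤ 1
  one : ∀ y ∈ U, ∀ x, ‖y - x‖ < δ → φ x = 1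
  far : ∀ x ∉ U, ∀ e ∈ E, δ ≤ ‖x - e‖

lemma Geo.oneU {Ω E U : Set (Euc N)} {φ : Euc N → ℝ} {δ : ℝ} (G : Geo Ω E U φ δ) {x} (hx : x ∈ U) : φ x = 1 :=
  G.one x hx x (by simpa using G.dpos)

lemma Geo.UΩ {Ω E U : Set (Euc N)} {φ : Euc N → ℝ} {δ : ℝ} (G : Geo Ω E U φ δ) : U ⊆ Ω := fun x hx =>
  G.ts (subset_tsupport _ (by simp [G.oneU hx]))

lemma exists_geo {Ω E : Set (Euc N)} (hΩ : IsOpen Ω) (hE : IsCompact E) (hEΩ : E ⊆ Ω) : ∃ U φ δ, Geo Ω E U φ δ := by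
  obtain ⟨d, hd, h⟩ := hE.exists_cthickening_subset_open hΩ hEΩ
  have hd4 : 0 < d / 4 := by positivity
  obtain ⟨c, h1, h2, h3, h4, -, h6, h7⟩ := exists_cut (hE.cthickening (r := d / 2)) hd4
  refine ⟨Metric.thickening (d / 4) E, c, d / 4, Metric.isOpen_thickening, hE.isBounded.thickening,
    Metric.self_subset_thickening hd4 E, hd4, h1, h6, h7.trans ?_, h2, h3, ?_, ?_⟩
  · refine (Metric.cthickening_cthickening_subset hd4.le (half_pos hd).le E).trans ?_
    exact (Metric.cthickening_mono (by linarith) E).trans h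
  · intro y hy x hxy
    refine h4 x (Metric.thickening_subset_cthickening _ _ ?_)
    obtain ⟨e, he, hye⟩ := Metric.mem_thickening_iff.1 hy
    refine Metric.mem_thickening_iff.2 ⟨e, he, ?_⟩
    have := dist_triangle x y e
    rw [dist_comm x y, dist_eq_norm y x] at this
    linarith
  · intro x hx e he
    by_contra hlt
    push Not at hlt
    exact hx (Metric.mem_thickening_iff.2 ⟨e, he, by rwa [dist_eq_norm]⟩)

lemma exists_bnd {T : ℝ} (hT : 0 < T) {K : Set (Euc N × ℝ)} (hK : IsCompact K) (h : ∀ p ∈ K, p.2 < T) :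
    ∃ b, 0 < b ∧ b < T ∧ ∀ p ∈ K, p.2 < b := by
  rcases K.eq_empty_or_nonempty with rfl | hne
  · exact ⟨T / 2, by linarith, by linarith, by simp⟩
  · obtain ⟨m, hm, hmax⟩ := hK.exists_isMaxOn hne continuous_snd.continuousOn
    have := h m hm
    refine ⟨max (T / 2) ((m.2 + T) / 2), lt_max_of_lt_left (by linarith), max_lt (by linarith) (by linarith), fun p hp => ?_⟩
    have := hmax hp
    simp at this
    exact lt_max_of_lt_right (by linarith)

lemma bdd_of_cs {f : Euc N × ℝ → ℝ} (hf : Continuous f) (hs : HasCompactSupport f) : ∃ C, 0 ≤ C ∧ ∀ p, |f p| ≤ C := by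
  obtain ⟨C, b, h0, h, -⟩ := cs_bound hf hs
  exact ⟨C, h0, h⟩

lemma local_test {Ω E U : Set (Euc N)} {φ : Euc N → ℝ} {δ T : ℝ} (G : Geo Ω E U φ δ) (hT : 0 < T) :
    ∃ C, 0 ≤ C ∧ ∀ c : Euc N × ℝ → ℝ, ContDiff ℝ (⊤ : ℕ∞) c → HasCompactSupport c → tsupport c ⊆ U ×ˢ Ioo 0 T →
      (∀ p, 0 ≤ c p) → ∃ η, LocT Ω T η ∧ (∀ p, 0 ≤ η p) ∧ (∀ p, 0 ≤ p.2 → η p = φ p.1 * wpot c p) ∧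
      ∀ p, 0 < p.2 → |Hh η p + c p| ≤ C * ∫ r, q2 r.2 * c r := by
  obtain ⟨C, hC0, hC⟩ := wpot_far (N := N) δ T G.dpos hT
  have hφ2 : ContDiff ℝ 2 φ := (cdt G.cd).2.1
  set f : Euc N × ℝ → ℝ := fun p => φ p.1 with hf
  have f2 : C2 f := (hasC21_space hφ2).c2
  have hHf : Hh f = fun p => ∑ i, fderiv ℝ (fderiv ℝ φ) p.1 (ee i) (ee i) := funext fun p => Hh_space hφ2 p
  have hDf : Dx f = fun p => fderiv ℝ φ p.1 := (hasC21_space hφ2).D_eq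
  have b1 : ∃ A, ∀ x, ‖fderiv ℝ φ x‖ ≤ A :=
    (hφ2.continuous_fderiv (by norm_num)).bounded_above_of_compact_support (G.cs.fderiv ℝ)
  have hcd1 : ContDiff ℝ 1 (fderiv ℝ φ) := hφ2.fderiv_right (m := 1) (by norm_num)
  have b2 : ∃ A, ∀ x, ‖fderiv ℝ (fderiv ℝ φ) x‖ ≤ A :=
    (hcd1.continuous_fderiv (by norm_num)).bounded_above_of_compact_support ((G.cs.fderiv ℝ).fderiv ℝ)
  obtain ⟨A, hA⟩ := b1
  obtain ⟨B, hB⟩ := b2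
  have hA0 : 0 ≤ A := (norm_nonneg _).trans (hA 0)
  have hB0 : 0 ≤ B := (norm_nonneg _).trans (hB 0)
  have hee : ∀ i : Fin N, ‖(ee i : Euc N)‖ = 1 := fun i => by simp
  refine ⟨N * B * C + 2 * (N * (A * C)), by positivity, fun c hc hcs hct hc0 => ?_⟩
  set W := wpot c with hW
  set J := ∫ r, q2 r.2 * c r with hJ
  have hJ0 : 0 ≤ J := integral_nonneg fun r => mul_nonneg (q2_nonneg _) (hc0 _)
  have hc3 : ContDiff ℝ 3 c := (cdt hc).2.2
  have hWd : ContDiff ℝ 2 W := (cdt (wpot_contDiff hc hcs)).2.1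
  have W2 : C2 W := c2_contDiff hWd
  obtain ⟨b, hb0, hbT, hb⟩ := exists_bnd hT hcs (fun p hp => (hct hp).2.2)
  have hcb : ∀ p : Euc N × ℝ, b ≤ p.2 → c p = 0 := fun p hp => by
    by_contra h
    exact absurd (hb p (subset_tsupport _ h)) (not_lt.2 hp)
  have hχd : ContDiff ℝ 2 (fun p : Euc N × ℝ => Real.smoothTransition (p.2 + 1)) :=
    Real.smoothTransition.contDiff.comp (by fun_prop)
  set η : Euc N × ℝ → ℝ := (fun p : Euc N × ℝ => Real.smoothTransition (p.2 + 1)) * (f * W) with hη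
  have hts : tsupport η ⊆ tsupport φ ×ˢ Icc (-1) b := by
    refine closure_minimal ?_ ((isClosed_tsupport φ).prod isClosed_Icc)
    intro p hp
    have hp' : Real.smoothTransition (p.2 + 1) * (φ p.1 * W p) ≠ 0 := hp
    refine ⟨subset_tsupport _ fun h => hp' ?_, ?_, ?_⟩
    · rw [h]; ring
    · by_contra h
      exact hp' (by rw [Real.smoothTransition.zero_of_nonpos (by linarith)]; ring)
    · by_contra h
      exact hp' (by rw [hW, wpot_zero hcb (by linarith)]; ring)
  refine ⟨η, ⟨(c2_contDiff hχd).mul (f2.mul W2), ?_, ?_⟩, ?_, ?_, ?_⟩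
  · exact (IsCompact.prod G.cs isCompact_Icc).of_isClosed_subset (isClosed_tsupport _) hts
  · exact hts.trans (prod_mono G.ts fun t ht => lt_of_le_of_lt ht.2 hbT)
  · intro p
    exact mul_nonneg (Real.smoothTransition.nonneg _) (mul_nonneg (G.nn _) (wpot_nonneg hc0 _))
  · intro p hp
    simp only [hη, Pi.mul_apply, Real.smoothTransition.one_of_one_le (show 1 ≤ p.2 + 1 by linarith), one_mul, hf]
  · intro p hp
    have e1 : η =ᶠ[𝓝 p] f * W := by
      filter_upwards [(isOpen_lt continuous_const continuous_snd).mem_nhds (show p ∈ {q : Euc N × ℝ | 0 < q.2} from hp)] with q hq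
      have hq' : 0 < q.2 := hq
      simp only [hη, Pi.mul_apply, Real.smoothTransition.one_of_one_le (show 1 ≤ q.2 + 1 by linarith), one_mul]
    rw [Hh_congr e1, Hh_mul f2 W2, wpot_heat hc3 hcs]
    have e2 : f p * c p = c p := by
      by_cases h : c p = 0
      · simp [h]
      · rw [hf]; simp only; rw [G.oneU (hct (subset_tsupport _ h)).1, one_mul]
    have e3 : f p * -c p + W p * Hh f p + 2 * ∑ i, Dx f p (ee i) * Dx W p (ee i) + c p
        = W p * Hh f p + 2 * ∑ i, Dx f p (ee i) * Dx W p (ee i) := by linear_combination -e2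
    rw [e3]
    by_cases hnear : ∃ y ∈ U, ‖y - p.1‖ < δ
    · obtain ⟨y, hy, hyd⟩ := hnear
      have e4 : φ =ᶠ[𝓝 p.1] fun _ => (1:ℝ) := by
        have : {x | ‖y - x‖ < δ} ∈ 𝓝 p.1 := (isOpen_lt (by fun_prop) continuous_const).mem_nhds hyd
        filter_upwards [this] with x hx using G.one y hy x hx
      have e5 : fderiv ℝ φ =ᶠ[𝓝 p.1] fun _ => 0 := by
        filter_upwards [e4.fderiv (𝕜 := ℝ)] with x hx; rw [hx]; simp
      rw [hHf, hDf]
      simp only [e5.fderiv_eq, e5.eq_of_nhds]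
      simp only [fderiv_fun_const, Pi.zero_apply, _root_.zero_apply, Finset.sum_const_zero, mul_zero, zero_mul, add_zero, abs_zero]
      positivity
    · push Not at hnear
      obtain ⟨w1, w2⟩ := hC c U (cdt hc).1 hcs hc0
        (fun r hr => by have := hct (subset_tsupport _ hr); exact ⟨this.1, this.2.2⟩) p hp.le hnear
      have w0 : 0 ≤ W p := wpot_nonneg hc0 p
      have k1 : |Hh f p| ≤ N * B := by
        rw [hHf]
        refine (Finset.abs_sum_le_sum_abs _ _).trans ?_
        refine (Finset.sum_le_card_nsmul _ _ B fun i _ => ?_).trans (by simp)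
        have := (fderiv ℝ (fderiv ℝ φ) p.1).le_opNorm₂ (ee i) (ee i)
        rw [hee, mul_one, mul_one, Real.norm_eq_abs] at this
        exact this.trans (hB _)
      have k2 : |∑ i, Dx f p (ee i) * Dx W p (ee i)| ≤ N * (A * (C * J)) := by
        refine (Finset.abs_sum_le_sum_abs _ _).trans ?_
        refine (Finset.sum_le_card_nsmul _ _ (A * (C * J)) fun i _ => ?_).trans (by simp)
        rw [abs_mul]
        have h1 := (Dx f p).le_opNorm (ee i)
        have h2 := (Dx W p).le_opNorm (ee i)
        rw [hee, mul_one, Real.norm_eq_abs] at h1 h2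
        refine mul_le_mul (h1.trans ?_) (h2.trans w2) (abs_nonneg _) hA0
        rw [hDf]; exact hA _
      calc _ ≤ |W p * Hh f p| + |2 * ∑ i, Dx f p (ee i) * Dx W p (ee i)| := abs_add_le _ _
        _ ≤ (C * J) * (N * B) + 2 * (N * (A * (C * J))) := by
          rw [abs_mul, abs_mul, abs_of_nonneg w0, abs_two]
          gcongr
        _ = _ := by ring
end

section
open MeasureTheory Set Filter Topology
open scoped ENNReal NNReal
set_option maxSynthPendingDepth 3
variable {N : ℕ}

lemma lc2 {α : Type*} [MeasurableSpace α] {μ : Measure α} {f g h : α → ℝ} (hf : Integrable f μ) (hg : Integrable g μ)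
    (a b : ℝ) (e : ∀ᵐ p ∂μ, h p = a * f p + b * g p) :
    Integrable h μ ∧ ∫ p, h p ∂μ = a * (∫ p, f p ∂μ) + b * (∫ p, g p ∂μ) := by
  have i1 := hf.const_mul a
  have i2 := hg.const_mul b
  have e' : (fun p => a * f p + b * g p) =ᵐ[μ] h := by filter_upwards [e] with p hp using hp.symm
  refine ⟨(i1.add i2).congr e', ?_⟩
  rw [← integral_congr_ae e', integral_add i1 i2, integral_const_mul, integral_const_mul]

lemma lc3 {α : Type*} [MeasurableSpace α] {μ : Measure α} {f g k h : α → ℝ} (hf : Integrable f μ) (hg : Integrable g μ)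
    (hk : Integrable k μ) (a b c : ℝ) (e : ∀ᵐ p ∂μ, h p = a * f p + b * g p + c * k p) :
    Integrable h μ ∧ ∫ p, h p ∂μ = a * (∫ p, f p ∂μ) + b * (∫ p, g p ∂μ) + c * (∫ p, k p ∂μ) := by
  have i := lc2 (h := fun p => a * f p + b * g p) hf hg a b (Eventually.of_forall fun _ => rfl)
  have j := lc2 (h := h) i.1 hk 1 c (by simpa using e)
  refine ⟨j.1, ?_⟩
  rw [j.2, i.2, one_mul]

def src (Q : Set (Euc N × ℝ)) (f : Euc N × ℝ → ℝ) : Measure (Euc N × ℝ) :=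
  (volume.restrict Q).withDensity (fun p => ENNReal.ofReal (f p))

lemma src_finite {Q : Set (Euc N × ℝ)} {f : Euc N × ℝ → ℝ} (hf : IntegrableOn f Q) : IsFiniteMeasure (src Q f) :=
  isFiniteMeasure_withDensity_ofReal hf.2

lemma measurableSet_QT {Ω : Set (Euc N)} (hΩ : IsOpen Ω) (T : ℝ) : MeasurableSet (QT Ω T) :=
  hΩ.measurableSet.prod measurableSet_Ioo

lemma src_t0 {Ω : Set (Euc N)} (hΩ : IsOpen Ω) (T : ℝ) (f : Euc N × ℝ → ℝ) : ∀ᵐ r ∂(src (QT Ω T) f), 0 ≤ r.2 := by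
  refine (withDensity_absolutelyContinuous _ _).ae_le ?_
  filter_upwards [ae_restrict_mem (measurableSet_QT hΩ T)] with r hr using hr.2.1.le

lemma src_integral {Q : Set (Euc N × ℝ)} {f : Euc N × ℝ → ℝ} (hf : IntegrableOn f Q) (h0 : ∀ p, 0 ≤ f p)
    (w : Euc N × ℝ → ℝ) : ∫ p, w p ∂(src Q f) = ∫ p in Q, f p * w p := by
  unfold src
  rw [integral_withDensity_eq_integral_toReal_smul₀ hf.aestronglyMeasurable.aemeasurable.ennreal_ofReal
    (Eventually.of_forall fun p => ENNReal.ofReal_lt_top)]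
  refine integral_congr_ae (Eventually.of_forall fun p => ?_)
  simp [ENNReal.toReal_ofReal (h0 p)]

def lft (m : Measure (Euc N)) : Measure (Euc N × ℝ) := m.map (fun y => (y, (0:ℝ)))

lemma meas_lft : Measurable (fun y : Euc N => (y, (0:ℝ))) := by fun_prop

instance (m : Measure (Euc N)) [IsFiniteMeasure m] : IsFiniteMeasure (lft m) := by unfold lft; infer_instance

lemma lft_ae {m : Measure (Euc N)} {P : Euc N × ℝ → Prop} (hP : MeasurableSet {p | P p}) (h : ∀ᵐ y ∂m, P (y, 0)) :
    ∀ᵐ r ∂(lft m), P r := (ae_map_iff meas_lft.aemeasurable hP).2 h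

lemma lft_t0 (m : Measure (Euc N)) : ∀ᵐ r ∂(lft m), 0 ≤ r.2 :=
  lft_ae (measurableSet_le measurable_const measurable_snd) (Eventually.of_forall fun _ => le_rfl)

lemma lft_integral (m : Measure (Euc N)) {w : Euc N × ℝ → ℝ} (hw : Continuous w) :
    ∫ r, w r ∂(lft m) = ∫ y, w (y, 0) ∂m := integral_map meas_lft.aemeasurable hw.aestronglyMeasurable

lemma int_bdd_mul {Q : Set (Euc N × ℝ)} {v w : Euc N × ℝ → ℝ} (hv : IntegrableOn v Q) (hw : Continuous w) {C : ℝ}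
    (hC : ∀ p, |w p| ≤ C) : IntegrableOn (fun p => v p * w p) Q :=
  Integrable.mul_bdd (c := C) hv hw.aestronglyMeasurable (Eventually.of_forall hC)

lemma Geo.prod_sub {Ω E U : Set (Euc N)} {φ : Euc N → ℝ} {δ : ℝ} (G : Geo Ω E U φ δ) (T : ℝ) : U ×ˢ Ioo 0 T ⊆ QT Ω T :=
  prod_mono G.UΩ le_rfl

lemma q2_integrableOn {Q : Set (Euc N × ℝ)} (hQ : Bornology.IsBounded Q) : IntegrableOn (fun p : Euc N × ℝ => q2 p.2) Q := by
  have : IntegrableOn (fun p : Euc N × ℝ => q2 p.2) (closure Q) :=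
    (q2_cont.comp continuous_snd).continuousOn.integrableOn_compact hQ.isCompact_closure
  exact this.mono_set subset_closure

lemma local_lower {Ω E U : Set (Euc N)} {φ : Euc N → ℝ} {δ T : ℝ} (G : Geo Ω E U φ δ) (hΩ : IsOpen Ω) (hT : 0 < T)
    {v F : Euc N × ℝ → ℝ} {m : Measure (Euc N)} [IsFiniteMeasure m] (hm : m Eᶜ = 0) (hv : IntegrableOn v (QT Ω T))
    (hF : IntegrableOn (fun p => φ p.1 * F p) (QT Ω T)) (hF0 : ∀ p, 0 ≤ F p)
    (hin : ∀ η, LocT Ω T η → (∀ p, 0 ≤ η p) →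
      (∫ y, η (y, 0) ∂m) - (∫ p in QT Ω T, F p * η p) ≤ ∫ p in QT Ω T, v p * -Hh η p) :
    ∃ C, 0 ≤ C ∧ ∀ᵐ p ∂volume.restrict (U ×ˢ Ioo 0 T),
      Pot (lft m) p - Pot (src (QT Ω T) fun p => φ p.1 * F p) p - C * q2 p.2 ≤ v p := by
  obtain ⟨C, hC0, hC⟩ := local_test G hT
  set κ := src (QT Ω T) fun p => φ p.1 * F p with hκ
  have := src_finite hF
  have κ0 : ∀ᵐ r ∂κ, 0 ≤ r.2 := src_t0 hΩ T _
  set I := ∫ p in QT Ω T, |v p| with hI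
  have hI0 : 0 ≤ I := integral_nonneg fun p => abs_nonneg _
  have hOo : IsOpen (U ×ˢ Ioo 0 T) := G.Uo.prod isOpen_Ioo
  have hOs : U ×ˢ Ioo 0 T ⊆ slab N T := fun p hp => hp.2.2
  refine ⟨C * I, by positivity, ?_⟩
  have i1 : IntegrableOn v (U ×ˢ Ioo 0 T) := hv.mono_set (G.prod_sub T)
  have i2 : IntegrableOn (Pot (lft m)) (U ×ˢ Ioo 0 T) := (pot_integrableOn (lft_t0 m) T).mono_set hOs
  have i3 : IntegrableOn (Pot κ) (U ×ˢ Ioo 0 T) := (pot_integrableOn κ0 T).mono_set hOs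
  have i4 : IntegrableOn (fun p : Euc N × ℝ => C * I * q2 p.2) (U ×ˢ Ioo 0 T) :=
    (q2_integrableOn (G.Ub.prod (Metric.isBounded_Ioo 0 T))).const_mul _
  have key := ae_nonneg_of_test hOo (f := fun p => v p - Pot (lft m) p + Pot κ p + C * I * q2 p.2)
    (((i1.sub i2).add i3).add i4) ?_
  · filter_upwards [key] with p hp
    linarith
  intro c hc hcs hct hc0
  obtain ⟨η, hL, hη0, hηW, hηH⟩ := hC c hc hcs hct hc0
  set J := ∫ r, q2 r.2 * c r with hJ
  have hin := hin η hL hη0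
  have hcz : ∀ p ∉ U ×ˢ Ioo 0 T, c p = 0 := fun p hp => by
    by_contra h; exact hp (hct (subset_tsupport _ h))
  obtain ⟨B, b, hB0, hB, hb⟩ := cs_bound hc.continuous hcs
  have hWc : Continuous (wpot c) := (wpot_contDiff hc hcs).continuous
  obtain ⟨k1, -, k3⟩ := pot_swap (lft_t0 m) hc.continuous.aestronglyMeasurable hB hb
  obtain ⟨l1, -, l3⟩ := pot_swap κ0 hc.continuous.aestronglyMeasurable hB hb
  rw [lft_integral m hWc] at k3
  rw [hκ, src_integral hF (fun p => mul_nonneg (G.nn _) (hF0 _)), ← hκ] at l3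
  have e1 : ∫ y, η (y, 0) ∂m = ∫ y, wpot c (y, 0) ∂m := by
    refine integral_congr_ae ?_
    filter_upwards [compl_mem_ae_iff.2 hm] with y hy
    rw [hηW (y, 0) le_rfl]; simp only
    rw [G.oneU (G.EU (by simpa using hy)), one_mul]
  have e2 : ∫ p in QT Ω T, F p * η p = ∫ p in QT Ω T, φ p.1 * F p * wpot c p := by
    refine setIntegral_congr_fun (measurableSet_QT hΩ T) fun p hp => ?_
    simp only [hηW p hp.2.1.le]; ring
  obtain ⟨D, -, hD⟩ := bdd_of_cs hL.c2.continuous_Hh (hasCompactSupport_Hh hL.cs)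
  have e3 : ∫ p in QT Ω T, v p * -Hh η p ≤ ∫ p in QT Ω T, (v p * c p + C * J * |v p|) := by
    refine setIntegral_mono_on ?_ ?_ (measurableSet_QT hΩ T) fun p hp => ?_
    · exact int_bdd_mul hv hL.c2.continuous_Hh.neg (C := D) (fun p => by rw [abs_neg]; exact hD p)
    · exact (int_bdd_mul hv hc.continuous hB).add (hv.abs.const_mul _)
    · have h1 := hηH p hp.2.1
      have h2 : v p * -Hh η p - v p * c p ≤ |v p| * |Hh η p + c p| := by
        rw [← abs_mul]
        exact le_trans (le_of_eq (by ring)) (neg_le_abs (v p * (Hh η p + c p)))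
      have := mul_le_mul_of_nonneg_left h1 (abs_nonneg (v p))
      linarith
  rw [integral_add (int_bdd_mul hv hc.continuous hB) (hv.abs.const_mul _), integral_const_mul] at e3
  have f1 : ∫ p in QT Ω T, v p * c p = ∫ p in U ×ˢ Ioo 0 T, v p * c p := by
    refine (setIntegral_eq_of_subset_of_forall_sdiff_eq_zero (measurableSet_QT hΩ T) (G.prod_sub T) fun p hp => ?_)
    rw [hcz p hp.2, mul_zero]
  have f2 : ∀ h : Euc N × ℝ → ℝ, ∫ p, h p * c p = ∫ p in U ×ˢ Ioo 0 T, h p * c p := fun h => by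
    refine (setIntegral_eq_integral_of_forall_compl_eq_zero fun p hp => ?_).symm
    rw [hcz p hp, mul_zero]
  have f3 : ∫ p in U ×ˢ Ioo 0 T, (v p - Pot (lft m) p + Pot κ p + C * I * q2 p.2) * c p
      = (∫ p in U ×ˢ Ioo 0 T, v p * c p) - (∫ p in U ×ˢ Ioo 0 T, Pot (lft m) p * c p)
        + (∫ p in U ×ˢ Ioo 0 T, Pot κ p * c p) + C * I * ∫ p in U ×ˢ Ioo 0 T, q2 p.2 * c p := by
    have j1 := int_bdd_mul i1 hc.continuous hB
    have j2 := int_bdd_mul i2 hc.continuous hB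
    have j3 := int_bdd_mul i3 hc.continuous hB
    have j4 := (q2_mul_integrable hc.continuous hcs).integrableOn (s := U ×ˢ Ioo 0 T)
    have a1 := lc3 (h := fun p => v p * c p - Pot (lft m) p * c p + Pot κ p * c p) j1 j2 j3 1 (-1) 1
      (Eventually.of_forall fun p => by ring)
    have a2 := lc2 (h := fun p => (v p - Pot (lft m) p + Pot κ p + C * I * q2 p.2) * c p) a1.1 j4 1 (C * I)
      (Eventually.of_forall fun p => by ring)
    rw [a2.2, a1.2]; ring
  rw [f3, ← f1, ← f2, ← f2, ← f2 (fun p => q2 p.2), k3, l3]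
  rw [e1, e2] at hin
  have : C * J * I = C * I * ∫ p, q2 p.2 * c p := by rw [hJ]; ring
  linarith
end

section
open MeasureTheory Set Filter Topology
open scoped ENNReal NNReal
set_option maxSynthPendingDepth 3
variable {N : ℕ}

lemma hb_abs {V α : Type*} [AddCommGroup V] [Module ℝ V] [MeasurableSpace α] (ν : Measure α) [IsFiniteMeasure ν]
    (a : V →ₗ[ℝ] (α → ℝ)) (ha : ∀ v, MemLp (a v) 2 ν) (S : V →ₗ[ℝ] ℝ) (h : ∀ v, S v ≤ ∫ x, max (a v x) 0 ∂ν) :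
    ∃ θ : α → ℝ, Measurable θ ∧ (∀ x, 0 ≤ θ x) ∧ (∀ x, θ x ≤ 1) ∧ ∀ v, S v = ∫ x, θ x * a v x ∂ν := by
  let A : V →ₗ[ℝ] Lp ℝ 2 ν :=
    { toFun := fun v => (ha v).toLp (a v)
      map_add' := fun v w => by
        rw [← MemLp.toLp_add]; exact MemLp.toLp_congr _ _ (by rw [map_add])
      map_smul' := fun c v => by
        rw [RingHom.id_apply, ← MemLp.toLp_const_smul]; exact MemLp.toLp_congr _ _ (by rw [map_smul]) }
  have hA : ∀ v, A v =ᵐ[ν] a v := fun v => MemLp.coeFn_toLp (ha v)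
  let P : Lp ℝ 2 ν → ℝ := fun x => ∫ y, max (x y) 0 ∂ν
  have hi : ∀ x : Lp ℝ 2 ν, Integrable x ν := fun x => (Lp.memLp x).integrable (by norm_num)
  have him : ∀ x : Lp ℝ 2 ν, Integrable (fun y => max (x y) 0) ν := fun x => (hi x).sup (integrable_zero _ _ _)
  have hPA : ∀ v, P (A v) = ∫ x, max (a v x) 0 ∂ν := fun v => integral_congr_ae <| by
    filter_upwards [hA v] with x hx; rw [hx]
  have hS0 : ∀ v, A v = 0 → S v = 0 := by
    have : ∀ v, A v = 0 → S v ≤ 0 := fun v hv => by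
      refine (h v).trans (le_of_eq ?_)
      rw [← hPA, hv]
      refine integral_eq_zero_of_ae ?_
      filter_upwards [Lp.coeFn_zero ℝ 2 ν] with x hx
      rw [hx]; simp
    intro v hv
    have h2 := this (-v) (by rw [map_neg, hv, neg_zero])
    rw [map_neg] at h2
    linarith [this v hv]
  obtain ⟨s, hs⟩ := LinearMap.exists_rightInverse_of_surjective A.rangeRestrict A.range_rangeRestrict
  have hs' : ∀ x : LinearMap.range A, A (s x) = x := fun x => by
    have := LinearMap.congr_fun hs x
    exact congrArg Subtype.val this
  have hSs : ∀ v, S (s ⟨A v, v, rfl⟩) = S v := fun v => by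
    have := hS0 (s ⟨A v, v, rfl⟩ - v) (by rw [map_sub, hs', sub_self])
    rw [map_sub] at this; linarith
  have q1 : ∀ (c : ℝ), 0 < c → ∀ x, P (c • x) = c * P x := by
    intro c hc x
    rw [← integral_const_mul]
    refine integral_congr_ae ?_
    filter_upwards [Lp.coeFn_smul c x] with y hy
    rw [hy, Pi.smul_apply, smul_eq_mul, mul_max_of_nonneg _ _ hc.le, mul_zero]
  have q2 : ∀ x y, P (x + y) ≤ P x + P y := by
    intro x y
    rw [← integral_add (him x) (him y)]
    refine integral_mono_ae (him _) ((him x).add (him y)) ?_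
    filter_upwards [Lp.coeFn_add x y] with z hz
    rw [hz, Pi.add_apply]
    exact max_le (add_le_add (le_max_left _ _) (le_max_left _ _)) (add_nonneg (le_max_right _ _) (le_max_right _ _))
  obtain ⟨g, hg1, hg2⟩ := exists_extension_of_le_sublinear ⟨LinearMap.range A, S ∘ₗ s⟩ P q1 q2 (by
    rintro ⟨x, v, rfl⟩
    change S (s ⟨A v, v, rfl⟩) ≤ P (A v)
    rw [hSs, hPA]; exact h v)
  have hgA : ∀ v, g (A v) = S v := fun v => (hg1 ⟨A v, v, rfl⟩).trans (hSs v)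
  set c : ℝ := (ν univ ^ (1 / (1:ℝ≥0∞).toReal - 1 / (2:ℝ≥0∞).toReal)).toReal with hc
  have hbd : ∀ x, g x ≤ c * ‖x‖ := by
    intro x
    have h1 : P x ≤ ∫ y, ‖x y‖ ∂ν := integral_mono (him x) (hi x).norm fun y => max_le (Real.le_norm_self _) (norm_nonneg _)
    have h2 := eLpNorm_le_eLpNorm_mul_rpow_measure_univ (p := 1) (q := 2) (by norm_num) (Lp.aestronglyMeasurable x)
    rw [eLpNorm_one_eq_lintegral_enorm] at h2
    rw [integral_norm_eq_lintegral_enorm (Lp.aestronglyMeasurable x)] at h1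
    refine (hg2 x).trans (h1.trans ((ENNReal.toReal_mono ?_ h2).trans (le_of_eq ?_)))
    · refine ENNReal.mul_ne_top (Lp.eLpNorm_ne_top x) (ENNReal.rpow_ne_top_of_nonneg (by norm_num) (measure_ne_top _ _))
    · rw [ENNReal.toReal_mul, Lp.norm_def, mul_comm]
  let L : StrongDual ℝ (Lp ℝ 2 ν) := g.mkContinuous c fun x => by
    rw [Real.norm_eq_abs, abs_le]
    refine ⟨?_, hbd x⟩
    have := hbd (-x)
    rw [map_neg, norm_neg] at this; linarith
  let th := (InnerProductSpace.toDual ℝ (Lp ℝ 2 ν)).symm L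
  have hth : ∀ x, inner ℝ th x = g x := fun x => InnerProductSpace.toDual_symm_apply
  have hset : ∀ (t : Set α) (ht : MeasurableSet t), ∫ x in t, th x ∂ν = g (indicatorConstLp 2 ht (measure_ne_top ν t) 1) := by
    intro t ht
    rw [← L2.inner_indicatorConstLp_one ht (measure_ne_top ν t), real_inner_comm, hth]
  have h1 : 0 ≤ᵐ[ν] th := by
    refine ae_nonneg_of_forall_setIntegral_nonneg (hi th) fun t ht _ => ?_
    rw [hset t ht]
    have := hg2 (- indicatorConstLp 2 ht (measure_ne_top ν t) 1)
    rw [map_neg] at this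
    have h0 : P (- indicatorConstLp 2 ht (measure_ne_top ν t) 1) = 0 := by
      refine integral_eq_zero_of_ae ?_
      filter_upwards [Lp.coeFn_neg (indicatorConstLp 2 ht (measure_ne_top ν t) (1:ℝ)),
        indicatorConstLp_coeFn (p := 2) (hs := ht) (hμs := measure_ne_top ν t) (c := (1:ℝ))] with x h1 h2
      rw [h1, Pi.neg_apply, h2]
      by_cases hx : x ∈ t <;> simp [hx]
    linarith
  have h2 : th ≤ᵐ[ν] fun _ => (1:ℝ) := by
    refine ae_le_of_forall_setIntegral_le (hi th) (integrable_const 1) fun t ht _ => ?_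
    rw [hset t ht]
    refine (hg2 _).trans (le_of_eq ?_)
    rw [← integral_indicator ht]
    refine integral_congr_ae ?_
    filter_upwards [indicatorConstLp_coeFn (p := 2) (hs := ht) (hμs := measure_ne_top ν t) (c := (1:ℝ))] with x h2
    rw [h2]
    by_cases hx : x ∈ t <;> simp [hx]
  refine ⟨fun x => max 0 (min 1 (th x)), ?_, fun x => le_max_left _ _, fun x => max_le zero_le_one (min_le_left _ _), fun v => ?_⟩
  · exact measurable_const.max (measurable_const.min (Lp.stronglyMeasurable th).measurable)
  · rw [← hgA, ← hth, L2.inner_def]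
    refine integral_congr_ae ?_
    filter_upwards [h1, h2, hA v] with x h1 h2 h3
    rw [h3]
    have h1' : 0 ≤ th x := h1
    simp [min_eq_right h2, max_eq_right h1', mul_comm]
end

section
open MeasureTheory Set Filter Topology
open scoped ENNReal NNReal
set_option maxSynthPendingDepth 3
variable {N : ℕ}

lemma exists_J : ∃ J J' J'' : ℝ → ℝ, (∀ s, HasDerivAt J (J' s) s) ∧ (∀ s, HasDerivAt J' (J'' s) s) ∧ Continuous J'' ∧
    (∀ s ≤ 1, J s = 0) ∧ (∀ s, 0 ≤ J s) ∧ (∀ s, s - 2 ≤ J s) ∧ (∀ s, 0 ≤ J' s) ∧ (∀ s, J' s ≤ 1) ∧ (∀ s, 0 ≤ J'' s) ∧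
    (∀ s, J s ≤ s * J' s) := by
  set P : ℝ → ℝ := fun s => Real.smoothTransition (s - 1) with hP
  have hPd : ContDiff ℝ 1 P := Real.smoothTransition.contDiff.comp (by fun_prop)
  have hPc : Continuous P := hPd.continuous
  have hPm : Monotone P := fun a b hab => Real.smoothTransition.monotone (by linarith)
  have hP0 : ∀ s, 0 ≤ P s := fun s => Real.smoothTransition.nonneg _
  have hP1 : ∀ s, P s ≤ 1 := fun s => Real.smoothTransition.le_one _
  have hPz : ∀ s ≤ 1, P s = 0 := fun s hs => Real.smoothTransition.zero_of_nonpos (by linarith)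
  have hPo : ∀ s, 2 ≤ s → P s = 1 := fun s hs => Real.smoothTransition.one_of_one_le (by linarith)
  have hi : ∀ a b, IntervalIntegrable P volume a b := fun a b => hPc.intervalIntegrable a b
  have hz : ∀ s ≤ 1, ∫ r in (0:ℝ)..s, P r = 0 := by
    intro s hs
    refine intervalIntegral.integral_zero_ae (Eventually.of_forall fun r hr => hPz r ?_)
    rcases le_total 0 s with h | h
    · rw [uIoc_of_le h] at hr; exact hr.2.trans hs
    · rw [uIoc_of_ge h] at hr; linarith [hr.2]
  have hnn : ∀ s, 0 ≤ ∫ r in (0:ℝ)..s, P r := by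
    intro s
    rcases le_total 0 s with h | h
    · exact intervalIntegral.integral_nonneg h fun r _ => hP0 r
    · rw [hz s (by linarith)]
  refine ⟨fun s => ∫ r in (0:ℝ)..s, P r, P, deriv P, ?_, ?_, ?_, hz, hnn, ?_, hP0, hP1, ?_, ?_⟩
  · exact fun s => intervalIntegral.integral_hasDerivAt_right (hi 0 s) hPc.stronglyMeasurable.stronglyMeasurableAtFilter hPc.continuousAt
  · exact fun s => (hPd.differentiable (by norm_num) s).hasDerivAt
  · exact hPd.continuous_deriv (by norm_num)
  · intro s
    rcases le_total s 2 with h | h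
    · linarith [hnn s]
    · have e : ∫ r in (2:ℝ)..s, P r = s - 2 := by
        rw [intervalIntegral.integral_congr (g := fun _ => (1:ℝ))]
        · simp
        · intro r hr; rw [uIcc_of_le h] at hr; exact hPo r hr.1
      have := intervalIntegral.integral_add_adjacent_intervals (hi 0 2) (hi 2 s)
      linarith [hnn 2]
  · exact fun s => hPm.deriv_nonneg
  · intro s
    rcases le_total 0 s with h | h
    · have := intervalIntegral.integral_mono_on h (hi 0 s) (intervalIntegrable_const (c := P s)) fun r hr => hPm hr.2
      simpa using this
    · simp only [hz s (by linarith), hPz s (by linarith), mul_zero, le_refl]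

/-- global test functions -/
def TZ (Ω : Set (Euc N)) (T : ℝ) (ζ : Euc N × ℝ → ℝ) : Prop := TestZero Ω T (fun x t => ζ (x, t))

lemma TZ.c2 {Ω : Set (Euc N)} {T : ℝ} {ζ : Euc N × ℝ → ℝ} (h : TZ Ω T ζ) : C2 ζ := h.1

lemma cut_test {Ω : Set (Euc N)} {T M ε : ℝ} (hΩ : IsOpen Ω) (hb : Bornology.IsBounded Ω) (hM : 0 ≤ M) (hε : 0 < ε)
    {ζ : Euc N × ℝ → ℝ} (hζ : TZ Ω T ζ) : ∃ η, LocT Ω T η ∧ (∀ p, 0 ≤ η p) ∧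
    (∀ p ∈ Ω ×ˢ Ico 0 T, ζ p - 2 * ε ≤ η p) ∧ ∀ p ∈ QT Ω T, -Hh η p + M * η p ≤ max (-Hh ζ p + M * ζ p) 0 := by
  obtain ⟨J, J', J'', h1, h2, h3, h4, h5, h6, h7, h8, h9, h10⟩ := exists_J
  have hc := hζ.c2.continuous
  set K : Set (Euc N × ℝ) := (closure Ω ×ˢ Icc 0 T) ∩ {p | ε ≤ ζ p} with hK
  have hKc : IsCompact K := (hb.isCompact_closure.prod isCompact_Icc).inter_right (isClosed_le continuous_const hc)
  have hKO : K ⊆ Ω ×ˢ Iio T := by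
    rintro p ⟨⟨hp1, hp2⟩, hp3⟩
    have hp3' : ε ≤ ζ p := hp3
    refine ⟨?_, ?_⟩
    · by_contra hn
      have : ζ (p.1, p.2) = 0 := hζ.2.1 p.1 (by rw [hΩ.frontier_eq]; exact ⟨hp1, hn⟩) p.2 hp2
      rw [Prod.mk.eta] at this
      linarith
    · refine lt_of_le_of_ne hp2.2 fun hn => ?_
      have : ζ (p.1, T) = 0 := hζ.2.2 p.1 hp1
      rw [← hn, Prod.mk.eta] at this
      linarith
  obtain ⟨c, c1, c2, -, ⟨V, hVo, hKV, hV⟩, c5, c6⟩ := exists_cut_open hKc (hΩ.prod isOpen_Iio) hKO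
  set jz : Euc N × ℝ → ℝ := fun p => ε * J (ε⁻¹ * ζ p) with hjz
  have g1 : ∀ s, HasDerivAt (fun s => ε * J (ε⁻¹ * s)) (J' (ε⁻¹ * s)) s := fun s => by
    have h0 : HasDerivAt (fun s : ℝ => ε⁻¹ * s) (ε⁻¹ * 1) s := (hasDerivAt_id s).const_mul ε⁻¹
    exact ((HasDerivAt.comp s (h1 (ε⁻¹ * s)) h0).const_mul ε).congr_deriv (by field_simp)
  have g2 : ∀ s, HasDerivAt (fun s => J' (ε⁻¹ * s)) (J'' (ε⁻¹ * s) * ε⁻¹) s := fun s => by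
    have h0 : HasDerivAt (fun s : ℝ => ε⁻¹ * s) (ε⁻¹ * 1) s := (hasDerivAt_id s).const_mul ε⁻¹
    exact (HasDerivAt.comp s (h2 (ε⁻¹ * s)) h0).congr_deriv (by ring)
  have g3 : Continuous fun s => J'' (ε⁻¹ * s) * ε⁻¹ := by fun_prop
  have jC : C2 jz := C2.comp (J := fun s => ε * J (ε⁻¹ * s)) g1 g2 g3 hζ.c2
  have hev : ∀ p ∈ closure Ω ×ˢ Icc 0 T, c * jz =ᶠ[𝓝 p] jz := by
    intro p hp
    by_cases hpK : p ∈ K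
    · filter_upwards [hVo.mem_nhds (hKV hpK)] with q hq
      simp [hV q hq]
    · have hlt : ζ p < ε := by
        by_contra hn; exact hpK ⟨hp, not_lt.1 hn⟩
      filter_upwards [(isOpen_lt hc continuous_const).mem_nhds hlt] with q hq
      have hq' : ζ q < ε := hq
      have : jz q = 0 := by
        rw [hjz]; simp only; rw [h4 _ ?_, mul_zero]
        rw [inv_mul_le_iff₀ hε, mul_one]; exact hq'.le
      simp [this]
  refine ⟨c * jz, ⟨(c2_contDiff (cdt c1).2.1).mul jC, c5.mul_right, (closure_mono ?_).trans c6⟩, ?_, ?_, ?_⟩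
  · exact Function.support_mul_subset_left _ _
  · exact fun p => mul_nonneg (c2 p) (mul_nonneg hε.le (h5 _))
  · intro p hp
    rw [(hev p ⟨subset_closure hp.1, hp.2.1, hp.2.2.le⟩).eq_of_nhds]
    have := mul_le_mul_of_nonneg_left (h6 (ε⁻¹ * ζ p)) hε.le
    refine le_trans (le_of_eq ?_) this
    field_simp
  · intro p hp
    have e := hev p ⟨subset_closure hp.1, hp.2.1.le, hp.2.2.le⟩
    rw [e.eq_of_nhds, Hh_congr e, hjz, Hh_comp (J := fun s => ε * J (ε⁻¹ * s)) g1 g2 g3 hζ.c2]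
    simp only
    have k1 : 0 ≤ J'' (ε⁻¹ * ζ p) * ε⁻¹ * ∑ i, (Dx ζ p (ee i)) ^ 2 :=
      mul_nonneg (mul_nonneg (h9 _) (by positivity)) (Finset.sum_nonneg fun i _ => sq_nonneg _)
    have k2 : M * (ε * J (ε⁻¹ * ζ p)) ≤ M * (ζ p * J' (ε⁻¹ * ζ p)) := by
      refine mul_le_mul_of_nonneg_left ?_ hM
      have := mul_le_mul_of_nonneg_left (h10 (ε⁻¹ * ζ p)) hε.le
      refine this.trans (le_of_eq ?_)
      field_simp
    have k3 : J' (ε⁻¹ * ζ p) * (-Hh ζ p + M * ζ p) ≤ max (-Hh ζ p + M * ζ p) 0 := by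
      rcases le_total 0 (-Hh ζ p + M * ζ p) with h | h
      · exact (mul_le_of_le_one_left h (h8 _)).trans (le_max_left _ _)
      · exact (mul_nonpos_of_nonneg_of_nonpos (h7 _) h).trans (le_max_right _ _)
    nlinarith
end

section
open MeasureTheory Set Filter Topology
open scoped ENNReal NNReal
set_option maxSynthPendingDepth 3
variable {N : ℕ}

lemma QT_bdd {Ω : Set (Euc N)} (hb : Bornology.IsBounded Ω) (T : ℝ) : Bornology.IsBounded (QT Ω T) :=
  hb.prod (Metric.isBounded_Ioo 0 T)

lemma bdd_on {α : Type*} [PseudoMetricSpace α] [ProperSpace α] {Q : Set α} (hQ : Bornology.IsBounded Q) {w : α → ℝ} (hw : Continuous w) :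
    ∃ C, 0 ≤ C ∧ ∀ p ∈ Q, |w p| ≤ C := by
  obtain ⟨C, hC⟩ := hQ.isCompact_closure.exists_bound_of_continuousOn hw.continuousOn
  exact ⟨max C 0, le_max_right _ _, fun p hp => (hC p (subset_closure hp)).trans (le_max_left _ _)⟩

lemma int_cont_mul {Q : Set (Euc N × ℝ)} (hQ : Bornology.IsBounded Q) (hm : MeasurableSet Q) {v w : Euc N × ℝ → ℝ}
    (hv : IntegrableOn v Q) (hw : Continuous w) : IntegrableOn (fun p => v p * w p) Q := by
  obtain ⟨C, -, hC⟩ := bdd_on hQ hw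
  refine Integrable.mul_bdd (c := C) hv hw.aestronglyMeasurable ?_
  filter_upwards [ae_restrict_mem hm] with p hp using hC p hp

lemma src_integral_ae {Q : Set (Euc N × ℝ)} {f : Euc N × ℝ → ℝ} (hf : IntegrableOn f Q) (h0 : ∀ᵐ p ∂volume.restrict Q, 0 ≤ f p)
    (w : Euc N × ℝ → ℝ) : ∫ p, w p ∂(src Q f) = ∫ p in Q, f p * w p := by
  unfold src
  rw [integral_withDensity_eq_integral_toReal_smul₀ hf.aestronglyMeasurable.aemeasurable.ennreal_ofReal
    (Eventually.of_forall fun p => ENNReal.ofReal_lt_top)]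
  refine integral_congr_ae ?_
  filter_upwards [h0] with p hp
  simp [ENNReal.toReal_ofReal hp]

lemma bd_int {Ω : Set (Euc N)} (hb : Bornology.IsBounded Ω) {m : Measure (Euc N)} [IsFiniteMeasure m] (hm : m Ωᶜ = 0)
    {ζ : Euc N × ℝ → ℝ} (hζ : Continuous ζ) : Integrable (fun y => ζ (y, 0)) m := by
  have hc : Continuous fun y : Euc N => ζ (y, 0) := by fun_prop
  obtain ⟨C, -, hC⟩ := bdd_on hb hc
  refine Integrable.of_bound hc.aestronglyMeasurable C ?_
  filter_upwards [compl_mem_ae_iff.2 hm] with y hy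
  exact hC y (by simpa using hy)

lemma TZ.add {Ω : Set (Euc N)} {T : ℝ} {ζ ξ : Euc N × ℝ → ℝ} (h : TZ Ω T ζ) (h' : TZ Ω T ξ) : TZ Ω T (ζ + ξ) :=
  ⟨h.c2.add h'.c2, fun x hx t ht => by simp [h.2.1 x hx t ht, h'.2.1 x hx t ht], fun x hx => by simp [h.2.2 x hx, h'.2.2 x hx]⟩

lemma TZ.smul {Ω : Set (Euc N)} {T : ℝ} {ζ : Euc N × ℝ → ℝ} (c : ℝ) (h : TZ Ω T ζ) : TZ Ω T (c • ζ) :=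
  ⟨h.c2.smul c, fun x hx t ht => by simp [h.2.1 x hx t ht], fun x hx => by simp [h.2.2 x hx]⟩

lemma TZ.zero {Ω : Set (Euc N)} {T : ℝ} : TZ Ω T (0 : Euc N × ℝ → ℝ) :=
  ⟨c2_contDiff (f := fun _ => (0:ℝ)) contDiff_const, fun _ _ _ _ => rfl, fun _ _ => rfl⟩

lemma hb_pde {Ω : Set (Euc N)} {T M : ℝ} (hΩ : IsOpen Ω) (hb : Bornology.IsBounded Ω) (hT : 0 < T) (hM : 0 ≤ M)
    {d F : Euc N × ℝ → ℝ} {m : Measure (Euc N)} [IsFiniteMeasure m] (hm : m Ωᶜ = 0)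
    (hd : IntegrableOn d (QT Ω T)) (hd0 : ∀ᵐ p ∂volume.restrict (QT Ω T), 0 ≤ d p)
    (hF : IntegrableOn F (QT Ω T)) (hF0 : ∀ᵐ p ∂volume.restrict (QT Ω T), 0 ≤ F p)
    (h : ∀ η, LocT Ω T η → (∀ p, 0 ≤ η p) →
      (∫ y, η (y, 0) ∂m) + (∫ p in QT Ω T, F p * η p) ≤ ∫ p in QT Ω T, d p * (-Hh η p + M * η p)) :
    ∃ q, IntegrableOn q (QT Ω T) ∧ (∀ᵐ p ∂volume.restrict (QT Ω T), 0 ≤ q p ∧ q p ≤ d p) ∧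
      ∀ ζ, TZ Ω T ζ → ∫ p in QT Ω T, q p * (-Hh ζ p + M * ζ p) = (∫ y, ζ (y, 0) ∂m) + ∫ p in QT Ω T, F p * ζ p := by
  have hQb := QT_bdd hb T
  have hQm := measurableSet_QT hΩ T
  let V : Submodule ℝ (Euc N × ℝ → ℝ) :=
    { carrier := {ζ | TZ Ω T ζ}
      add_mem' := fun h h' => h.add h'
      zero_mem' := TZ.zero
      smul_mem' := fun c _ h => h.smul c }
  let a : V →ₗ[ℝ] (Euc N × ℝ → ℝ) :=
    { toFun := fun ζ p => -Hh ζ.1 p + M * ζ.1 p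
      map_add' := fun ζ ξ => by
        funext p
        simp only [Submodule.coe_add, Hh_add ζ.2.c2 ξ.2.c2, Pi.add_apply]; ring
      map_smul' := fun c ζ => by
        funext p
        simp only [Submodule.coe_smul, Hh_smul c ζ.2.c2, Pi.smul_apply, smul_eq_mul, RingHom.id_apply]; ring }
  have iF : ∀ ζ : V, IntegrableOn (fun p => F p * ζ.1 p) (QT Ω T) := fun ζ => int_cont_mul hQb hQm hF ζ.2.c2.continuous
  have im : ∀ ζ : V, Integrable (fun y => ζ.1 (y, 0)) m := fun ζ => bd_int hb hm ζ.2.c2.continuous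
  let S : V →ₗ[ℝ] ℝ :=
    { toFun := fun ζ => (∫ y, ζ.1 (y, 0) ∂m) + ∫ p in QT Ω T, F p * ζ.1 p
      map_add' := fun ζ ξ => by
        simp only [Submodule.coe_add, Pi.add_apply, mul_add]
        rw [integral_add (im ζ) (im ξ), integral_add (iF ζ) (iF ξ)]; ring
      map_smul' := fun c ζ => by
        simp only [Submodule.coe_smul, Pi.smul_apply, smul_eq_mul, RingHom.id_apply, mul_left_comm _ c]
        rw [integral_const_mul, integral_const_mul]; ring }
  have := src_finite hd
  have ac : ∀ ζ : V, Continuous (a ζ) := fun ζ => by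
    have h1 := ζ.2.c2.continuous_Hh
    have h2 := ζ.2.c2.continuous
    exact h1.neg.add (h2.const_mul M)
  have aeQ : ∀ᵐ p ∂(src (QT Ω T) d), p ∈ QT Ω T :=
    (withDensity_absolutelyContinuous _ _).ae_le (ae_restrict_mem hQm)
  obtain ⟨θ, t1, t2, t3, t4⟩ := hb_abs (src (QT Ω T) d) a (fun ζ => by
    obtain ⟨C, -, hC⟩ := bdd_on hQb (ac ζ)
    refine MemLp.of_bound (ac ζ).aestronglyMeasurable C ?_
    filter_upwards [aeQ] with p hp using hC p hp) S (fun ζ => by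
    rw [src_integral_ae hd hd0]
    set B := m.real univ + ∫ p in QT Ω T, F p with hB
    refine le_of_forall_pos_le_add fun e he => ?_
    have hB0 : 0 ≤ B := add_nonneg measureReal_nonneg (integral_nonneg_of_ae hF0)
    obtain ⟨η, n1, n2, n3, n4⟩ := cut_test hΩ hb hM (ε := e / (2 * (B + 1))) (by positivity) ζ.2
    have hη := h η n1 n2
    have iFη : IntegrableOn (fun p => F p * η p) (QT Ω T) := int_cont_mul hQb hQm hF n1.c2.continuous
    have e1 : (∫ y, ζ.1 (y, 0) ∂m) ≤ (∫ y, (η (y, 0) + 2 * (e / (2 * (B + 1)))) ∂m) := by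
      refine integral_mono_ae (im ζ) ((bd_int hb hm n1.c2.continuous).add (integrable_const _)) ?_
      filter_upwards [compl_mem_ae_iff.2 hm] with y hy
      have := n3 (y, 0) ⟨by simpa using hy, le_rfl, hT⟩
      linarith
    have e2 : ∫ p in QT Ω T, F p * ζ.1 p ≤ ∫ p in QT Ω T, (F p * η p + 2 * (e / (2 * (B + 1))) * F p) := by
      refine integral_mono_ae (iF ζ) (iFη.add (hF.const_mul _)) ?_
      filter_upwards [hF0, ae_restrict_mem hQm] with p hp hpQ
      have := n3 p ⟨hpQ.1, hpQ.2.1.le, hpQ.2.2⟩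
      have := mul_le_mul_of_nonneg_left this hp
      linarith
    have e3 : ∫ p in QT Ω T, d p * (-Hh η p + M * η p) ≤ ∫ p in QT Ω T, d p * max (a ζ p) 0 := by
      refine integral_mono_ae ?_ ?_ ?_
      · exact int_cont_mul hQb hQm hd (n1.c2.continuous_Hh.neg.add (n1.c2.continuous.const_mul M))
      · exact int_cont_mul hQb hQm hd ((ac ζ).max continuous_const)
      · filter_upwards [hd0, ae_restrict_mem hQm] with p hp hpQ
        exact mul_le_mul_of_nonneg_left (n4 p hpQ) hp
    rw [integral_add (bd_int hb hm n1.c2.continuous) (integrable_const _), integral_const, smul_eq_mul] at e1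
    rw [integral_add iFη (hF.const_mul _), integral_const_mul] at e2
    have e4 : 2 * (e / (2 * (B + 1))) * B ≤ e := by
      rw [show 2 * (e / (2 * (B + 1))) * B = e * (B / (B + 1)) by field_simp]
      exact mul_le_of_le_one_right he.le ((div_le_one (by positivity)).2 (by linarith))
    have e5 : S ζ = (∫ y, ζ.1 (y, 0) ∂m) + ∫ p in QT Ω T, F p * ζ.1 p := rfl
    rw [e5]
    rw [hB] at e4
    nlinarith)
  refine ⟨fun p => d p * θ p, ?_, ?_, fun ζ hζ => ?_⟩
  · refine Integrable.mul_bdd (c := 1) hd t1.aestronglyMeasurable (Eventually.of_forall fun p => ?_)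
    rw [Real.norm_eq_abs, abs_of_nonneg (t2 p)]; exact t3 p
  · filter_upwards [hd0] with p hp
    exact ⟨mul_nonneg hp (t2 p), mul_le_of_le_one_right hp (t3 p)⟩
  · have := t4 ⟨ζ, hζ⟩
    rw [src_integral_ae hd hd0] at this
    refine Eq.trans ?_ this.symm
    refine integral_congr_ae (Eventually.of_forall fun p => ?_)
    exact mul_assoc _ _ _
end

section
open MeasureTheory Set Filter Topology
open scoped ENNReal NNReal
set_option maxSynthPendingDepth 3
variable {N : ℕ}

lemma LocT.out {Ω : Set (Euc N)} {T : ℝ} {η : Euc N × ℝ → ℝ} (h : LocT Ω T η) {p} (hp : p ∉ Ω ×ˢ Iio T) : η p = 0 := by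
  by_contra hn; exact hp (h.ts (subset_tsupport _ hn))

lemma LocT.tz {Ω : Set (Euc N)} {T : ℝ} {η : Euc N × ℝ → ℝ} (hΩ : IsOpen Ω) (h : LocT Ω T η) : TZ Ω T η :=
  ⟨h.c2, fun x hx t _ => h.out fun hn => by
    rw [hΩ.frontier_eq] at hx; exact hx.2 hn.1, fun x _ => h.out fun hn => lt_irrefl T hn.2⟩

lemma QT_slab {Ω : Set (Euc N)} {T : ℝ} : QT Ω T ⊆ slab N T := fun _ hp => hp.2.2

lemma to_Q {Ω : Set (Euc N)} {T : ℝ} {η f : Euc N × ℝ → ℝ} (h : LocT Ω T η) (hf : ∀ p : Euc N × ℝ, p.2 ≤ 0 → f p = 0) :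
    ∫ p in QT Ω T, f p * -Hh η p = -∫ p, f p * Hh η p := by
  rw [← integral_neg]
  simp only [mul_neg]
  refine setIntegral_eq_integral_of_forall_compl_eq_zero fun p hp => ?_
  by_cases h0 : p.2 ≤ 0
  · rw [hf p h0]; simp
  · have : p ∉ tsupport η := fun hn => hp ⟨(h.ts hn).1, not_le.1 h0, (h.ts hn).2⟩
    rw [Hh_zero_of_notMem_tsupport this]; simp

lemma pot_lft_Q {Ω : Set (Euc N)} {T : ℝ} {η : Euc N × ℝ → ℝ} (h : LocT Ω T η) (m : Measure (Euc N)) [IsFiniteMeasure m] :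
    ∫ p in QT Ω T, Pot (lft m) p * -Hh η p = ∫ y, η (y, 0) ∂m := by
  rw [to_Q h (fun p hp => pot_zero (lft_t0 m) hp), (pot_heat (lft_t0 m) h.c2 h.cs).2, neg_neg, lft_integral m h.c2.continuous]

lemma pot_src_Q {Ω : Set (Euc N)} (hΩ : IsOpen Ω) {T : ℝ} {η f : Euc N × ℝ → ℝ} (h : LocT Ω T η) (hf : IntegrableOn f (QT Ω T))
    (h0 : ∀ p, 0 ≤ f p) : ∫ p in QT Ω T, Pot (src (QT Ω T) f) p * -Hh η p = ∫ p in QT Ω T, f p * η p := by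
  have := src_finite hf
  rw [to_Q h (fun p hp => pot_zero (src_t0 hΩ T f) hp), (pot_heat (src_t0 hΩ T f) h.c2 h.cs).2, neg_neg, src_integral hf h0]

lemma q2_Q {Ω : Set (Euc N)} {T : ℝ} {η : Euc N × ℝ → ℝ} (h : LocT Ω T η) (h0 : ∀ p, 0 ≤ η p) :
    0 ≤ ∫ p in QT Ω T, q2 p.2 * -Hh η p := by
  rw [to_Q (f := fun p => q2 p.2) h (fun p hp => q2_of_nonpos hp),
    ibp (hasC21_time q2_deriv (by fun_prop)) h.c2 h.cs, ← integral_neg]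
  refine integral_nonneg fun p => ?_
  simp only [_root_.zero_apply, Finset.sum_const_zero, add_zero, Pi.zero_apply]
  have := mul_nonneg (le_max_right p.2 0) (h0 p)
  linarith

lemma rho_pos {Ω K : Set (Euc N)} (hΩ : IsOpen Ω) (hne : Ωᶜ.Nonempty) (hK : IsCompact K) (hKΩ : K ⊆ Ω) :
    ∃ c, 0 < c ∧ ∀ x ∈ K, c ≤ rho Ω x := by
  rcases K.eq_empty_or_nonempty with rfl | hK0
  · exact ⟨1, one_pos, by simp⟩
  obtain ⟨x, hx, hm⟩ := hK.exists_isMinOn hK0 (Metric.continuous_infDist_pt Ωᶜ).continuousOn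
  refine ⟨rho Ω x, ?_, fun y hy => hm hy⟩
  exact (hΩ.isClosed_compl.notMem_iff_infDist_pos hne).1 (by simpa using hKΩ hx)

lemma rho_int {Ω K : Set (Euc N)} {T : ℝ} (hΩ : IsOpen Ω) (hne : Ωᶜ.Nonempty) (hK : IsCompact K) (hKΩ : K ⊆ Ω)
    {f w : Euc N × ℝ → ℝ} (hf : IntegrableOn (fun p => f p * rho Ω p.1) (QT Ω T)) (hw : Continuous w) {C : ℝ} (hC : ∀ p, |w p| ≤ C)
    (hwK : ∀ p, p.1 ∉ K → w p = 0) : IntegrableOn (fun p => f p * w p) (QT Ω T) := by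
  obtain ⟨c, hc, h⟩ := rho_pos hΩ hne hK hKΩ
  have hr : Continuous fun p : Euc N × ℝ => rho Ω p.1 := (Metric.continuous_infDist_pt Ωᶜ).comp continuous_fst
  have hC0 : 0 ≤ C := (abs_nonneg _).trans (hC 0)
  have := Integrable.mul_bdd (c := C / c) hf (g := fun p => w p / rho Ω p.1)
    (hw.measurable.div hr.measurable).aestronglyMeasurable (Eventually.of_forall fun p => ?_)
  · refine this.congr (Eventually.of_forall fun p => ?_)
    by_cases hp : p.1 ∈ K
    · have : rho Ω p.1 ≠ 0 := (hc.trans_le (h _ hp)).ne'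
      simp only; field_simp
    · simp [hwK p hp]
  · by_cases hp : p.1 ∈ K
    · rw [norm_div, Real.norm_eq_abs, Real.norm_eq_abs, abs_of_pos (hc.trans_le (h _ hp))]
      exact div_le_div₀ hC0 (hC p) hc (h _ hp)
    · rw [hwK p hp]; simp; positivity

lemma pot_far {Ω E U : Set (Euc N)} {φ : Euc N → ℝ} {δ T : ℝ} (G : Geo Ω E U φ δ) (hE : IsClosed E) (hT : 0 < T)
    {m : Measure (Euc N)} [IsFiniteMeasure m] (hm : m Eᶜ = 0) :
    ∃ C, 0 ≤ C ∧ ∀ p : Euc N × ℝ, p.1 ∉ U → p.2 ≤ T → Pot (lft m) p ≤ C * q2 p.2 := by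
  obtain ⟨C, hC0, hC⟩ := Gam_far (N := N) δ T G.dpos hT
  refine ⟨C * (lft m).real univ, by positivity, fun p hp hpT => ?_⟩
  have hae : ∀ᵐ r ∂(lft m), r.1 ∈ E ∧ r.2 = 0 := lft_ae
    ((hE.measurableSet.preimage measurable_fst).inter (measurableSet_eq_fun measurable_snd measurable_const))
    (by filter_upwards [compl_mem_ae_iff.2 hm] with y hy using ⟨by simpa using hy, rfl⟩)
  have : Pot (lft m) p ≤ ∫ _, C * q2 p.2 ∂(lft m) := by
    refine integral_mono_of_nonneg (Eventually.of_forall fun r => Gam_nonneg _) (integrable_const _) ?_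
    filter_upwards [hae] with r hr
    have := (hC (p - r) (G.far _ hp _ hr.1) (by simp [hr.2, hpT])).1
    simpa [hr.2] using this
  rw [integral_const, smul_eq_mul] at this
  linarith

lemma pot_late (m : Measure (Euc N)) [IsFiniteMeasure m] {τ : ℝ} (hτ : 0 < τ) :
    ∃ C, ∀ p : Euc N × ℝ, τ ≤ p.2 → Pot (lft m) p ≤ C := by
  refine ⟨(lft m).real univ * (4 * Real.pi * τ) ^ (-(N:ℝ) / 2), fun p hp => ?_⟩
  have hae : ∀ᵐ r ∂(lft m), r.2 = 0 := lft_ae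
    (measurableSet_eq_fun measurable_snd measurable_const) (Eventually.of_forall fun _ => rfl)
  have : Pot (lft m) p ≤ ∫ _, (4 * Real.pi * τ) ^ (-(N:ℝ) / 2) ∂(lft m) := by
    refine integral_mono_of_nonneg (Eventually.of_forall fun r => Gam_nonneg _) (integrable_const _) ?_
    filter_upwards [hae] with r hr
    exact Gam_le hτ _ (by simp [hr, hp])
  rwa [integral_const, smul_eq_mul] at this

lemma slab_small {Ω : Set (Euc N)} (hΩ : IsOpen Ω) {T : ℝ} {f : Euc N × ℝ → ℝ} (hf : IntegrableOn f (QT Ω T)) :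
    Tendsto (fun n : ℕ => (src (QT Ω T) f).real (slab N (1 / ((n:ℝ) + 1)))) atTop (𝓝 0) := by
  have := src_finite hf
  have h := tendsto_measure_iInter_atTop (μ := src (QT Ω T) f) (s := fun n : ℕ => slab N (1 / ((n:ℝ) + 1)))
    (fun n => (measurableSet_slab _).nullMeasurableSet)
    (fun a b hab p hp => lt_of_lt_of_le (show p.2 < _ from hp) (one_div_le_one_div_of_le (by positivity) (by gcongr)))
    ⟨0, measure_ne_top _ _⟩
  have e : src (QT Ω T) f (⋂ n : ℕ, slab N (1 / ((n:ℝ) + 1))) = 0 := by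
    refine withDensity_absolutelyContinuous _ _ ?_
    rw [Measure.restrict_apply (MeasurableSet.iInter fun n => measurableSet_slab _)]
    convert measure_empty (μ := (volume : Measure (Euc N × ℝ)))
    ext p
    simp only [mem_inter_iff, mem_iInter, mem_empty_iff_false, iff_false, not_and]
    intro hp hpQ
    obtain ⟨n, hn⟩ := exists_nat_one_div_lt hpQ.2.1
    exact lt_asymm hn (hp n)
  rw [e] at h
  exact (ENNReal.tendsto_toReal ENNReal.zero_ne_top).comp h
end

section
open MeasureTheory Set Filter Topology
open scoped ENNReal NNReal
set_option maxSynthPendingDepth 3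
variable {N : ℕ}

lemma int_H {Q : Set (Euc N × ℝ)} (hQ : Bornology.IsBounded Q) (hm : MeasurableSet Q) {v ζ : Euc N × ℝ → ℝ}
    (hv : IntegrableOn v Q) (hζ : C2 ζ) : IntegrableOn (fun p => v p * -Hh ζ p) Q :=
  int_cont_mul hQ hm hv hζ.continuous_Hh.neg

/-- barrier data -/
structure Bar (Ω : Set (Euc N)) (T : ℝ) (g : ℝ → ℝ) (m : Measure (Euc N)) (U : Set (Euc N)) (k b G0 y0 : Euc N × ℝ → ℝ) : Prop where
  ki : IntegrableOn k (QT Ω T)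
  bi : IntegrableOn b (QT Ω T)
  Gi : IntegrableOn G0 (QT Ω T)
  yi : IntegrableOn y0 (QT Ω T)
  k0 : ∀ p, 0 ≤ k p
  b0 : ∀ p, 0 ≤ b p
  gl : ∀ᵐ p ∂volume.restrict (QT Ω T), g (k p - b p) ≤ G0 p
  y1 : ∀ᵐ p ∂volume.restrict (QT Ω T), 0 ≤ y0 p ∧ k p - b p ≤ y0 p ∧ y0 p ≤ k p
  kh : ∀ η, LocT Ω T η → ∫ p in QT Ω T, k p * -Hh η p = ∫ y, η (y, 0) ∂m
  bh : ∀ η, LocT Ω T η → (∀ p, 0 ≤ η p) → ∫ p in QT Ω T, G0 p * η p ≤ ∫ p in QT Ω T, b p * -Hh η p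
  yh : ∀ ζ, TZ Ω T ζ → ∫ p in QT Ω T, y0 p * -Hh ζ p = ∫ y, ζ (y, 0) ∂m
  bs : ∀ e, 0 < e → ∃ ε, 0 < ε ∧ ε ≤ 1 ∧ ε ≤ T ∧ ∫ p in QT Ω T ∩ slab N ε, b p ≤ e * ε
  kb : ∀ τ, 0 < τ → ∃ C, 0 ≤ C ∧ ∀ p ∈ QT Ω T, (p.1 ∉ U ∨ τ ≤ p.2) → k p ≤ C

lemma GoodG.nn {g : ℝ → ℝ} (hg : GoodG g) (r : ℝ) : 0 ≤ g r := by
  rcases le_total r 0 with h | h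
  · rw [hg.2.2 r h]
  · rw [← hg.2.2 0 le_rfl]; exact hg.2.1 h

lemma sol_lower {Ω E U : Set (Euc N)} {φ : Euc N → ℝ} {δ T : ℝ} (G : Geo Ω E U φ δ) (hΩ : IsOpen Ω) (hne : Ωᶜ.Nonempty)
    (hT : 0 < T) {g : ℝ → ℝ} (hg : GoodG g) {m0 m : Measure (Euc N)} [IsFiniteMeasure m] (hm0 : MemM1 Ω m0) (hm : m Eᶜ = 0)
    (hle : m ≤ m0) {u : Euc N × ℝ → ℝ} (hu : WeakSol Ω T g m0 u) :
    IntegrableOn (fun p => φ p.1 * g (u p)) (QT Ω T) ∧ ∃ C, 0 ≤ C ∧ ∀ᵐ p ∂volume.restrict (U ×ˢ Ioo 0 T),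
      Pot (lft m) p - Pot (src (QT Ω T) fun p => φ p.1 * g (u p)) p - C * q2 p.2 ≤ u p := by
  have iφ : IntegrableOn (fun p => φ p.1 * g (u p)) (QT Ω T) := by
    have := rho_int (w := fun p : Euc N × ℝ => φ p.1) (C := 1) hΩ hne G.cs G.ts hu.2.1 (G.cd.continuous.comp continuous_fst)
      (fun p => by rw [abs_of_nonneg (G.nn _)]; exact G.le1 _) (fun p hp => image_eq_zero_of_notMem_tsupport hp)
    simpa only [mul_comm] using this
  refine ⟨iφ, local_lower (F := fun p => g (u p)) G hΩ hT hm hu.1 iφ (fun p => hg.nn _) fun η hη h0 => ?_⟩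
  have hs := hu.2.2 (fun x t => η (x, t)) (hη.tz hΩ)
  have hK : IsCompact (Prod.fst '' tsupport η) := hη.cs.image continuous_fst
  have hKΩ : Prod.fst '' tsupport η ⊆ Ω := by rintro _ ⟨p, hp, rfl⟩; exact (hη.ts hp).1
  obtain ⟨C, -, hC⟩ := bdd_of_cs hη.c2.continuous hη.cs
  obtain ⟨D, -, hD⟩ := bdd_of_cs hη.c2.continuous_Hh (hasCompactSupport_Hh hη.cs)
  have i1 : IntegrableOn (fun p => g (u p) * η p) (QT Ω T) := rho_int hΩ hne hK hKΩ hu.2.1 hη.c2.continuous hC fun p hp => by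
    by_contra hn; exact hp ⟨p, subset_tsupport _ hn, rfl⟩
  have i2 : IntegrableOn (fun p => u p * -Hh η p) (QT Ω T) := int_bdd_mul hu.1 hη.c2.continuous_Hh.neg (C := D) (fun p => by
    rw [abs_neg]; exact hD p)
  have e := lc2 (h := fun p => -(u p) * deriv (fun t => η (p.1, t)) p.2 - u p * lap (fun y => η (y, p.2)) p.1 + η (p.1, p.2) * g (u p))
    i1 i2 1 1 (Eventually.of_forall fun p => by simp only [Hh, heatAdj]; ring)
  have hs' := e.2.symm.trans hs
  have hi : Integrable (fun y => η (y, 0)) m0 := by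
    have hc : Continuous fun y : Euc N => η (y, 0) := by have := hη.c2.continuous; fun_prop
    have : IntegrableOn (fun y => η (y, 0)) (Prod.fst '' tsupport η) m0 :=
      Measure.integrableOn_of_bounded (hm0.2.1 _ hKΩ hK).ne hc.aestronglyMeasurable (Eventually.of_forall fun y => hC (y, 0))
    refine (integrableOn_iff_integrable_of_support_subset fun y hy => ?_).1 this
    exact ⟨(y, 0), subset_tsupport _ hy, rfl⟩
  have := integral_mono_measure hle (Eventually.of_forall fun y => h0 (y, 0)) hi
  linarith

lemma exists_bar {Ω E : Set (Euc N)} {T : ℝ} (hΩ : IsOpen Ω) (hb : Bornology.IsBounded Ω) (hne : Ωᶜ.Nonempty)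
    (hE : IsCompact E) (hEΩ : E ⊆ Ω)
    (hT : 0 < T) {g : ℝ → ℝ} (hg : GoodG g) {m0 m : Measure (Euc N)} [IsFiniteMeasure m] (hm0 : MemM1 Ω m0) (hm : m Eᶜ = 0)
    (hle : m ≤ m0) {u : Euc N × ℝ → ℝ} (hu : WeakSol Ω T g m0 u) :
    ∃ U φ δ k b G0 y0, Geo Ω E U φ δ ∧ Bar Ω T g m U k b G0 y0 := by
  have hmΩ : m Ωᶜ = 0 := measure_mono_null (compl_subset_compl.2 hEΩ) hm
  have hQb := QT_bdd hb T
  have hQm := measurableSet_QT hΩ T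
  obtain ⟨U, φ, δ, G⟩ := exists_geo hΩ hE hEΩ
  obtain ⟨iφ, C1, hC1, hlow⟩ := sol_lower G hΩ hne hT hg hm0 hm hle hu
  obtain ⟨C2, hC2, hfar⟩ := pot_far G hE.isClosed hT hm
  set k := Pot (lft m) with hk
  have ki : IntegrableOn k (QT Ω T) := (pot_integrableOn (lft_t0 m) T).mono_set QT_slab
  have k0 : ∀ p, 0 ≤ k p := pot_nonneg _
  obtain ⟨y0, yi, y1, yh⟩ := hb_pde (M := 0) (F := fun _ => 0) hΩ hb hT le_rfl hmΩ ki (Eventually.of_forall k0)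
    integrableOn_zero (Eventually.of_forall fun _ => le_rfl) (fun η hη h0 => by
      simp only [zero_mul, integral_zero, add_zero]; exact (pot_lft_Q hη m).ge)
  simp only [zero_mul, integral_zero, add_zero] at yh
  obtain ⟨C3, hC3, hz⟩ := local_lower (m := 0) (v := fun p => y0 p - k p) (F := fun _ => 0) G hΩ hT (by simp) (yi.sub ki)
    (by simp) (fun _ => le_rfl) (fun η hη h0 => by
      obtain ⟨D, -, hD⟩ := bdd_of_cs hη.c2.continuous_Hh (hasCompactSupport_Hh hη.cs)
      have a1 := int_H hQb hQm yi hη.c2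
      have a2 := int_H hQb hQm ki hη.c2
      have := lc2 (h := fun p => (y0 p - k p) * -Hh η p) a1 a2 1 (-1) (Eventually.of_forall fun p => by ring)
      rw [this.2, yh η (hη.tz hΩ), pot_lft_Q hη m]; simp)
  have hz' : ∀ᵐ p ∂volume.restrict (U ×ˢ Ioo 0 T), k p - C3 * q2 p.2 ≤ y0 p := by
    filter_upwards [hz] with p hp
    have h1 := pot_nonneg (lft (0 : Measure (Euc N))) p
    have h2 : Pot (src (QT Ω T) fun p => φ p.1 * 0) p = 0 := by simp [Pot, src]
    rw [h2] at hp; linarith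
  set Ck := C2 * q2 T with hCk
  have hCk0 : 0 ≤ Ck := mul_nonneg hC2 (q2_nonneg _)
  have iCk : IntegrableOn (fun _ => g Ck) (QT Ω T) := integrableOn_const hQb.measure_lt_top.ne
  set κ1 := src (QT Ω T) fun p => φ p.1 * g (u p) with hκ1
  set κ2 := src (QT Ω T) fun _ => g Ck with hκ2
  have := src_finite iφ
  have := src_finite iCk
  have t1 : ∀ᵐ r ∂κ1, 0 ≤ r.2 := src_t0 hΩ T _
  have t2 : ∀ᵐ r ∂κ2, 0 ≤ r.2 := src_t0 hΩ T _
  set C := C1 + C2 + C3 with hC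
  have i1 : IntegrableOn (Pot κ1) (QT Ω T) := (pot_integrableOn t1 T).mono_set QT_slab
  have i2 : IntegrableOn (Pot κ2) (QT Ω T) := (pot_integrableOn t2 T).mono_set QT_slab
  have i3 := q2_integrableOn hQb
  have n1 := pot_nonneg κ1
  have n2 := pot_nonneg κ2
  have split : ∀ P : Euc N × ℝ → Prop, (∀ᵐ p ∂volume.restrict (U ×ˢ Ioo 0 T), P p) → (∀ p ∈ QT Ω T, p.1 ∉ U → P p) →
      ∀ᵐ p ∂volume.restrict (QT Ω T), P p := by
    intro P h1 h2
    rw [ae_restrict_iff' (G.Uo.measurableSet.prod measurableSet_Ioo)] at h1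
    rw [ae_restrict_iff' hQm]
    filter_upwards [h1] with p hp hpQ
    by_cases hpU : p.1 ∈ U
    · exact hp ⟨hpU, hpQ.2⟩
    · exact h2 p hpQ hpU
  refine ⟨U, φ, δ, k, fun p => Pot κ1 p + Pot κ2 p + C * q2 p.2, fun p => φ p.1 * g (u p) + g Ck, y0, G,
    ki, (i1.add i2).add (i3.const_mul C), iφ.add iCk, yi, k0, fun p => ?_, ?_, ?_, fun η hη => pot_lft_Q hη m, ?_, yh, ?_, ?_⟩
  · have := n1 p; have := n2 p; have := q2_nonneg p.2; positivity
  · refine split _ ?_ ?_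
    · filter_upwards [hlow, ae_restrict_mem (G.Uo.measurableSet.prod measurableSet_Ioo)] with p hp hpU
      have h1 : g (k p - (Pot κ1 p + Pot κ2 p + C * q2 p.2)) ≤ g (u p) := hg.2.1 (by
        have := n2 p
        have := mul_nonneg hC2 (q2_nonneg p.2)
        have := mul_nonneg hC3 (q2_nonneg p.2)
        rw [hC]; linarith)
      rw [G.oneU hpU.1, one_mul]
      linarith [hg.nn Ck]
    · intro p hp hpU
      have h1 : g (k p - (Pot κ1 p + Pot κ2 p + C * q2 p.2)) ≤ g Ck := hg.2.1 (by
        have a1 := hfar p hpU hp.2.2.le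
        have a2 := mul_le_mul_of_nonneg_left (q2_mono hp.2.2.le) hC2
        have := n1 p
        have := n2 p
        have : 0 ≤ C * q2 p.2 := mul_nonneg (by positivity) (q2_nonneg p.2)
        linarith)
      linarith [mul_nonneg (G.nn p.1) (hg.nn (u p))]
  · have h2 : ∀ᵐ p ∂volume.restrict (QT Ω T), k p - (Pot κ1 p + Pot κ2 p + C * q2 p.2) ≤ y0 p := by
      rw [ae_restrict_iff' hQm] at y1
      have y2 := ae_restrict_of_ae (s := U ×ˢ Ioo 0 T) y1
      rw [← ae_restrict_iff' hQm] at y1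
      have : ∀ᵐ p ∂volume.restrict (QT Ω T), k p - C * q2 p.2 ≤ max (y0 p) 0 := by
        refine split _ ?_ ?_
        · filter_upwards [hz'] with p hp
          refine le_trans ?_ (le_max_left _ _)
          have := mul_nonneg hC2 (q2_nonneg p.2)
          have := mul_nonneg hC1 (q2_nonneg p.2)
          rw [hC]; linarith
        · intro p hp hpU
          refine le_trans ?_ (le_max_right _ _)
          have a1 := hfar p hpU hp.2.2.le
          have := mul_nonneg hC3 (q2_nonneg p.2)
          have := mul_nonneg hC1 (q2_nonneg p.2)
          rw [hC]; linarith
      filter_upwards [this, y1] with p h1 h2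
      rw [max_eq_left h2.1] at h1
      linarith [n1 p, n2 p]
    filter_upwards [h2, y1] with p a1 a2 using ⟨a2.1, a1, a2.2⟩
  · intro η hη h0
    have j1 := int_H hQb hQm i1 hη.c2
    have j2 := int_H hQb hQm i2 hη.c2
    have j3 := int_H hQb hQm i3 hη.c2
    have a := lc3 (h := fun p => (Pot κ1 p + Pot κ2 p + C * q2 p.2) * -Hh η p) j1 j2 j3 1 1 C (Eventually.of_forall fun p => by ring)
    have a' := lc2 (h := fun p => (φ p.1 * g (u p) + g Ck) * η p) (int_cont_mul hQb hQm iφ hη.c2.continuous)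
      (int_cont_mul hQb hQm iCk hη.c2.continuous) 1 1 (Eventually.of_forall fun p => by ring)
    rw [a.2, a'.2, pot_src_Q hΩ hη iφ (fun p => mul_nonneg (G.nn _) (hg.nn _)), pot_src_Q hΩ hη iCk (fun p => hg.nn _)]
    have := mul_nonneg (show 0 ≤ C by positivity) (q2_Q hη h0)
    linarith
  · intro e he
    have s1 := slab_small hΩ iφ
    have s2 := slab_small hΩ iCk
    set vQ := volume.real (QT Ω T) with hvQ
    have s3 : Tendsto (fun n : ℕ => 1 / ((n:ℝ) + 1)) atTop (𝓝 0) := tendsto_one_div_add_atTop_nhds_zero_nat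
    have s4 := (s1.add s2).add (s3.const_mul (C * vQ))
    simp only [add_zero, mul_zero] at s4
    obtain ⟨n, hn1, hn2⟩ := ((s4.eventually (gt_mem_nhds he)).and (s3.eventually (gt_mem_nhds hT))).exists
    set ε := 1 / ((n:ℝ) + 1) with hε
    have hε0 : 0 < ε := by positivity
    have hQε : MeasurableSet (QT Ω T ∩ slab N ε) := hQm.inter (measurableSet_slab _)
    refine ⟨ε, hε0, ?_, hn2.le, ?_⟩
    · rw [hε]; exact (div_le_one (by positivity)).2 (by linarith [n.cast_nonneg (α := ℝ)])
    have m1 := i1.mono_set (inter_subset_left (t := slab N ε))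
    have m2 := i2.mono_set (inter_subset_left (t := slab N ε))
    have m3 := i3.mono_set (inter_subset_left (t := slab N ε))
    have a := lc3 (h := fun p => Pot κ1 p + Pot κ2 p + C * q2 p.2) m1 m2 m3 1 1 C (Eventually.of_forall fun p => by ring)
    rw [a.2]
    have b1 : ∫ p in QT Ω T ∩ slab N ε, Pot κ1 p ≤ ∫ p in slab N ε, Pot κ1 p :=
      setIntegral_mono_set (pot_integrableOn t1 ε) (Eventually.of_forall n1) inter_subset_right.eventuallyLE
    have b2 : ∫ p in QT Ω T ∩ slab N ε, Pot κ2 p ≤ ∫ p in slab N ε, Pot κ2 p :=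
      setIntegral_mono_set (pot_integrableOn t2 ε) (Eventually.of_forall n2) inter_subset_right.eventuallyLE
    have b3 : ∫ p in QT Ω T ∩ slab N ε, q2 p.2 ≤ ∫ p in QT Ω T ∩ slab N ε, ε ^ 2 := by
      refine setIntegral_mono_on m3 (integrableOn_const ?_) hQε fun p hp => ?_
      · exact (measure_mono inter_subset_left |>.trans_lt hQb.measure_lt_top).ne
      · have h1 : p.2 < ε := hp.2
        rw [← q2_of_nonneg hε0.le]; exact q2_mono h1.le
    have b4 : ∫ p in QT Ω T ∩ slab N ε, ε ^ 2 ≤ vQ * ε ^ 2 := by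
      rw [setIntegral_const, smul_eq_mul]
      refine mul_le_mul_of_nonneg_right (measureReal_mono inter_subset_left hQb.measure_lt_top.ne) (by positivity)
    have b5 := mul_le_mul_of_nonneg_left (b3.trans b4) (show 0 ≤ C by positivity)
    have c1 := pot_slab t1 (ε := ε)
    have c2 := pot_slab t2 (ε := ε)
    have c3 := mul_lt_mul_of_pos_right hn1 hε0
    nlinarith
  · intro τ hτ
    obtain ⟨D, hD⟩ := pot_late m hτ
    refine ⟨max D Ck, hCk0.trans (le_max_right _ _), fun p hp h => ?_⟩
    rcases h with h | h
    · refine le_trans ((hfar p h hp.2.2.le).trans ?_) (le_max_right _ _)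
      exact mul_le_mul_of_nonneg_left (q2_mono hp.2.2.le) hC2
    · exact (hD p h).trans (le_max_left _ _)
end

section
open MeasureTheory Set Filter Topology
open scoped ENNReal NNReal
set_option maxSynthPendingDepth 3
variable {N : ℕ}

/-- Lipschitz regularization -/
def gn (g : ℝ → ℝ) (n : ℕ) (r : ℝ) : ℝ := ⨅ s, (g s + n * |r - s|)

section
variable {g : ℝ → ℝ}

lemma gn_le (hg : GoodG g) (n : ℕ) (r s : ℝ) : gn g n r ≤ g s + n * |r - s| :=
  ciInf_le ⟨0, by rintro _ ⟨s, rfl⟩; have := hg.nn s; simp only; positivity⟩ s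

lemma le_gn {n : ℕ} {r c : ℝ} (h : ∀ s, c ≤ g s + n * |r - s|) : c ≤ gn g n r := le_ciInf h

lemma gn_nn (hg : GoodG g) (n : ℕ) (r : ℝ) : 0 ≤ gn g n r := le_gn fun s => by have := hg.nn s; positivity

lemma gn_le_g (hg : GoodG g) (n : ℕ) (r : ℝ) : gn g n r ≤ g r := by simpa using gn_le hg n r r

lemma gn_succ (hg : GoodG g) (n : ℕ) (r : ℝ) : gn g n r ≤ gn g (n + 1) r := le_gn fun s => by
  refine (gn_le hg n r s).trans ?_
  push_cast
  nlinarith [abs_nonneg (r - s)]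

lemma gn_lip (hg : GoodG g) (n : ℕ) (r r' : ℝ) : gn g n r ≤ gn g n r' + n * |r - r'| := by
  rw [← sub_le_iff_le_add]
  refine le_gn fun s => ?_
  have h1 := gn_le hg n r s
  have h2 := mul_le_mul_of_nonneg_left (abs_sub_le r r' s) (n.cast_nonneg (α := ℝ))
  linarith

lemma gn_mono (hg : GoodG g) (n : ℕ) : Monotone (gn g n) := fun r r' h => le_gn fun s => by
  have h1 := gn_le hg n r (s - (r' - r))
  rw [show r - (s - (r' - r)) = r' - s by ring] at h1
  have h2 := hg.2.1 (show s - (r' - r) ≤ s by linarith)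
  linarith

lemma gn_zero (hg : GoodG g) (n : ℕ) {r : ℝ} (hr : r ≤ 0) : gn g n r = 0 :=
  le_antisymm ((gn_le_g hg n r).trans (hg.2.2 r hr).le) (gn_nn hg n r)

lemma gn_cont (hg : GoodG g) (n : ℕ) : Continuous (gn g n) := by
  refine (LipschitzWith.of_dist_le_mul (K := (n : ℝ≥0)) fun r r' => ?_).continuous
  rw [Real.dist_eq, Real.dist_eq, abs_sub_le_iff]
  have h1 := gn_lip hg n r r'
  have h2 := gn_lip hg n r' r
  rw [abs_sub_comm] at h2
  constructor <;> simp only [NNReal.coe_natCast] <;> linarith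

lemma gn_low (n : ℕ) (hg : GoodG g) (hn : 0 < n) (r : ℝ) : g (r - g r / n) ≤ gn g n r := le_gn fun s => by
  have hn' : (0:ℝ) < n := by exact_mod_cast hn
  rcases le_total (r - g r / n) s with h | h
  · have := hg.2.1 h
    have : 0 ≤ n * |r - s| := by positivity
    linarith
  · have h1 : g r / n ≤ r - s := by linarith
    rw [div_le_iff₀ hn'] at h1
    have h2 := le_abs_self (r - s)
    have h3 : g (r - g r / n) ≤ g r := hg.2.1 (by have := div_nonneg (hg.nn r) hn'.le; linarith)
    have := hg.nn s
    nlinarith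

lemma gn_tendsto (hg : GoodG g) {y : ℕ → ℝ} {Y : ℝ} (h : Tendsto y atTop (𝓝 Y)) :
    Tendsto (fun n => gn g n (y n)) atTop (𝓝 (g Y)) := by
  have h1 : Tendsto (fun n => g (y n)) atTop (𝓝 (g Y)) := (hg.1.tendsto Y).comp h
  have h2 : Tendsto (fun n => y n - g (y n) / n) atTop (𝓝 Y) := by
    simpa using h.sub (h1.div_atTop tendsto_natCast_atTop_atTop)
  refine tendsto_of_tendsto_of_tendsto_of_le_of_le' ((hg.1.tendsto Y).comp h2) h1 ?_ ?_
  · filter_upwards [eventually_gt_atTop 0] with n hn using gn_low n hg hn _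
  · exact Eventually.of_forall fun n => gn_le_g hg n _
end

lemma dct {Q : Set (Euc N × ℝ)} (hQ : Bornology.IsBounded Q) (hm : MeasurableSet Q) {y : ℕ → Euc N × ℝ → ℝ} {Y B : Euc N × ℝ → ℝ}
    (hB : IntegrableOn B Q) (hy : ∀ j, IntegrableOn (y j) Q) (hb : ∀ j, ∀ᵐ p ∂volume.restrict Q, |y j p| ≤ B p)
    (hl : ∀ᵐ p ∂volume.restrict Q, Tendsto (fun j => y j p) atTop (𝓝 (Y p))) :
    IntegrableOn Y Q ∧ ∀ w, Continuous w → Tendsto (fun j => ∫ p in Q, y j p * w p) atTop (𝓝 (∫ p in Q, Y p * w p)) := by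
  constructor
  · refine Integrable.mono' hB (aestronglyMeasurable_of_tendsto_ae _ (fun j => (hy j).aestronglyMeasurable) hl) ?_
    filter_upwards [hl, ae_all_iff.2 hb] with p h1 h2
    exact le_of_tendsto h1.abs (Eventually.of_forall h2)
  · intro w hw
    refine tendsto_integral_of_dominated_convergence (fun p => B p * |w p|) (fun j => (int_cont_mul hQ hm (hy j) hw).aestronglyMeasurable)
      (int_cont_mul hQ hm hB hw.abs) (fun j => ?_) ?_
    · filter_upwards [hb j] with p hp
      rw [Real.norm_eq_abs, abs_mul]
      exact mul_le_mul_of_nonneg_right hp (abs_nonneg _)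
    · filter_upwards [hl] with p hp using hp.mul_const _

lemma vit {α : Type*} [MeasurableSpace α] {μ : Measure α} [IsFiniteMeasure μ] {f : ℕ → α → ℝ} {F : α → ℝ}
    (hf : ∀ n, Integrable (f n) μ) (h0 : ∀ᵐ p ∂μ, ∀ n, 0 ≤ f n p) (hl : ∀ᵐ p ∂μ, Tendsto (fun n => f n p) atTop (𝓝 (F p)))
    (h : ∀ e > 0, ∃ A, MeasurableSet A ∧ (∀ n, ∫ p in A, f n p ∂μ ≤ e) ∧ ∃ C, ∀ᵐ p ∂μ, ∀ n, p ∉ A → f n p ≤ C) :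
    Integrable F μ ∧ Tendsto (fun n => ∫ p, |f n p - F p| ∂μ) atTop (𝓝 0) := by
  have hFm : AEStronglyMeasurable F μ := aestronglyMeasurable_of_tendsto_ae _ (fun j => (hf j).aestronglyMeasurable) hl
  have F0 : ∀ᵐ p ∂μ, 0 ≤ F p := by
    filter_upwards [h0, hl] with p h1 h2 using ge_of_tendsto' h2 h1
  have fatou : ∀ A, MeasurableSet A → ∀ e : ℝ, (∀ n, ∫ p in A, f n p ∂μ ≤ e) → ∫⁻ p in A, ENNReal.ofReal (F p) ∂μ ≤ ENNReal.ofReal e := by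
    intro A hA e he
    have : ∀ᵐ p ∂μ.restrict A, ENNReal.ofReal (F p) = liminf (fun n => ENNReal.ofReal (f n p)) atTop := by
      filter_upwards [ae_restrict_of_ae hl] with p hp
      exact ((ENNReal.continuous_ofReal.tendsto _).comp hp).liminf_eq.symm
    rw [lintegral_congr_ae this]
    refine (lintegral_liminf_le' fun n => (hf n).aestronglyMeasurable.aemeasurable.ennreal_ofReal.restrict).trans ?_
    refine liminf_le_of_le (by isBoundedDefault) fun b hb => ?_
    obtain ⟨n, hn⟩ := hb.exists
    refine hn.trans ?_
    rw [← ofReal_integral_eq_lintegral_ofReal (hf n).integrableOn (ae_restrict_of_ae (h0.mono fun p hp => hp n))]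
    exact ENNReal.ofReal_le_ofReal (he n)
  have hF : Integrable F μ := by
    obtain ⟨A, hA, hA1, C, hC⟩ := h 1 one_pos
    have i1 : IntegrableOn F A μ := by
      refine ⟨hFm.restrict, (hasFiniteIntegral_iff_ofReal (ae_restrict_of_ae F0)).2 ?_⟩
      exact (fatou A hA 1 hA1).trans_lt ENNReal.ofReal_lt_top
    have i2 : IntegrableOn F Aᶜ μ := by
      refine Integrable.of_bound hFm.restrict C ?_
      filter_upwards [ae_restrict_of_ae hl, ae_restrict_of_ae hC, ae_restrict_of_ae F0, ae_restrict_mem hA.compl] with p a1 a2 a3 a4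
      rw [Real.norm_eq_abs, abs_of_nonneg a3]
      exact le_of_tendsto' a1 fun n => a2 n a4
    have := i1.union i2
    rwa [union_compl_self, integrableOn_univ] at this
  refine ⟨hF, ?_⟩
  rw [Metric.tendsto_atTop]
  intro e he
  obtain ⟨A, hA, hA1, C, hC⟩ := h (e / 4) (by positivity)
  have hFA : ∫ p in A, F p ∂μ ≤ e / 4 := by
    rw [integral_eq_lintegral_of_nonneg_ae (ae_restrict_of_ae F0) hFm.restrict]
    exact ENNReal.toReal_le_of_le_ofReal (by positivity) (fatou A hA _ hA1)
  have d : Tendsto (fun n => ∫ p in Aᶜ, |f n p - F p| ∂μ) atTop (𝓝 (∫ p in Aᶜ, (0:ℝ) ∂μ)) := by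
    refine tendsto_integral_of_dominated_convergence (fun _ => 2 * C) (fun n => ((hf n).sub hF).abs.aestronglyMeasurable.restrict)
      (integrable_const _) (fun n => ?_) ?_
    · filter_upwards [ae_restrict_of_ae hl, ae_restrict_of_ae hC, ae_restrict_of_ae F0, ae_restrict_of_ae h0, ae_restrict_mem hA.compl] with p a1 a2 a3 a5 a4
      have := le_of_tendsto' a1 fun n => a2 n a4
      rw [Real.norm_eq_abs, abs_abs, abs_le]
      constructor <;> linarith [a5 n, a2 n a4]
    · filter_upwards [ae_restrict_of_ae hl] with p hp
      simpa using (hp.sub_const (F p)).abs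
  rw [integral_zero, Metric.tendsto_atTop] at d
  obtain ⟨n0, hn0⟩ := d (e / 2) (by positivity)
  refine ⟨n0, fun n hn => ?_⟩
  have h1 := hn0 n hn
  rw [Real.dist_eq, sub_zero, abs_of_nonneg (integral_nonneg fun p => abs_nonneg _)] at h1 ⊢
  rw [← integral_add_compl (f := fun p => |f n p - F p|) hA ((hf n).sub hF).abs]
  have h2 : ∫ p in A, |f n p - F p| ∂μ ≤ ∫ p in A, (f n p + F p) ∂μ := by
    refine integral_mono_ae ((hf n).sub hF).abs.integrableOn ((hf n).add hF).integrableOn ?_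
    filter_upwards [ae_restrict_of_ae F0, ae_restrict_of_ae h0] with p a1 a2
    rw [abs_le]; constructor <;> linarith [a2 n]
  rw [integral_add (hf n).integrableOn hF.integrableOn] at h2
  have := hA1 n
  linarith
end

section
open MeasureTheory Set Filter Topology
open scoped ENNReal NNReal
set_option maxSynthPendingDepth 3
variable {N : ℕ}

/-- iteration state -/
structure IterS (Ω : Set (Euc N)) (T : ℝ) (g : ℝ → ℝ) (m : Measure (Euc N)) (k b y0 : Euc N × ℝ → ℝ) (n : ℕ)
    (y f : Euc N × ℝ → ℝ) : Prop where
  yi : IntegrableOn y (QT Ω T)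
  fi : IntegrableOn f (QT Ω T)
  yb : ∀ᵐ p ∂volume.restrict (QT Ω T), k p - b p ≤ y p ∧ y p ≤ y0 p
  fg : ∀ᵐ p ∂volume.restrict (QT Ω T), f p ≤ gn g n (y p)
  eq : ∀ ζ, TZ Ω T ζ → (∫ p in QT Ω T, y p * -Hh ζ p) + (∫ p in QT Ω T, f p * ζ p) = ∫ y, ζ (y, 0) ∂m

lemma gn_bd {g : ℝ → ℝ} (hg : GoodG g) (n : ℕ) {r k : ℝ} (h : r ≤ k) (hk : 0 ≤ k) : gn g n r ≤ n * k := by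
  have h1 := gn_mono hg n h
  have h2 := gn_lip hg n k 0
  rw [gn_zero hg n le_rfl, sub_zero, abs_of_nonneg hk] at h2
  linarith

section
variable {Ω U : Set (Euc N)} {T : ℝ} {g : ℝ → ℝ} {m : Measure (Euc N)} {k b G0 y0 : Euc N × ℝ → ℝ}

lemma gn_int (hg : GoodG g) (n : ℕ) (B : Bar Ω T g m U k b G0 y0) {y : Euc N × ℝ → ℝ} (hy : IntegrableOn y (QT Ω T))
    (hyb : ∀ᵐ p ∂volume.restrict (QT Ω T), k p - b p ≤ y p ∧ y p ≤ y0 p) : IntegrableOn (fun p => gn g n (y p)) (QT Ω T) := by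
  refine Integrable.mono' (B.ki.const_mul (n:ℝ)) ((gn_cont hg n).comp_aestronglyMeasurable hy.aestronglyMeasurable) ?_
  filter_upwards [hyb, B.y1] with p h1 h2
  rw [Real.norm_eq_abs, abs_of_nonneg (gn_nn hg n _)]
  exact gn_bd hg n (h1.2.trans h2.2.2) (B.k0 p)

lemma step (hΩ : IsOpen Ω) (hb : Bornology.IsBounded Ω) (hT : 0 < T) (hg : GoodG g) (B : Bar Ω T g m U k b G0 y0) {n : ℕ}
    {y f : Euc N × ℝ → ℝ} (I : IterS Ω T g m k b y0 n y f) : ∃ y' f', IterS Ω T g m k b y0 n y' f' ∧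
      ∀ᵐ p ∂volume.restrict (QT Ω T), y' p ≤ y p ∧ f' p = gn g n (y p) - n * (y p - y' p) := by
  have hQb := QT_bdd hb T
  have hQm := measurableSet_QT hΩ T
  have ig := gn_int hg n B I.yi I.yb
  have il : IntegrableOn (fun p => k p - b p) (QT Ω T) := B.ki.sub B.bi
  obtain ⟨q, qi, q1, qh⟩ := hb_pde (m := 0) (M := n) (d := fun p => y p - (k p - b p)) (F := fun p => gn g n (y p) - f p)
    hΩ hb hT n.cast_nonneg (by simp) (I.yi.sub il) (I.yb.mono fun p hp => by linarith [hp.1])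
    (ig.sub I.fi) (I.fg.mono fun p hp => by linarith) (fun η hη h0 => by
      have e1 := I.eq η (hη.tz hΩ)
      have e2 := B.kh η hη
      have e3 := B.bh η hη h0
      have a1 := int_H hQb hQm I.yi hη.c2
      have a2 := int_H hQb hQm B.ki hη.c2
      have a3 := int_H hQb hQm B.bi hη.c2
      have c1 := int_cont_mul hQb hQm I.fi hη.c2.continuous
      have c2 := int_cont_mul hQb hQm B.Gi hη.c2.continuous
      have c3 := int_cont_mul hQb hQm ig hη.c2.continuous
      have c4 := int_cont_mul hQb hQm (I.yi.sub il) hη.c2.continuous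
      have u1 := lc3 (h := fun p => (y p - (k p - b p)) * -Hh η p) a1 a2 a3 1 (-1) 1 (Eventually.of_forall fun p => by ring)
      have u2 := lc2 (h := fun p => (y p - (k p - b p)) * (-Hh η p + n * η p)) u1.1 c4 1 n (Eventually.of_forall fun p => by
        simp only [Pi.sub_apply]; ring)
      have u3 := lc2 (h := fun p => (gn g n (y p) - f p) * η p) c3 c1 1 (-1) (Eventually.of_forall fun p => by ring)
      have u4 := lc2 (h := fun p => G0 p * η p + n * ((y p - (k p - b p)) * η p)) c2 c4 1 n (Eventually.of_forall fun p => by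
        simp only [Pi.sub_apply]; ring)
      have u5 : ∫ p in QT Ω T, gn g n (y p) * η p ≤ ∫ p in QT Ω T, (G0 p * η p + n * ((y p - (k p - b p)) * η p)) := by
        refine integral_mono_ae c3 u4.1 ?_
        filter_upwards [B.gl, I.yb] with p h1 h2
        have h3 := gn_lip hg n (y p) (k p - b p)
        rw [abs_of_nonneg (by linarith [h2.1])] at h3
        have h4 := gn_le_g hg n (k p - b p)
        have := mul_le_mul_of_nonneg_right (h3.trans (by linarith : _ ≤ G0 p + n * (y p - (k p - b p)))) (h0 p)
        linarith
      rw [integral_zero_measure, u3.2, u2.2, u1.2]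
      rw [u4.2] at u5
      linarith)
  have i1 : IntegrableOn (fun p => n * q p) (QT Ω T) := qi.const_mul _
  refine ⟨fun p => y p - q p, fun p => gn g n (y p) - n * q p, ⟨I.yi.sub qi, ig.sub i1, ?_, ?_, ?_⟩, ?_⟩
  · filter_upwards [I.yb, q1] with p h1 h2
    constructor <;> linarith [h1.2, h2.1, h2.2]
  · filter_upwards [q1] with p h2
    have h3 := gn_lip hg n (y p) (y p - q p)
    rw [sub_sub_cancel, abs_of_nonneg h2.1] at h3
    linarith
  · intro ζ hζ
    have e1 := I.eq ζ hζ
    have e2 := qh ζ hζ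
    have a1 := int_H hQb hQm I.yi hζ.c2
    have a2 := int_H hQb hQm qi hζ.c2
    have c0 := int_cont_mul hQb hQm qi hζ.c2.continuous
    have c1 := int_cont_mul hQb hQm I.fi hζ.c2.continuous
    have c3 := int_cont_mul hQb hQm ig hζ.c2.continuous
    have u1 := lc2 (h := fun p => (y p - q p) * -Hh ζ p) a1 a2 1 (-1) (Eventually.of_forall fun p => by ring)
    have u2 := lc2 (h := fun p => (gn g n (y p) - n * q p) * ζ p) c3 c0 1 (-n) (Eventually.of_forall fun p => by ring)
    have u3 := lc2 (h := fun p => q p * (-Hh ζ p + n * ζ p)) a2 c0 1 n (Eventually.of_forall fun p => by ring)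
    have u4 := lc2 (h := fun p => (gn g n (y p) - f p) * ζ p) c3 c1 1 (-1) (Eventually.of_forall fun p => by ring)
    rw [u1.2, u2.2]
    rw [u3.2, u4.2, integral_zero_measure] at e2
    linarith
  · filter_upwards [q1] with p h2
    exact ⟨by linarith [h2.1], by ring⟩

lemma inner_loop (hΩ : IsOpen Ω) (hb : Bornology.IsBounded Ω) (hT : 0 < T) (hg : GoodG g) (B : Bar Ω T g m U k b G0 y0) {n : ℕ}
    {y f : Euc N × ℝ → ℝ} (I : IterS Ω T g m k b y0 n y f) : ∃ y', IterS Ω T g m k b y0 n y' (fun p => gn g n (y' p)) ∧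
      ∀ᵐ p ∂volume.restrict (QT Ω T), y' p ≤ y p := by
  have hQb := QT_bdd hb T
  have hQm := measurableSet_QT hΩ T
  let S := {a : (Euc N × ℝ → ℝ) × (Euc N × ℝ → ℝ) // IterS Ω T g m k b y0 n a.1 a.2}
  have hst : ∀ a : S, ∃ a' : S, ∀ᵐ p ∂volume.restrict (QT Ω T), a'.1.1 p ≤ a.1.1 p ∧
      a'.1.2 p = gn g n (a.1.1 p) - n * (a.1.1 p - a'.1.1 p) := fun a => by
    obtain ⟨y', f', h1, h2⟩ := step hΩ hb hT hg B a.2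
    exact ⟨⟨(y', f'), h1⟩, h2⟩
  choose nx hnx using hst
  let sq : ℕ → S := fun j => Nat.rec ⟨(y, f), I⟩ (fun _ a => nx a) j
  have hsq : ∀ j, ∀ᵐ p ∂volume.restrict (QT Ω T), (sq (j+1)).1.1 p ≤ (sq j).1.1 p ∧
      (sq (j+1)).1.2 p = gn g n ((sq j).1.1 p) - n * ((sq j).1.1 p - (sq (j+1)).1.1 p) := fun j => hnx (sq j)
  have hyb : ∀ᵐ p ∂volume.restrict (QT Ω T), ∀ j, k p - b p ≤ (sq j).1.1 p ∧ (sq j).1.1 p ≤ y0 p := ae_all_iff.2 fun j => (sq j).2.yb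
  set Y : Euc N × ℝ → ℝ := fun p => ⨅ j, (sq j).1.1 p with hY
  have hl : ∀ᵐ p ∂volume.restrict (QT Ω T), Tendsto (fun j => (sq j).1.1 p) atTop (𝓝 (Y p)) ∧ ∀ j, Y p ≤ (sq j).1.1 p := by
    filter_upwards [hyb, ae_all_iff.2 hsq] with p h1 h2
    have hbd : BddBelow (range fun j => (sq j).1.1 p) := ⟨k p - b p, by rintro _ ⟨j, rfl⟩; exact (h1 j).1⟩
    exact ⟨tendsto_atTop_ciInf (antitone_nat_of_succ_le fun j => (h2 j).1) hbd, fun j => ciInf_le hbd j⟩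
  have hYb : ∀ᵐ p ∂volume.restrict (QT Ω T), k p - b p ≤ Y p ∧ Y p ≤ y0 p := by
    filter_upwards [hyb, hl] with p h1 h2
    exact ⟨ge_of_tendsto' h2.1 fun j => (h1 j).1, (h2.2 0).trans (h1 0).2⟩
  have D1 := dct hQb hQm (y := fun j => (sq j).1.1) (B.ki.add B.bi) (fun j => (sq j).2.yi) (fun j => by
    filter_upwards [hyb, B.y1] with p h1 h2
    rw [abs_le]; simp only [Pi.add_apply]
    constructor <;> linarith [h1 j, B.k0 p, B.b0 p]) (hl.mono fun p hp => hp.1)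
  have D2 := dct hQb hQm (y := fun j => (sq (j+1)).1.2) (Y := fun p => gn g n (Y p)) ((B.ki.add B.bi).const_mul (n:ℝ)) (fun j => (sq (j+1)).2.fi) (fun j => by
    filter_upwards [hyb, B.y1, hsq j] with p h1 h2 h3
    rw [h3.2, abs_le]; simp only [Pi.add_apply]
    have a1 := gn_bd hg n ((h1 j).2.trans h2.2.2) (B.k0 p)
    have a2 := gn_nn hg n ((sq j).1.1 p)
    have a3 : (n:ℝ) * ((sq j).1.1 p - (sq (j+1)).1.1 p) ≤ n * b p := mul_le_mul_of_nonneg_left (by linarith [h1 j, h1 (j+1)]) n.cast_nonneg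
    have a4 : 0 ≤ (n:ℝ) * ((sq j).1.1 p - (sq (j+1)).1.1 p) := mul_nonneg n.cast_nonneg (by linarith [h3.1])
    have a5 := mul_nonneg (n.cast_nonneg (α := ℝ)) (B.k0 p)
    have a6 := mul_nonneg (n.cast_nonneg (α := ℝ)) (B.b0 p)
    constructor <;> linarith) (by
    filter_upwards [hl, ae_all_iff.2 hsq] with p h1 h2
    simp only [fun j => (h2 j).2]
    have t1 := ((gn_cont hg n).tendsto (Y p)).comp h1.1
    have t2 := (h1.1.sub (h1.1.comp (tendsto_add_atTop_nat 1))).const_mul (n:ℝ)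
    simpa using t1.sub t2)
  refine ⟨Y, ⟨D1.1, D2.1, hYb, Eventually.of_forall fun p => le_rfl, fun ζ hζ => ?_⟩, hl.mono fun p hp => hp.2 0⟩
  have t1 := ((D1.2 (fun p => -Hh ζ p) hζ.c2.continuous_Hh.neg).comp (tendsto_add_atTop_nat 1)).add (D2.2 ζ hζ.c2.continuous)
  refine tendsto_nhds_unique t1 ?_
  simp only [Function.comp_apply, fun j => (sq (j+1)).2.eq ζ hζ]
  exact tendsto_const_nhds

lemma outer_loop (hΩ : IsOpen Ω) (hb : Bornology.IsBounded Ω) (hT : 0 < T) (hg : GoodG g) (B : Bar Ω T g m U k b G0 y0) :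
    ∃ Y : ℕ → Euc N × ℝ → ℝ, ∀ n, IterS Ω T g m k b y0 n (Y n) (fun p => gn g n (Y n p)) ∧
      ∀ᵐ p ∂volume.restrict (QT Ω T), Y (n+1) p ≤ Y n p := by
  have I0 : IterS Ω T g m k b y0 0 y0 (fun _ => 0) := ⟨B.yi, integrableOn_zero, B.y1.mono fun p hp => ⟨hp.2.1, le_rfl⟩,
    Eventually.of_forall fun p => gn_nn hg _ _, fun ζ hζ => by simp only [zero_mul, integral_zero, add_zero]; exact B.yh ζ hζ⟩
  obtain ⟨Y0, hY0, -⟩ := inner_loop hΩ hb hT hg B I0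
  let S := fun n => {y : Euc N × ℝ → ℝ // IterS Ω T g m k b y0 n y (fun p => gn g n (y p))}
  have hst : ∀ n, ∀ a : S n, ∃ a' : S (n+1), ∀ᵐ p ∂volume.restrict (QT Ω T), a'.1 p ≤ a.1 p := fun n a => by
    have I : IterS Ω T g m k b y0 (n+1) a.1 (fun p => gn g n (a.1 p)) :=
      ⟨a.2.yi, a.2.fi, a.2.yb, Eventually.of_forall fun p => gn_succ hg n _, a.2.eq⟩
    obtain ⟨y', h1, h2⟩ := inner_loop hΩ hb hT hg B I
    exact ⟨⟨y', h1⟩, h2⟩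
  choose nx hnx using hst
  let sq : ∀ n, S n := fun n => Nat.rec (motive := S) ⟨Y0, hY0⟩ (fun n a => nx n a) n
  exact ⟨fun n => (sq n).1, fun n => ⟨(sq n).2, hnx n (sq n)⟩⟩
end
end

section
open MeasureTheory Set Filter Topology
open scoped ENNReal NNReal
set_option maxSynthPendingDepth 3
variable {N : ℕ}

section
variable {Ω E U : Set (Euc N)} {T δ : ℝ} {φ : Euc N → ℝ} {g : ℝ → ℝ} {m : Measure (Euc N)} {k b G0 y0 : Euc N × ℝ → ℝ}

def layA (U : Set (Euc N)) (ε : ℝ) : Set (Euc N × ℝ) := {p | p.1 ∈ U ∧ p.2 < ε / 2}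

lemma layer (hΩ : IsOpen Ω) (hb : Bornology.IsBounded Ω) (hg : GoodG g) (G : Geo Ω E U φ δ)
    (B : Bar Ω T g m U k b G0 y0) : ∃ C, 0 ≤ C ∧ ∀ e, 0 < e → ∃ ε, 0 < ε ∧ MeasurableSet (layA U ε) ∧ ∀ (n : ℕ) (Y : Euc N × ℝ → ℝ),
      IterS Ω T g m k b y0 n Y (fun p => gn g n (Y p)) →
      ∫ p in layA U ε, gn g n (Y p) ∂(volume.restrict (QT Ω T)) ≤ C * e := by
  have hQb := QT_bdd hb T
  have hQm := measurableSet_QT hΩ T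
  have hφ2 : ContDiff ℝ 2 φ := (cdt G.cd).2.1
  have cφ : C2 (fun p : Euc N × ℝ => φ p.1) := (hasC21_space hφ2).c2
  obtain ⟨C, hC0, hC⟩ := bdd_on hQb cφ.continuous_Hh
  refine ⟨4 * (2 + C), by positivity, fun e he => ?_⟩
  obtain ⟨ε, hε, hε1, hεT, hbs⟩ := B.bs e he
  have hAm : MeasurableSet (layA U ε) :=
    (G.Uo.measurableSet.preimage measurable_fst).inter (measurableSet_lt measurable_snd measurable_const)
  refine ⟨ε, hε, hAm, fun n Y I => ?_⟩
  set χ : ℝ → ℝ := fun t => q2 (1 - t / ε) with hχ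
  set χ' : ℝ → ℝ := fun t => 2 * max (1 - t / ε) 0 * (-(1 / ε)) with hχ'
  have hd : ∀ t, HasDerivAt χ (χ' t) t := fun t => by
    have h0 : HasDerivAt (fun t : ℝ => 1 - t / ε) (-(1 / ε)) t := ((hasDerivAt_id t).div_const ε).const_sub 1
    exact HasDerivAt.comp t (q2_deriv _) h0
  have hχ'c : Continuous χ' := by rw [hχ']; fun_prop
  have cχ : C2 (fun p : Euc N × ℝ => χ p.2) := (hasC21_time hd hχ'c).c2
  set ζ : Euc N × ℝ → ℝ := (fun p : Euc N × ℝ => φ p.1) * (fun p : Euc N × ℝ => χ p.2) with hζ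
  have hζ2 : C2 ζ := cφ.mul cχ
  have hTZ : TZ Ω T ζ := by
    refine ⟨hζ2, fun x hx t _ => ?_, fun x _ => ?_⟩
    · have : φ x = 0 := image_eq_zero_of_notMem_tsupport fun hn => by
        rw [hΩ.frontier_eq] at hx; exact hx.2 (G.ts hn)
      simp [hζ, this]
    · have : χ T = 0 := q2_of_nonpos (by rw [sub_nonpos, one_le_div hε]; exact hεT)
      simp [hζ, this]
  have hH : ∀ p, -Hh ζ p = φ p.1 * (2 * max (1 - p.2 / ε) 0 * (1 / ε)) - χ p.2 * Hh (fun p : Euc N × ℝ => φ p.1) p := fun p => by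
    rw [hζ, Hh_mul cφ cχ, Hh_time hd hχ'c, Dx_time hd hχ'c]
    simp [hχ']; ring
  have hχ0 : ∀ t, 0 ≤ χ t := fun t => q2_nonneg _
  have e1 := I.eq ζ hTZ
  have e2 := B.yh ζ hTZ
  have a1 := int_H hQb hQm I.yi hζ2
  have a2 := int_H hQb hQm B.yi hζ2
  have a3 := int_cont_mul hQb hQm I.fi hζ2.continuous
  have u1 := lc2 (h := fun p => (y0 p - Y p) * -Hh ζ p) a2 a1 1 (-1) (Eventually.of_forall fun p => by ring)
  have b1 : ∫ p in QT Ω T, (y0 p - Y p) * -Hh ζ p ≤ ∫ p in QT Ω T, (slab N ε).indicator (fun p => (2 / ε + C) * b p) p := by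
    refine integral_mono_ae u1.1 ((B.bi.const_mul _).indicator (measurableSet_slab ε)) ?_
    filter_upwards [I.yb, B.y1, ae_restrict_mem hQm] with p h1 h2 hp
    rw [hH]
    by_cases hpε : p.2 < ε
    · rw [indicator_of_mem (show p ∈ slab N ε from hpε)]
      have c0 : 0 < p.2 / ε := div_pos hp.2.1 hε
      have c1 : p.2 / ε < 1 := (div_lt_one hε).2 hpε
      have c2 : max (1 - p.2 / ε) 0 = 1 - p.2 / ε := max_eq_left (by linarith)
      have c3 : χ p.2 ≤ 1 := by
        simp only [hχ]; rw [q2_of_nonneg (by linarith)]; nlinarith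
      have c4 : φ p.1 * (2 * max (1 - p.2 / ε) 0 * (1 / ε)) ≤ 1 * (2 * 1 * (1 / ε)) := by
        rw [c2]
        have := G.nn p.1
        have : (0:ℝ) ≤ 1 - p.2 / ε := by linarith
        gcongr
        · exact G.le1 _
        · linarith
      have c5 : -(χ p.2 * Hh (fun p : Euc N × ℝ => φ p.1) p) ≤ 1 * C := by
        refine (neg_le_abs _).trans ?_
        rw [abs_mul, abs_of_nonneg (hχ0 _)]
        exact mul_le_mul c3 (hC p hp) (abs_nonneg _) one_pos.le
      have c6 : φ p.1 * (2 * max (1 - p.2 / ε) 0 * (1 / ε)) - χ p.2 * Hh (fun p : Euc N × ℝ => φ p.1) p ≤ 2 / ε + C := by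
        have : 1 * (2 * 1 * (1 / ε)) = 2 / ε := by ring
        linarith
      have c7 : 0 ≤ 2 / ε + C := by positivity
      calc _ ≤ (y0 p - Y p) * (2 / ε + C) := mul_le_mul_of_nonneg_left c6 (by linarith [h1.2])
        _ ≤ b p * (2 / ε + C) := mul_le_mul_of_nonneg_right (by linarith [h1.1, h2.2.2]) c7
        _ = _ := mul_comm _ _
    · rw [indicator_of_notMem (show p ∉ slab N ε from hpε)]
      have c1 : 1 ≤ p.2 / ε := (one_le_div hε).2 (not_lt.1 hpε)
      have c2 : max (1 - p.2 / ε) 0 = 0 := max_eq_right (by linarith)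
      have c3 : χ p.2 = 0 := q2_of_nonpos (by linarith)
      rw [c2, c3]; simp
  rw [setIntegral_indicator (measurableSet_slab ε), integral_const_mul, u1.2] at b1
  have b2 : (2 / ε + C) * (∫ p in QT Ω T ∩ slab N ε, b p) ≤ (2 + C) * e := by
    refine (mul_le_mul_of_nonneg_left hbs (by positivity)).trans ?_
    rw [show (2 / ε + C) * (e * ε) = 2 * e + C * e * ε by field_simp]
    have := mul_le_mul_of_nonneg_left hε1 (mul_nonneg hC0 he.le)
    linarith
  have b3 : ∫ p in QT Ω T, (layA U ε).indicator (fun p => (1/4) * gn g n (Y p)) p ≤ ∫ p in QT Ω T, gn g n (Y p) * ζ p := by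
    refine integral_mono_ae ((I.fi.const_mul _).indicator hAm) a3 (Eventually.of_forall fun p => ?_)
    simp only
    have n0 := gn_nn hg n (Y p)
    have z0 : ζ p = φ p.1 * χ p.2 := rfl
    by_cases hp : p ∈ layA U ε
    · rw [indicator_of_mem hp, z0, G.oneU hp.1, one_mul]
      have : p.2 / ε ≤ 1 / 2 := by rw [div_le_iff₀ hε]; linarith [hp.2]
      have : (1/4 : ℝ) ≤ χ p.2 := by
        simp only [hχ]; rw [q2_of_nonneg (by linarith)]; nlinarith
      rw [mul_comm]
      exact mul_le_mul_of_nonneg_left this n0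
    · rw [indicator_of_notMem hp, z0]
      exact mul_nonneg n0 (mul_nonneg (G.nn _) (hχ0 _))
  rw [integral_indicator hAm, integral_const_mul] at b3
  linarith

lemma key (hΩ : IsOpen Ω) (hb : Bornology.IsBounded Ω) (hne : Ωᶜ.Nonempty) (hE : IsCompact E) (hEΩ : E ⊆ Ω)
    (hT : 0 < T) (hg : GoodG g) {m0 m : Measure (Euc N)} [IsFiniteMeasure m] (hm0 : MemM1 Ω m0) (hm : m Eᶜ = 0)
    (hle : m ≤ m0) (hu : GoodMeasure Ω T g m0) : GoodMeasure Ω T g m := by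
  obtain ⟨u, hu⟩ := hu
  have hQb := QT_bdd hb T
  have hQm := measurableSet_QT hΩ T
  obtain ⟨U, φ, δ, k, b, G0, y0, G, B⟩ := exists_bar hΩ hb hne hE hEΩ hT hg hm0 hm hle hu
  obtain ⟨Y, hY⟩ := outer_loop hΩ hb hT hg B
  obtain ⟨C, hC0, hC⟩ := layer hΩ hb hg G B
  have : IsFiniteMeasure (volume.restrict (QT Ω T)) := ⟨by rw [Measure.restrict_apply_univ]; exact hQb.measure_lt_top⟩
  have hyb : ∀ᵐ p ∂volume.restrict (QT Ω T), ∀ j, k p - b p ≤ Y j p ∧ Y j p ≤ y0 p := ae_all_iff.2 fun j => (hY j).1.yb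
  set Z : Euc N × ℝ → ℝ := fun p => ⨅ j, Y j p with hZ
  have hl : ∀ᵐ p ∂volume.restrict (QT Ω T), Tendsto (fun j => Y j p) atTop (𝓝 (Z p)) := by
    filter_upwards [hyb, ae_all_iff.2 fun j => (hY j).2] with p h1 h2
    exact tendsto_atTop_ciInf (antitone_nat_of_succ_le h2) ⟨k p - b p, by rintro _ ⟨j, rfl⟩; exact (h1 j).1⟩
  have D1 := dct hQb hQm (B.ki.add B.bi) (fun j => (hY j).1.yi) (fun j => by
    filter_upwards [hyb, B.y1] with p h1 h2
    rw [abs_le]; simp only [Pi.add_apply]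
    constructor <;> linarith [h1 j, B.k0 p, B.b0 p]) hl
  obtain ⟨V1, V2⟩ := vit (μ := volume.restrict (QT Ω T)) (f := fun n p => gn g n (Y n p)) (F := fun p => g (Z p))
    (fun n => (hY n).1.fi) (Eventually.of_forall fun p n => gn_nn hg _ _) (hl.mono fun p hp => gn_tendsto hg hp) (fun e he => by
      obtain ⟨ε, hε, hA, h⟩ := hC (e / (C + 1)) (by positivity)
      refine ⟨layA U ε, hA, fun n => (h n _ (hY n).1).trans ?_, ?_⟩
      · rw [mul_div_assoc', div_le_iff₀ (by positivity)]; nlinarith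
      obtain ⟨D, hD0, hD⟩ := B.kb (ε / 2) (by positivity)
      refine ⟨g D, ?_⟩
      filter_upwards [hyb, B.y1, ae_restrict_mem hQm] with p h1 h2 hp n hpA
      refine (gn_le_g hg n _).trans (hg.2.1 (((h1 n).2.trans h2.2.2).trans (hD p hp ?_)))
      by_contra hcon
      push Not at hcon
      exact hpA hcon)
  have hr : Continuous fun p : Euc N × ℝ => rho Ω p.1 := (Metric.continuous_infDist_pt Ωᶜ).comp continuous_fst
  refine ⟨Z, D1.1, int_cont_mul hQb hQm V1 hr, fun ζ' hζ' => ?_⟩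
  set ζ : Euc N × ℝ → ℝ := fun p => ζ' p.1 p.2 with hζd
  have hζ : TZ Ω T ζ := hζ'
  have a1 := int_H hQb hQm D1.1 hζ.c2
  have a2 : IntegrableOn (fun p => g (Z p) * ζ p) (QT Ω T) := int_cont_mul hQb hQm V1 hζ.c2.continuous
  have e := lc2 (h := fun p => -(Z p) * deriv (ζ' p.1) p.2 - Z p * lap (fun y => ζ' y p.2) p.1 + ζ' p.1 p.2 * g (Z p))
    a1 a2 1 1 (Eventually.of_forall fun p => by simp only [Hh, heatAdj, hζd]; ring)
  rw [e.2, one_mul, one_mul]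
  obtain ⟨D, hD0, hD⟩ := bdd_on hQb hζ.c2.continuous
  have t2 : Tendsto (fun n => ∫ p in QT Ω T, gn g n (Y n p) * ζ p) atTop (𝓝 (∫ p in QT Ω T, g (Z p) * ζ p)) := by
    rw [tendsto_iff_norm_sub_tendsto_zero]
    refine squeeze_zero (fun _ => norm_nonneg _) (fun n => ?_) (by simpa using V2.const_mul D)
    have i1 := int_cont_mul hQb hQm (hY n).1.fi hζ.c2.continuous
    have i3 : IntegrableOn (fun p => |gn g n (Y n p) - g (Z p)|) (QT Ω T) := ((hY n).1.fi.sub V1).abs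
    rw [← integral_sub i1 a2, ← integral_const_mul]
    refine norm_integral_le_of_norm_le (i3.const_mul D) ?_
    filter_upwards [ae_restrict_mem hQm] with p hp
    rw [← sub_mul, norm_mul, mul_comm]
    exact mul_le_mul_of_nonneg_right (hD p hp) (norm_nonneg _)
  refine tendsto_nhds_unique ((D1.2 (fun p => -Hh ζ p) hζ.c2.continuous_Hh.neg).add t2) ?_
  simp only [fun n => (hY n).1.eq ζ hζ]
  exact tendsto_const_nhds
end
end

section
open MeasureTheory Set Filter Topology
open scoped ENNReal NNReal
set_option maxSynthPendingDepth 3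
variable {N : ℕ}

lemma pt_ineq {a b c d : ℝ≥0∞} (hb : d ≤ b) (ha : c ≤ a) (h1 : min c b ≤ d) (h2 : min d a ≤ c) :
    max c d + min a b ≤ max a b + min c d := by
  rcases le_total c d with h | h
  · rw [max_eq_right h, min_eq_left h]
    rcases le_total d a with h3 | h3
    · rw [min_eq_left h3] at h2
      have : c = d := le_antisymm h h2
      rw [this, add_comm]
      exact add_le_add_left (min_le_left _ _ |>.trans (le_max_left _ _)) _
    · rw [min_eq_right h3] at h2
      exact add_le_add (hb.trans (le_max_right _ _)) ((min_le_left _ _).trans h2)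
  · rw [max_eq_left h, min_eq_right h]
    rcases le_total c b with h3 | h3
    · rw [min_eq_left h3] at h1
      have : c = d := le_antisymm h1 h
      rw [this, add_comm]
      exact add_le_add_left (min_le_left _ _ |>.trans (le_max_left _ _)) _
    · rw [min_eq_right h3] at h1
      exact add_le_add (ha.trans (le_max_left _ _)) ((min_le_right _ _).trans h1)

section alg
variable {α : Type*} [MeasurableSpace α] {s : Measure α} {f g : α → ℝ≥0∞}

lemma wd_sup_le : s.withDensity f ⊔ s.withDensity g ≤ s.withDensity (fun x => max (f x) (g x)) :=
  sup_le (withDensity_mono (Eventually.of_forall fun _ => le_max_left _ _))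
    (withDensity_mono (Eventually.of_forall fun _ => le_max_right _ _))

lemma wd_le_inf : s.withDensity (fun x => min (f x) (g x)) ≤ s.withDensity f ⊓ s.withDensity g :=
  le_inf (withDensity_mono (Eventually.of_forall fun _ => min_le_left _ _))
    (withDensity_mono (Eventually.of_forall fun _ => min_le_right _ _))

lemma wd_le_sup (hf : Measurable f) (hg : Measurable g) :
    s.withDensity (fun x => max (f x) (g x)) ≤ s.withDensity f ⊔ s.withDensity g := by
  have hD : MeasurableSet {x | f x ≤ g x} := measurableSet_le hf hg
  refine Measure.le_iff.2 fun A hA => ?_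
  rw [← measure_inter_add_diff A hD, ← measure_inter_add_diff (μ := s.withDensity f ⊔ s.withDensity g) A hD]
  refine add_le_add ?_ ?_
  · refine le_trans ?_ (Measure.le_iff'.1 (le_sup_right : s.withDensity g ≤ s.withDensity f ⊔ s.withDensity g) _)
    rw [withDensity_apply _ (hA.inter hD), withDensity_apply _ (hA.inter hD)]
    exact setLIntegral_mono hg fun x hx => max_le hx.2 le_rfl
  · refine le_trans ?_ (Measure.le_iff'.1 (le_sup_left : s.withDensity f ≤ s.withDensity f ⊔ s.withDensity g) _)
    rw [withDensity_apply _ (hA.diff hD), withDensity_apply _ (hA.diff hD)]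
    exact setLIntegral_mono hf fun x hx => max_le le_rfl (not_le.1 hx.2).le

lemma wd_inf_le (hf : Measurable f) (hg : Measurable g) :
    s.withDensity f ⊓ s.withDensity g ≤ s.withDensity (fun x => min (f x) (g x)) := by
  have hD : MeasurableSet {x | f x ≤ g x} := measurableSet_le hf hg
  refine Measure.le_iff.2 fun A hA => ?_
  rw [← measure_inter_add_diff A hD, ← measure_inter_add_diff (μ := s.withDensity (fun x => min (f x) (g x))) A hD]
  refine add_le_add ?_ ?_
  · refine le_trans (Measure.le_iff'.1 (inf_le_left : s.withDensity f ⊓ s.withDensity g ≤ s.withDensity f) _) ?_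
    rw [withDensity_apply _ (hA.inter hD), withDensity_apply _ (hA.inter hD)]
    exact setLIntegral_mono (hf.min hg) fun x hx => le_min le_rfl hx.2
  · refine le_trans (Measure.le_iff'.1 (inf_le_right : s.withDensity f ⊓ s.withDensity g ≤ s.withDensity g) _) ?_
    rw [withDensity_apply _ (hA.diff hD), withDensity_apply _ (hA.diff hD)]
    exact setLIntegral_mono (hf.min hg) fun x hx => le_min (not_le.1 hx.2).le le_rfl

lemma wd_ae_le [SigmaFinite s] (hf : Measurable f) (h : s.withDensity f ≤ s.withDensity g) : f ≤ᵐ[s] g :=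
  ae_le_of_forall_setLIntegral_le_of_sigmaFinite hf fun A hA _ => by
    rw [← withDensity_apply _ hA, ← withDensity_apply _ hA]; exact Measure.le_iff'.1 h A

lemma meas_alg {μ ν μs νs : Measure α} [SigmaFinite μ] [SigmaFinite ν] [SigmaFinite μs] [SigmaFinite νs]
    (h1 : μs ≤ μ) (h2 : νs ≤ ν) (h3 : μs ⊓ ν ≤ νs) (h4 : νs ⊓ μ ≤ μs) {A : Set α} (hA : MeasurableSet A) :
    (μs ⊔ νs) A + (μ ⊓ ν) A ≤ (μ ⊔ ν) A + (μs ⊓ νs) A := by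
  obtain ⟨s, hs⟩ : ∃ s, s = μ + ν := ⟨_, rfl⟩
  have : SigmaFinite s := by rw [hs]; infer_instance
  have lm : μ ≤ s := by rw [hs]; exact Measure.le_add_right le_rfl
  have ln : ν ≤ s := by rw [hs]; exact Measure.le_add_left le_rfl
  have rep : ∀ m : Measure α, SigmaFinite m → m ≤ s → ∃ f, Measurable f ∧ m = s.withDensity f := fun m _ hm =>
    ⟨m.rnDeriv s, Measure.measurable_rnDeriv _ _, (Measure.withDensity_rnDeriv_eq m s (Measure.absolutelyContinuous_of_le hm)).symm⟩
  obtain ⟨a, ma, rfl⟩ := rep μ ‹_› lm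
  obtain ⟨b, mb, rfl⟩ := rep ν ‹_› ln
  obtain ⟨c, mc, rfl⟩ := rep μs ‹_› (h1.trans lm)
  obtain ⟨d, md, rfl⟩ := rep νs ‹_› (h2.trans ln)
  have p1 := wd_ae_le mc h1
  have p2 := wd_ae_le md h2
  have p3 := wd_ae_le (mc.min mb) (wd_le_inf.trans h3)
  have p4 := wd_ae_le (md.min ma) (wd_le_inf.trans h4)
  refine (add_le_add (Measure.le_iff'.1 wd_sup_le A) (Measure.le_iff'.1 (wd_inf_le ma mb) A)).trans
    (le_trans ?_ (add_le_add (Measure.le_iff'.1 (wd_le_sup ma mb) A) (Measure.le_iff'.1 wd_le_inf A)))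
  rw [withDensity_apply _ hA, withDensity_apply _ hA, withDensity_apply _ hA, withDensity_apply _ hA,
    ← lintegral_add_left (mc.max md), ← lintegral_add_left (ma.max mb)]
  refine lintegral_mono_ae (ae_restrict_of_ae ?_)
  filter_upwards [p1, p2, p3, p4] with x q1 q2 q3 q4
  exact pt_ineq q2 q1 q3 q4
end alg

def KK (Ω : Set (Euc N)) (n : ℕ) : Set (Euc N) := {x | 1 / ((n:ℝ) + 1) ≤ rho Ω x}

section KKs
variable {Ω : Set (Euc N)}
lemma KK_sub (n : ℕ) : KK Ω n ⊆ Ω := by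
  intro x hx
  by_contra h
  have h0 : rho Ω x = 0 := Metric.infDist_zero_of_mem h
  have h1 : 1 / ((n:ℝ) + 1) ≤ rho Ω x := hx
  have : 0 < 1 / ((n:ℝ) + 1) := by positivity
  linarith

lemma KK_closed (n : ℕ) : IsClosed (KK Ω n) :=
  isClosed_le continuous_const (Metric.continuous_infDist_pt _)

lemma KK_compact (hb : Bornology.IsBounded Ω) (n : ℕ) : IsCompact (KK Ω n) :=
  Metric.isCompact_of_isClosed_isBounded (KK_closed n) (hb.subset (KK_sub n))

lemma KK_mono : Monotone (KK Ω) := by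
  intro m n h x hx
  have h1 : 1 / ((m:ℝ) + 1) ≤ rho Ω x := hx
  refine le_trans ?_ h1
  have : (m:ℝ) ≤ n := by exact_mod_cast h
  gcongr

lemma KK_union (ho : IsOpen Ω) (hne : Ωᶜ.Nonempty) : ⋃ n, KK Ω n = Ω := by
  refine subset_antisymm (iUnion_subset KK_sub) fun x hx => ?_
  have : 0 < rho Ω x := (ho.isClosed_compl.notMem_iff_infDist_pos hne).1 (by simpa using hx)
  obtain ⟨n, hn⟩ := exists_nat_one_div_lt this
  exact mem_iUnion.2 ⟨n, hn.le⟩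

lemma M1_sigma (ho : IsOpen Ω) (hb : Bornology.IsBounded Ω) (hne : Ωᶜ.Nonempty) {m : Measure (Euc N)}
    (h : MemM1 Ω m) : SigmaFinite m := by
  refine ⟨⟨⟨fun n => KK Ω n ∪ Ωᶜ, fun _ => trivial, fun n => ?_, ?_⟩⟩⟩
  · refine (measure_union_le _ _).trans_lt ?_
    rw [h.1, add_zero]
    exact h.2.1 _ (KK_sub n) (KK_compact hb n)
  · rw [← iUnion_union, KK_union ho hne, union_compl_self]

lemma M1_mono {m m' : Measure (Euc N)} (h : MemM1 Ω m) (hle : m' ≤ m) : MemM1 Ω m' :=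
  ⟨le_antisymm ((Measure.le_iff'.1 hle _).trans h.1.le) zero_le,
    fun K a b => (Measure.le_iff'.1 hle _).trans_lt (h.2.1 K a b),
    (lintegral_mono' hle le_rfl).trans_lt h.2.2⟩

lemma red_inf (ho : IsOpen Ω) (hb : Bornology.IsBounded Ω) (hne : Ωᶜ.Nonempty) {T : ℝ} (hT : 0 < T)
    {g : ℝ → ℝ} (hg : GoodG g) {μs ν νs : Measure (Euc N)} (h1 : MemM1 Ω μs) (h2 : GoodMeasure Ω T g μs)
    (h3 : IsReducedMeasure Ω T g ν νs) : μs ⊓ ν ≤ νs := by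
  have hk : ∀ n, (μs ⊓ ν).restrict (KK Ω n) ≤ νs := fun n => by
    have le1 : (μs ⊓ ν).restrict (KK Ω n) ≤ μs := Measure.restrict_le_self.trans inf_le_left
    have le2 : (μs ⊓ ν).restrict (KK Ω n) ≤ ν := Measure.restrict_le_self.trans inf_le_right
    have fin : IsFiniteMeasure ((μs ⊓ ν).restrict (KK Ω n)) := ⟨by
      rw [Measure.restrict_apply_univ]
      exact (Measure.le_iff'.1 (inf_le_left : μs ⊓ ν ≤ μs) _).trans_lt (h1.2.1 _ (KK_sub n) (KK_compact hb n))⟩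
    refine h3.2.2.2 _ (M1_mono h1 le1) ?_ le2
    refine key ho hb hne (KK_compact hb n) (KK_sub n) hT hg h1 ?_ le1 h2
    rw [Measure.restrict_apply (KK_closed n).measurableSet.compl, compl_inter_self, measure_empty]
  refine Measure.le_iff.2 fun A hA => ?_
  have z : (μs ⊓ ν) Ωᶜ = 0 := (M1_mono h1 inf_le_left).1
  have e : (μs ⊓ ν) A ≤ (μs ⊓ ν) (⋃ n, A ∩ KK Ω n) := by
    rw [← inter_iUnion, KK_union ho hne]
    calc _ ≤ (μs ⊓ ν) ((A ∩ Ω) ∪ Ωᶜ) := measure_mono fun x hx => by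
          by_cases h : x ∈ Ω
          · exact Or.inl ⟨hx, h⟩
          · exact Or.inr h
      _ ≤ _ := by
        refine (measure_union_le _ _).trans ?_
        rw [z, add_zero]
  refine e.trans ?_
  have hm : Monotone fun n => A ∩ KK Ω n := fun i j h => inter_subset_inter_right _ (KK_mono h)
  rw [hm.measure_iUnion]
  refine iSup_le fun n => ?_
  rw [← Measure.restrict_apply hA]
  exact Measure.le_iff'.1 (hk n) A
end KKs

theorem main_thm {N : ℕ} (hN : 1 ≤ N) (Ω : Set (Euc N)) (hΩo : IsOpen Ω)
    (hΩb : Bornology.IsBounded Ω) (T : ℝ) (hT : 0 < T)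
    (g : ℝ → ℝ) (hg : GoodG g) (μ ν μstar νstar : Measure (Euc N))
    (hμ : MemM1 Ω μ) (hν : MemM1 Ω ν)
    (hredμ : IsReducedMeasure Ω T g μ μstar)
    (hredν : IsReducedMeasure Ω T g ν νstar) :
    ∀ A : Set (Euc N), MeasurableSet A → A ⊆ Ω →
      (μstar ⊔ νstar) A + (μ ⊓ ν) A ≤ (μ ⊔ ν) A + (μstar ⊓ νstar) A := by
  intro A hA _
  have hne : Ωᶜ.Nonempty := by
    by_contra h
    rw [not_nonempty_iff_eq_empty, compl_empty_iff] at h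
    have : Nonempty (Fin N) := ⟨⟨0, hN⟩⟩
    have : Nontrivial (EuclideanSpace ℝ (Fin N)) := inferInstance
    exact NormedSpace.unbounded_univ ℝ (EuclideanSpace ℝ (Fin N)) (h ▸ hΩb)
  have := M1_sigma hΩo hΩb hne hμ
  have := M1_sigma hΩo hΩb hne hν
  have := M1_sigma hΩo hΩb hne hredμ.1
  have := M1_sigma hΩo hΩb hne hredν.1
  exact meas_alg hredμ.2.1 hredν.2.1 (red_inf hΩo hΩb hne hT hg hredμ.1 hredμ.2.2.1 hredν)
    (red_inf hΩo hΩb hne hT hg hredν.1 hredν.2.2.1 hredμ) hA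
end

/-- **Theorem 2.21.** `|μ* − ν*| ≤ |μ − ν|`, stated for positive measures as
`(sup{μ*,ν*})(A) + (inf{μ,ν})(A) ≤ (sup{μ,ν})(A) + (inf{μ*,ν*})(A)` for every
Borel set `A ⊆ Ω`. -/
theorem stmt_17 {N : ℕ} (hN : 1 ≤ N) (Ω : Set (Euc N)) (hΩo : IsOpen Ω)
    (hΩc : IsConnected Ω) (hΩb : Bornology.IsBounded Ω) (T : ℝ) (hT : 0 < T)
    (g : ℝ → ℝ) (hg : GoodG g) (μ ν μstar νstar : Measure (Euc N))
    (hμ : MemM1 Ω μ) (hν : MemM1 Ω ν)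
    (hredμ : IsReducedMeasure Ω T g μ μstar)
    (hredν : IsReducedMeasure Ω T g ν νstar) :
    ∀ A : Set (Euc N), MeasurableSet A → A ⊆ Ω →
      (μstar ⊔ νstar) A + (μ ⊓ ν) A ≤ (μ ⊔ ν) A + (μstar ⊓ νstar) A := by
  exact main_thm hN Ω hΩo hΩb T hT g hg μ ν μstar νstar hμ hν hredμ hredν
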